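/- arXiv:1712.08306 — 5 statements merged into one kernel-verified Lean document; each statement's English description precedes it below -/
import Mathlib

section
/- For every integer k with 1 ≤ k ≤ n, the bimoment determinants satisfy F_k^{(1,0)} = F_k^{(0,1)} = U_k²/2^k, F_k^{(1,1)} = W_k/2^k, and F_k^{(2,1)} = F_k^{(1,2)} = V_k²/2^k; in particular F_k^{(1,0)} > 0, F_k^{(1,1)} > 0 (equivalently W_k > 0), and F_k^{(2,1)} > 0. -/
open Finset

/-- Single moments `α_i = Σ_p ζ_p^i a_p`. -/
noncomputable def alphaM (n : ℕ) (ζ a : Fin n → ℝ) (i : ℤ) : ℝ :=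
  ∑ p : Fin n, ζ p ^ i * a p

/-- Bimoments `I_{i,j} = Σ_p Σ_q ζ_p^i ζ_q^j / (ζ_p + ζ_q) a_p a_q`. -/
noncomputable def Imom (n : ℕ) (ζ a : Fin n → ℝ) (i j : ℤ) : ℝ :=
  ∑ p : Fin n, ∑ q : Fin n, ζ p ^ i * ζ q ^ j / (ζ p + ζ q) * (a p * a q)

/-- `F_k^{(i,j)} = det (I_{i+r,j+s})_{0 ≤ r,s ≤ k-1}`, with `F_0 = 1` and `F_k = 0` for `k < 0`. -/
noncomputable def Fdet (n : ℕ) (ζ a : Fin n → ℝ) (i j k : ℤ) : ℝ :=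
  if k < 0 then 0
  else Matrix.det (Matrix.of fun r s : Fin k.toNat =>
    Imom n ζ a (i + ((r : ℕ) : ℤ)) (j + ((s : ℕ) : ℤ)))

/-- `G_k^{(i,j)}`: first column `(α_{i-1}, …, α_{i+k-2})ᵀ`, remaining block
`(I_{i+r,j+s})_{0 ≤ r ≤ k-1, 0 ≤ s ≤ k-2}`; `G_1 = α_{i-1}` and `G_k = 0` for `k < 1`. -/
noncomputable def Gdet (n : ℕ) (ζ a : Fin n → ℝ) (i j k : ℤ) : ℝ :=
  if k < 1 then 0
  else Matrix.det (Matrix.of fun r s : Fin k.toNat =>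
    if (s : ℕ) = 0 then alphaM n ζ a (i - 1 + ((r : ℕ) : ℤ))
    else Imom n ζ a (i + ((r : ℕ) : ℤ)) (j + (((s : ℕ) - 1 : ℕ) : ℤ)))

/-- `E_k^{(i,j)}`: `(1,1)` entry `0`, first row `(0, α_{j-1}, …, α_{j+k-3})`, first column
`(0, α_{i-1}, …, α_{i+k-3})ᵀ`, remaining block `(I_{i+r,j+s})_{0 ≤ r,s ≤ k-2}`;
`E_k = 0` for `k < 2`. -/
noncomputable def Edet (n : ℕ) (ζ a : Fin n → ℝ) (i j k : ℤ) : ℝ :=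
  if k < 2 then 0
  else Matrix.det (Matrix.of fun r s : Fin k.toNat =>
    if (r : ℕ) = 0 then
      (if (s : ℕ) = 0 then 0 else alphaM n ζ a (j - 1 + (((s : ℕ) - 1 : ℕ) : ℤ)))
    else if (s : ℕ) = 0 then alphaM n ζ a (i - 1 + (((r : ℕ) - 1 : ℕ) : ℤ))
    else Imom n ζ a (i + (((r : ℕ) - 1 : ℕ) : ℤ)) (j + (((s : ℕ) - 1 : ℕ) : ℤ)))

/-- `Δ_I = Π_{p<q, p,q ∈ I} (ζ_q - ζ_p)` (empty product `1`). -/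
noncomputable def DeltaI (n : ℕ) (ζ : Fin n → ℝ) (I : Finset (Fin n)) : ℝ :=
  ∏ p ∈ I, ∏ q ∈ I, if p < q then ζ q - ζ p else 1

/-- `Γ_I = Π_{p<q, p,q ∈ I} (ζ_q + ζ_p)` (empty product `1`). -/
noncomputable def GammaI (n : ℕ) (ζ : Fin n → ℝ) (I : Finset (Fin n)) : ℝ :=
  ∏ p ∈ I, ∏ q ∈ I, if p < q then ζ q + ζ p else 1

/-- `U_k = Σ_{I ⊆ {1,…,n}, |I| = k} (Δ_I²/Γ_I) Π_{j∈I} a_j`, with `U_0 = 1` and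
`U_k = 0` for `k < 0` and `k > n`. -/
noncomputable def Usum (n : ℕ) (ζ a : Fin n → ℝ) (k : ℤ) : ℝ :=
  if k < 0 ∨ (n : ℤ) < k then 0
  else ∑ I ∈ Finset.powersetCard k.toNat (Finset.univ : Finset (Fin n)),
    DeltaI n ζ I ^ 2 / GammaI n ζ I * ∏ j ∈ I, a j

/-- `V_k = Σ_{I ⊆ {1,…,n}, |I| = k} (Δ_I²/Γ_I) Π_{j∈I} ζ_j a_j`, with `V_0 = 1` and
`V_k = 0` for `k < 0` and `k > n`. -/
noncomputable def Vsum (n : ℕ) (ζ a : Fin n → ℝ) (k : ℤ) : ℝ :=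
  if k < 0 ∨ (n : ℤ) < k then 0
  else ∑ I ∈ Finset.powersetCard k.toNat (Finset.univ : Finset (Fin n)),
    DeltaI n ζ I ^ 2 / GammaI n ζ I * ∏ j ∈ I, ζ j * a j

/-- `W_k = V_k U_k - V_{k-1} U_{k+1}` (so `W_0 = 1`, `W_k = 0` for `k < 0` and `k > n`). -/
noncomputable def Wsum (n : ℕ) (ζ a : Fin n → ℝ) (k : ℤ) : ℝ :=
  Vsum n ζ a k * Usum n ζ a k - Vsum n ζ a (k - 1) * Usum n ζ a (k + 1)

section split
variable {ι : Type} [LinearOrder ι] {R : Type} [CommRing R]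

/-- product over ordered pairs. -/
def pp (s : ι → ι → R) (A : Finset ι) : R := ∏ p ∈ A, ∏ q ∈ A, if p < q then s p q else 1

lemma pp_insert (s : ι → ι → R) (hs : ∀ p q, s p q = s q p) {i : ι} {A : Finset ι} (hi : i ∉ A) :
    pp s (insert i A) = (∏ a ∈ A, s i a) * pp s A := by
  unfold pp
  rw [Finset.prod_insert hi, Finset.prod_insert hi]
  have h1 : ∀ p ∈ A, (∏ q ∈ insert i A, if p < q then s p q else 1)
      = (if p < i then s p i else 1) * ∏ q ∈ A, if p < q then s p q else 1 := by
    intro p _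
    rw [Finset.prod_insert hi]
  rw [Finset.prod_congr rfl h1, Finset.prod_mul_distrib]
  simp only [lt_irrefl, if_false, one_mul]
  rw [← mul_assoc, ← Finset.prod_mul_distrib]
  congr 1
  apply Finset.prod_congr rfl
  intro a ha
  have : a ≠ i := fun h => hi (h ▸ ha)
  rcases lt_or_gt_of_ne this with h | h
  · simp [h, h.not_gt, hs a i]
  · simp [h, h.not_gt]

/-- same part factor -/
def sg (c : ℕ) (s t : R) : R := (s - t) ^ 2 * (s + t) ^ c

lemma sg_symm (c : ℕ) (s t : R) : sg c s t = sg c t s := by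
  unfold sg; rw [add_comm s t]; ring

/-- split term -/
def spl (c d e f : ℕ) (x : ι → R) (A B : Finset ι) : R :=
  (∏ a ∈ A, x a ^ e) * (∏ b ∈ B, x b ^ f) * pp (fun p q => sg c (x p) (x q)) A *
    pp (fun p q => sg c (x p) (x q)) B * ∏ a ∈ A, ∏ b ∈ B, (x a + x b) ^ d

lemma spl_insert_left (c d e f : ℕ) (x : ι → R) {i : ι} {A B : Finset ι} (hi : i ∉ A) :
    spl c d e f x (insert i A) B = (x i ^ e * (∏ a ∈ A, sg c (x i) (x a)) *
      ∏ b ∈ B, (x i + x b) ^ d) * spl c d e f x A B := by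
  unfold spl
  rw [Finset.prod_insert hi, Finset.prod_insert hi, pp_insert _ (fun p q => sg_symm _ _ _) hi]
  ring

lemma spl_insert_right (c d e f : ℕ) (x : ι → R) {i : ι} {A B : Finset ι} (hi : i ∉ B) :
    spl c d e f x A (insert i B) = (x i ^ f * (∏ a ∈ B, sg c (x i) (x a)) *
      ∏ b ∈ A, (x i + x b) ^ d) * spl c d e f x A B := by
  unfold spl
  rw [Finset.prod_insert hi, pp_insert _ (fun p q => sg_symm _ _ _) hi]
  have : (∏ a ∈ A, ∏ b ∈ insert i B, (x a + x b) ^ d) =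
      (∏ b ∈ A, (x i + x b) ^ d) * ∏ a ∈ A, ∏ b ∈ B, (x a + x b) ^ d := by
    rw [← Finset.prod_mul_distrib]
    apply Finset.prod_congr rfl
    intro a _
    rw [Finset.prod_insert hi, add_comm (x a)]
  rw [this]
  ring

/-- weighted split sum -/
def TT (w : ℕ → ℤ) (c d e f : ℕ) (x : ι → R) (S : Finset ι) : R :=
  ∑ A ∈ S.powerset, (w A.card : R) * spl c d e f x A (S \ A)

lemma TT_map {R' : Type} [CommRing R'] (φ : R →+* R') (w : ℕ → ℤ) (c d e f : ℕ) (x : ι → R)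
    (S : Finset ι) : φ (TT w c d e f x S) = TT w c d e f (fun i => φ (x i)) S := by
  simp [TT, spl, pp, sg, map_sum, map_prod, apply_ite φ]

lemma spl_congr (c d e f : ℕ) {x y : ι → R} {A B : Finset ι} (hA : ∀ i ∈ A, x i = y i)
    (hB : ∀ i ∈ B, x i = y i) : spl c d e f x A B = spl c d e f y A B := by
  have hp : ∀ A : Finset ι, (∀ i ∈ A, x i = y i) →
      pp (fun p q => sg c (x p) (x q)) A = pp (fun p q => sg c (y p) (y q)) A := by
    intro A hA
    unfold pp
    refine Finset.prod_congr rfl fun p hp => Finset.prod_congr rfl fun q hq => ?_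
    simp only [hA p hp, hA q hq]
  unfold spl
  rw [hp A hA, hp B hB, Finset.prod_congr rfl fun a ha => by rw [hA a ha],
    Finset.prod_congr (s₁ := B) rfl fun a ha => by rw [hB a ha]]
  congr 1
  refine Finset.prod_congr rfl fun p hp => Finset.prod_congr rfl fun q hq => ?_
  rw [hA p hp, hB q hq]

lemma TT_congr (w : ℕ → ℤ) (c d e f : ℕ) {x y : ι → R}
    {S : Finset ι} (h : ∀ i ∈ S, x i = y i) : TT w c d e f x S = TT w c d e f y S := by
  unfold TT
  apply Finset.sum_congr rfl
  intro A hA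
  rw [Finset.mem_powerset] at hA
  rw [spl_congr _ _ _ _ (fun i hi => h i (hA hi)) (fun i hi => h i (Finset.sdiff_subset hi))]

lemma TT_insert (w : ℕ → ℤ) (c d e f : ℕ) (x : ι → R) {S : Finset ι} {i : ι} (hi : i ∉ S) :
    TT w c d e f x (insert i S) =
      ∑ A ∈ S.powerset, ((w A.card : R) * ((x i ^ f * (∏ a ∈ S \ A, sg c (x i) (x a)) *
      ∏ b ∈ A, (x i + x b) ^ d) * spl c d e f x A (S \ A)) +
      (w (A.card + 1) : R) * ((x i ^ e * (∏ a ∈ A, sg c (x i) (x a)) *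
      ∏ b ∈ S \ A, (x i + x b) ^ d) * spl c d e f x A (S \ A))) := by
  unfold TT
  rw [Finset.sum_powerset_insert hi, ← Finset.sum_add_distrib]
  apply Finset.sum_congr rfl
  intro A hA
  rw [Finset.mem_powerset] at hA
  have hiA : i ∉ A := fun h => hi (hA h)
  rw [Finset.insert_sdiff_of_notMem _ hiA, spl_insert_right _ _ _ _ _ (by simp [hi]),
    Finset.card_insert_of_notMem hiA, Finset.insert_sdiff_insert,
    Finset.sdiff_insert_of_notMem hi, spl_insert_left _ _ _ _ _ hiA]

lemma dvd_prod_sub (S : Finset ι) (F G : ι → R) (z : R) (h : ∀ i ∈ S, z ∣ F i - G i) :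
    z ∣ ∏ i ∈ S, F i - ∏ i ∈ S, G i := by
  induction S using Finset.induction_on with
  | empty => simp
  | insert i S hi ih =>
    rw [Finset.prod_insert hi, Finset.prod_insert hi]
    have h1 := h i (by simp)
    have h2 := ih fun j hj => h j (by simp [hj])
    have : F i * ∏ i ∈ S, F i - G i * ∏ i ∈ S, G i =
      (F i - G i) * ∏ i ∈ S, F i + G i * (∏ i ∈ S, F i - ∏ i ∈ S, G i) := by ring
    rw [this]
    exact dvd_add (h1.mul_right _) (h2.mul_left _)

lemma sg_dvd (c : ℕ) (s t y : R) : s - t ∣ sg c s y - sg c t y := by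
  have := (((Polynomial.X - Polynomial.C y) ^ 2 * (Polynomial.X + Polynomial.C y) ^ c :
    Polynomial R)).sub_dvd_eval_sub s t
  simpa [sg] using this

lemma kp_dvd (d : ℕ) (s t y : R) : s - t ∣ (s + y) ^ d - (t + y) ^ d := by
  have := (((Polynomial.X + Polynomial.C y) ^ d :
    Polynomial R)).sub_dvd_eval_sub s t
  simpa [sg] using this

lemma term_dvd (c d e : ℕ) (s t : R) (x : ι → R) (A B : Finset ι) :
    s - t ∣ (s ^ e * (∏ a ∈ A, sg c s (x a)) * ∏ b ∈ B, (s + x b) ^ d) -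
      (t ^ e * (∏ a ∈ A, sg c t (x a)) * ∏ b ∈ B, (t + x b) ^ d) := by
  have h1 := sub_dvd_pow_sub_pow s t e
  have h2 := dvd_prod_sub A (fun a => sg c s (x a)) (fun a => sg c t (x a)) (s - t)
    (fun i _ => sg_dvd _ _ _ _)
  have h3 := dvd_prod_sub B (fun a => (s + x a) ^ d) (fun a => (t + x a) ^ d) (s - t)
    (fun i _ => kp_dvd _ _ _ _)
  obtain ⟨u, hu⟩ := h1
  obtain ⟨v, hv⟩ := h2
  obtain ⟨z, hz⟩ := h3
  rw [sub_eq_iff_eq_add] at hu hv hz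
  rw [hu, hv, hz]
  refine ⟨u * (∏ a ∈ A, sg c t (x a) + (s - t) * v) * (∏ b ∈ B, (t + x b) ^ d + (s - t) * z) +
    t ^ e * v * (∏ b ∈ B, (t + x b) ^ d + (s - t) * z) +
    t ^ e * (∏ a ∈ A, sg c t (x a)) * z, ?_⟩
  ring

/-- the recursion modulo the square of the difference -/
lemma TT_step (w : ℕ → ℤ) (c d e f : ℕ) (x : ι → R) {S : Finset ι} {i j : ι} (hj : j ∉ S)
    (hi : i ∉ insert j S) :
    (x i - x j) ^ 2 ∣ TT w c d e f x (insert i (insert j S)) -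
      (x i + x j) ^ d * (x i ^ (e + f) * ∏ y ∈ S, (x i - x y) ^ 2 * (x i + x y) ^ (c + d) +
        x j ^ (e + f) * ∏ y ∈ S, (x j - x y) ^ 2 * (x j + x y) ^ (c + d)) *
        TT (fun r => w (r + 1)) c d e f x S := by
  have hij : i ≠ j := fun h => hi (by simp [h])
  have hiS : i ∉ S := fun h => hi (by simp [h])
  rw [TT_insert _ _ _ _ _ _ hi, Finset.sum_powerset_insert hj, ← Finset.sum_add_distrib]
  unfold TT
  rw [Finset.mul_sum, ← Finset.sum_sub_distrib]
  apply Finset.dvd_sum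
  intro A hA
  rw [Finset.mem_powerset] at hA
  have hjA : j ∉ A := fun h => hj (hA h)
  have hjB : j ∉ S \ A := by simp [hj]
  rw [Finset.insert_sdiff_of_notMem _ hjA, spl_insert_right _ _ _ _ _ hjB,
    Finset.card_insert_of_notMem hjA, Finset.insert_sdiff_insert,
    Finset.sdiff_insert_of_notMem hj, spl_insert_left _ _ _ _ _ hjA]
  simp only [Finset.prod_insert hjA, Finset.prod_insert hjB]
  have hN : ∀ s : R, s ^ (e + f) * ∏ y ∈ S, (s - x y) ^ 2 * (s + x y) ^ (c + d) =
    (s ^ e * (∏ a ∈ A, sg c s (x a)) * ∏ b ∈ S \ A, (s + x b) ^ d) *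
    (s ^ f * (∏ a ∈ S \ A, sg c s (x a)) * ∏ b ∈ A, (s + x b) ^ d) := by
    intro s
    have h1 : ∏ y ∈ S, (s - x y) ^ 2 * (s + x y) ^ (c + d) =
      (∏ y ∈ S, sg c s (x y)) * ∏ y ∈ S, (s + x y) ^ d := by
      rw [← Finset.prod_mul_distrib]
      refine Finset.prod_congr rfl fun y _ => ?_
      unfold sg
      ring
    rw [h1, ← Finset.prod_sdiff hA, ← Finset.prod_sdiff hA (f := fun y => (s + x y) ^ d)]
    ring
  rw [hN, hN]
  have hp := term_dvd c d e (x i) (x j) x A (S \ A)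
  have hq := term_dvd c d f (x i) (x j) x (S \ A) A
  generalize spl c d e f x A (S \ A) = Z
  generalize hP1 : (∏ a ∈ A, sg c (x i) (x a)) = P1 at *
  generalize hP2 : (∏ a ∈ A, sg c (x j) (x a)) = P2 at *
  generalize hP3 : (∏ a ∈ S \ A, sg c (x i) (x a)) = P3 at *
  generalize hP4 : (∏ a ∈ S \ A, sg c (x j) (x a)) = P4 at *
  generalize (∏ a ∈ A, (x i + x a) ^ d) = Q1 at *
  generalize (∏ a ∈ A, (x j + x a) ^ d) = Q2 at *
  generalize (∏ a ∈ S \ A, (x i + x a) ^ d) = Q3 at *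
  generalize (∏ a ∈ S \ A, (x j + x a) ^ d) = Q4 at *
  obtain ⟨u, hu⟩ := hp
  obtain ⟨v, hv⟩ := hq
  unfold sg
  generalize (w A.card : R) = w0
  generalize (w (A.card + 1) : R) = w1
  generalize (w (A.card + 1 + 1) : R) = w2
  refine ⟨w0 * (x i ^ f * ((x i + x j) ^ c * P3) * Q1) * (x j ^ f * P4 * Q2) * Z +
    w2 * (x i ^ e * ((x i + x j) ^ c * P1) * Q3) * (x j ^ e * P2 * Q4) * Z -
    w1 * (x i + x j) ^ d * Z * u * v, ?_⟩
  have huv : (x i ^ e * P1 * Q3 - x j ^ e * P2 * Q4) * (x i ^ f * P3 * Q1 - x j ^ f * P4 * Q2) =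
    (x i - x j) ^ 2 * u * v := by rw [hu, hv]; ring
  linear_combination (exp := 1) (- w1 * (x i + x j) ^ d * Z) * huv

/-- the defect -/
def DD (w1 w2 : ℕ → ℕ → ℤ) (e f e' f' m : ℕ) (x : ι → R) (S : Finset ι) : R :=
  2 ^ m * TT (w1 m) 1 0 e f x S - TT (w2 m) 0 1 e' f' x S

lemma DD_step (w1 w2 : ℕ → ℕ → ℤ) (hw1 : ∀ m r, w1 (m + 1) (r + 1) = w1 m r)
    (hw2 : ∀ m r, w2 (m + 1) (r + 1) = w2 m r)
    (e f e' f' m : ℕ) (hef : e + f = e' + f' + 1) (x : ι → R) {S : Finset ι} {i j : ι} (hj : j ∉ S)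
    (hi : i ∉ insert j S) (h0 : DD w1 w2 e f e' f' m x S = 0) :
    (x i - x j) ^ 2 ∣ DD w1 w2 e f e' f' (m + 1) x (insert i (insert j S)) := by
  obtain ⟨u, hu⟩ := TT_step (w1 (m + 1)) 1 0 e f x hj hi
  obtain ⟨v, hv⟩ := TT_step (w2 (m + 1)) 0 1 e' f' x hj hi
  simp only [hw1, hw2] at hu hv
  have hd := term_dvd 1 0 (e' + f') (x i) (x j) x S ∅
  have hE : ∀ s : R, ∏ a ∈ S, sg 1 s (x a) = ∏ y ∈ S, (s - x y) ^ 2 * (s + x y) ^ 1 := fun _ => rfl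
  rw [hE, hE] at hd
  simp only [Finset.prod_empty, mul_one] at hd
  unfold DD at h0 ⊢
  rw [hef] at hu
  simp only [zero_add, add_zero] at hu hv
  obtain ⟨z, hz⟩ := hd
  rw [sub_eq_iff_eq_add] at hu hv
  rw [hu, hv]
  generalize (∏ y ∈ S, (x i - x y) ^ 2 * (x i + x y) ^ 1) = P at *
  generalize (∏ y ∈ S, (x j - x y) ^ 2 * (x j + x y) ^ 1) = Q at *
  have h0' : TT (fun r => w2 m r) 0 1 e' f' x S = 2 ^ m * TT (fun r => w1 m r) 1 0 e f x S :=
    (sub_eq_zero.mp h0).symm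
  rw [h0']
  generalize TT (fun r => w1 m r) 1 0 e f x S = T
  refine ⟨2 ^ (m + 1) * u - v + 2 ^ m * T * z, ?_⟩
  linear_combination (exp := 1) (2 ^ m * T * (x i - x j)) * hz

end split

section degree
open Polynomial
variable {ι : Type} [LinearOrder ι]

lemma spl_natDegree (c d e f : ℕ) (x : ι → ℝ) (A B : Finset ι) :
    spl c d e f (fun i => (C (x i) : ℝ[X])) A B = C (spl c d e f x A B) := by
  simp [spl, pp, sg, map_prod, apply_ite (C : ℝ →+* ℝ[X])]

lemma fac_natDegree (c d e : ℕ) (x : ι → ℝ) (A B : Finset ι) :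
    ((X ^ e * (∏ a ∈ A, sg c X (C (x a))) * ∏ b ∈ B, (X + C (x b)) ^ d : ℝ[X])).natDegree ≤
      e + (2 + c) * A.card + d * B.card := by
  refine natDegree_mul_le.trans (add_le_add (natDegree_mul_le.trans (add_le_add ?_ ?_)) ?_)
  · simp
  · refine (natDegree_prod_le _ _).trans ?_
    rw [mul_comm, ← smul_eq_mul]
    apply Finset.sum_le_card_nsmul
    intro a _
    unfold sg
    refine natDegree_mul_le.trans (add_le_add ?_ ?_)
    · exact (natDegree_pow_le).trans (by simp)
    · exact (natDegree_pow_le).trans (by simp)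
  · refine (natDegree_prod_le _ _).trans ?_
    rw [mul_comm, ← smul_eq_mul]
    apply Finset.sum_le_card_nsmul
    intro a _
    exact (natDegree_pow_le).trans (by simp)

lemma TT_natDegree (w : ℕ → ℤ) (c d e f N : ℕ) (x : ι → ℝ) {S : Finset ι} {i : ι} (hi : i ∉ S)
    (h1 : ∀ r q, r + q = S.card → w (r + 1) ≠ 0 → e + (2 + c) * r + d * q ≤ N)
    (h2 : ∀ r q, r + q = S.card → w r ≠ 0 → f + (2 + c) * q + d * r ≤ N) :
    (TT w c d e f (fun j => if j = i then (X : ℝ[X]) else C (x j)) (insert i S)).natDegree ≤ N := by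
  rw [TT_insert _ _ _ _ _ _ hi]
  apply natDegree_sum_le_of_forall_le
  intro A hA
  rw [Finset.mem_powerset] at hA
  have hc : A.card + (S \ A).card = S.card := by
    rw [add_comm]; exact Finset.card_sdiff_add_card_eq_card hA
  have hne : ∀ j ∈ S, j ≠ i := fun j hj h => hi (h ▸ hj)
  have hspl : spl c d e f (fun j => if j = i then (X : ℝ[X]) else C (x j)) A (S \ A) =
      C (spl c d e f x A (S \ A)) := by
    rw [← spl_natDegree]
    exact spl_congr _ _ _ _ (fun j hj => if_neg (hne j (hA hj)))
      (fun j hj => if_neg (hne j (Finset.sdiff_subset hj)))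
  rw [hspl]
  have e1 : ∀ B ⊆ S, ∏ a ∈ B, sg c ((fun j => if j = i then (X : ℝ[X]) else C (x j)) i)
      ((fun j => if j = i then (X : ℝ[X]) else C (x j)) a) = ∏ a ∈ B, sg c X (C (x a)) := by
    intro B hB
    refine Finset.prod_congr rfl fun p hp => ?_
    simp only [hne p (hB hp), if_false, if_true]
  have e2 : ∀ B ⊆ S, ∏ a ∈ B, (((fun j => if j = i then (X : ℝ[X]) else C (x j)) i) +
      ((fun j => if j = i then (X : ℝ[X]) else C (x j)) a)) ^ d = ∏ a ∈ B, (X + C (x a)) ^ d := by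
    intro B hB
    refine Finset.prod_congr rfl fun p hp => ?_
    simp only [hne p (hB hp), if_false, if_true]
  rw [e1 _ hA, e1 _ Finset.sdiff_subset, e2 _ hA, e2 _ Finset.sdiff_subset]
  simp only [if_true]
  have key : ∀ (z : ℤ) (P : ℝ[X]) (r : ℝ), (z ≠ 0 → P.natDegree ≤ N) →
      ((z : ℝ[X]) * (P * C r)).natDegree ≤ N := by
    intro z P r h
    by_cases hz : z = 0
    · simp [hz]
    · refine natDegree_mul_le.trans ?_
      rw [natDegree_intCast, zero_add]
      exact (natDegree_mul_C_le _ _).trans (h hz)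
  apply (natDegree_add_le _ _).trans
  apply max_le
  · exact key _ _ _ fun hz => (fac_natDegree _ _ _ _ _ _).trans
      (h2 _ _ hc hz)
  · exact key _ _ _ fun hz => (fac_natDegree _ _ _ _ _ _).trans
      (h1 _ _ hc hz)

theorem DD_zero (w1 w2 : ℕ → ℕ → ℤ) (hw1 : ∀ m r, w1 (m + 1) (r + 1) = w1 m r)
    (hw2 : ∀ m r, w2 (m + 1) (r + 1) = w2 m r)
    (e f e' : ℕ) (hef : e + f = e' + 1) (he : e ≤ 1) (hf : f ≤ 1)
    (hs1 : ∀ m r, w1 m r ≠ 0 → r = m) (hs2 : ∀ m r, w2 m r ≠ 0 → r = m ∨ r + 1 = m)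
    (h0 : w1 0 0 = w2 0 0)
    (hb : ∀ (x : ι → ℝ) (i j : ι), i ≠ j → DD w1 w2 e f e' 0 1 x {i, j} = 0)
    (m : ℕ) (x : ι → ℝ) (S : Finset ι) (hS : S.card = 2 * m) (hx : Set.InjOn x S) :
    DD w1 w2 e f e' 0 m x S = 0 := by
  induction m generalizing x S with
  | zero =>
    have : S = ∅ := by simpa using hS
    subst this
    simp [DD, TT, spl, pp, h0]
  | succ m ih =>
    rcases Nat.eq_zero_or_pos m with rfl | hm
    · obtain ⟨i, j, hij, rfl⟩ := Finset.card_eq_two.mp (by simpa using hS)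
      exact hb x i j hij
    obtain ⟨i, S0, hi, rfl, hc⟩ := Finset.card_eq_succ.mp (show S.card = (2 * m + 1) + 1 by omega)
    set y : ι → ℝ[X] := fun j => if j = i then (X : ℝ[X]) else C (x j) with hy
    set F := DD w1 w2 e f e' 0 (m + 1) y (insert i S0) with hF
    have hdeg : F.natDegree ≤ 3 * m + 2 := by
      rw [hF]
      unfold DD
      apply (natDegree_sub_le _ _).trans
      apply max_le
      · refine natDegree_mul_le.trans ?_
        have : ((2 : ℝ[X]) ^ (m + 1)).natDegree = 0 := by
          rw [show (2 : ℝ[X]) = C 2 from rfl, ← C_pow, natDegree_C]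
        rw [this, zero_add]
        apply TT_natDegree _ _ _ _ _ _ _ hi
        · intro r q hrq h
          have := hs1 _ _ h
          omega
        · intro r q hrq h
          have := hs1 _ _ h
          omega
      · apply TT_natDegree _ _ _ _ _ _ _ hi
        · intro r q hrq h
          have := hs2 _ _ h
          omega
        · intro r q hrq h
          have := hs2 _ _ h
          omega
    have hdvd : ∀ j ∈ S0, (X - C (x j)) ^ 2 ∣ F := by
      intro j hj
      have hne : j ≠ i := fun h => hi (h ▸ hj)
      have hins : insert j (S0.erase j) = S0 := Finset.insert_erase hj
      have h1 : y i = X := by simp [hy]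
      have h2 : y j = C (x j) := by simp [hy, hne]
      rw [hF, ← h1, ← h2, ← hins]
      have hins' : i ∉ insert j (S0.erase j) := by rw [hins]; exact hi
      apply DD_step w1 w2 hw1 hw2 e f e' 0 m (by omega) y (by simp) hins'
      have hz := ih x (S0.erase j) (by rw [Finset.card_erase_of_mem hj]; omega)
        (hx.mono (by
          intro a ha
          simp at ha ⊢
          right; exact ha.1))
      have hcong : ∀ a ∈ S0.erase j, y a = C (x a) := by
        intro a ha
        have : a ≠ i := fun h => hi (h ▸ Finset.mem_of_mem_erase ha)
        simp [hy, this]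
      unfold DD at hz ⊢
      rw [TT_congr _ _ _ _ _ hcong, TT_congr _ _ _ _ _ hcong, ← TT_map, ← TT_map]
      have := congrArg (C : ℝ →+* ℝ[X]) hz
      rw [map_sub, map_mul, map_pow, map_zero] at this
      exact this
    have hprod : (∏ j ∈ S0, (X - C (x j)) ^ 2) ∣ F := by
      apply Finset.prod_dvd_of_coprime _ hdvd
      intro a ha b hb hab
      apply IsCoprime.pow
      apply isCoprime_X_sub_C_of_isUnit_sub
      rw [isUnit_iff_ne_zero, sub_ne_zero]
      intro h
      exact hab (hx (by simp at ha ⊢; exact Or.inr ha) (by simp at hb ⊢; exact Or.inr hb) h)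
    have hFz : F = 0 := by
      by_contra hne
      have h1 := natDegree_le_of_dvd hprod hne
      rw [natDegree_prod_of_monic _ _ (fun j _ => (monic_X_sub_C _).pow 2)] at h1
      simp [hc] at h1
      omega
    have hev := congrArg (evalRingHom (x i)) hFz
    rw [hF] at hev
    unfold DD at hev ⊢
    rw [map_sub, map_mul, map_pow, TT_map, TT_map, map_zero] at hev
    have hcong : (fun j => evalRingHom (x i) (y j)) = x := by
      funext j
      by_cases h : j = i
      · simp [hy, h]
      · simp [hy, h]
    rw [hcong] at hev
    simpa using hev

/-- indicator weight -/
def wa (m r : ℕ) : ℤ := if r = m then 1 else 0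
/-- shifted indicator weight -/
def wb (m r : ℕ) : ℤ := if r + 1 = m then 1 else 0

theorem ident1 (m : ℕ) (x : ι → ℝ) (S : Finset ι) (hS : S.card = 2 * m) (hx : Set.InjOn x S) :
    2 ^ m * TT (wa m) 1 0 1 0 x S = TT (wa m) 0 1 0 0 x S := by
  rw [← sub_eq_zero]
  refine DD_zero wa wa ?_ ?_ 1 0 0 rfl le_rfl (by simp) ?_ ?_ rfl ?_ m x S hS hx
  · intro m r; simp [wa]
  · intro m r; simp [wa]
  · intro m r; simp [wa]
  · intro m r; simp only [wa]; intro h; left; by_contra h'; simp [h'] at h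
  · intro x i j hij
    rw [show ({i, j} : Finset ι) = insert i (insert j ∅) by simp]
    unfold DD
    rw [TT_insert _ _ _ _ _ _ (by simpa using hij), TT_insert _ _ _ _ _ _ (by simpa using hij),
      Finset.sum_powerset_insert (by simp), Finset.sum_powerset_insert (by simp)]
    simp [wa, spl, pp]
    ring

theorem ident2 (m : ℕ) (x : ι → ℝ) (S : Finset ι) (hS : S.card = 2 * m) (hx : Set.InjOn x S) :
    2 ^ m * TT (wa m) 1 0 1 1 x S = TT (fun r => wa m r - wb m r) 0 1 1 0 x S := by
  rw [← sub_eq_zero]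
  refine DD_zero wa (fun m r => wa m r - wb m r) ?_ ?_ 1 1 1 rfl le_rfl (by simp) ?_ ?_ rfl ?_
    m x S hS hx
  · intro m r; simp [wa]
  · intro m r; simp [wa, wb]
  · intro m r; simp [wa]
  · intro m r; simp only [wa, wb]; intro h; by_contra h'; push Not at h'; simp [h'] at h
  · intro x i j hij
    rw [show ({i, j} : Finset ι) = insert i (insert j ∅) by simp]
    unfold DD
    rw [TT_insert _ _ _ _ _ _ (by simpa using hij), TT_insert _ _ _ _ _ _ (by simpa using hij),
      Finset.sum_powerset_insert (by simp), Finset.sum_powerset_insert (by simp)]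
    simp [wa, wb, spl, pp, sg]
    ring
end degree

section cb

theorem cauchy_binet {n k : ℕ} (A : Fin k → Fin n → ℝ) (B : Fin n → Fin k → ℝ)
    (g : Finset (Fin n) → ℝ)
    (hg : ∀ (I : Finset (Fin n)) (h : I.card = k), g I =
      (Matrix.of fun r s => A r (I.orderEmbOfFin h s)).det *
      (Matrix.of fun r s => B (I.orderEmbOfFin h r) s).det) :
    (Matrix.of fun r s => ∑ p, A r p * B p s).det = ∑ I ∈ powersetCard k univ, g I := by
  have h1 : (Matrix.of fun r s => ∑ p, A r p * B p s).det =
      ∑ p : Fin k → Fin n, (∏ r, A r (p r)) * (Matrix.of fun r s => B (p r) s).det := by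
    have := (Matrix.detRowAlternating (R := ℝ) (n := Fin k)).toMultilinearMap.map_sum
      (fun (r : Fin k) (p : Fin n) => (fun s => A r p * B p s : Fin k → ℝ))
    have h2 : (Matrix.of fun r s => ∑ p, A r p * B p s) =
      fun r => ∑ p, (fun s => A r p * B p s : Fin k → ℝ) := by
      ext r s; simp
    rw [h2]
    refine Eq.trans this ?_
    refine Finset.sum_congr rfl fun p _ => ?_
    exact Matrix.det_mul_column (fun r => A r (p r)) (Matrix.of fun r s => B (p r) s)
  rw [h1]
  have h3 : ∑ p : Fin k → Fin n, (∏ r, A r (p r)) * (Matrix.of fun r s => B (p r) s).det =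
      ∑ p : Fin k → Fin n with Function.Injective p,
        (∏ r, A r (p r)) * (Matrix.of fun r s => B (p r) s).det := by
    symm
    apply Finset.sum_filter_of_ne
    intro p _ hne
    by_contra hinj
    apply hne
    unfold Function.Injective at hinj
    push Not at hinj
    obtain ⟨a, b, hab, hne'⟩ := hinj
    rw [Matrix.det_zero_of_row_eq hne' (by ext s; simp [hab]), mul_zero]
  rw [h3]
  rw [← Finset.sum_fiberwise_of_maps_to (t := powersetCard k univ)
    (g := fun p : Fin k → Fin n => univ.image p)]
  · refine Finset.sum_congr rfl fun I hI => ?_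
    have hc : I.card = k := (Finset.mem_powersetCard.mp hI).2
    rw [hg I hc]
    set ee := I.orderEmbOfFin hc with hee
    rw [Matrix.det_apply', Finset.sum_mul]
    symm
    apply Finset.sum_bij (fun (τ : Equiv.Perm (Fin k)) _ => (fun r => ee (τ⁻¹ r)))
    · intro τ _
      simp only [Finset.mem_filter, Finset.mem_univ, true_and]
      refine ⟨ee.injective.comp (τ⁻¹).injective, ?_⟩
      apply Finset.eq_of_subset_of_card_le
      · intro z hz
        obtain ⟨r, _, rfl⟩ := Finset.mem_image.mp hz
        exact Finset.orderEmbOfFin_mem _ _ _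
      · rw [Finset.card_image_of_injective _ (show Function.Injective (fun r => ee (τ⁻¹ r)) from
          ee.injective.comp (τ⁻¹).injective)]
        simp [hc]
    · intro τ _ τ' _ h
      have : τ⁻¹ = τ'⁻¹ := by
        ext r
        have := congrFun h r
        exact congrArg _ (ee.injective this)
      exact inv_injective this
    · intro p hp
      simp only [Finset.mem_filter, Finset.mem_univ, true_and] at hp
      obtain ⟨hinj, him⟩ := hp
      have hr : ∀ r, ∃ s, ee s = p r := by
        intro r
        have : p r ∈ Set.range ee := by
          rw [hee, Finset.range_orderEmbOfFin, ← him]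
          simp
        exact this
      choose q hq using hr
      have hqi : Function.Injective q := by
        intro a b hab
        apply hinj
        rw [← hq, ← hq, hab]
      refine ⟨(Equiv.ofBijective q (Finite.injective_iff_bijective.mp hqi))⁻¹, by simp, ?_⟩
      funext r
      simp [hq]
    · intro τ _
      have h5 := Matrix.det_permute (τ⁻¹) (Matrix.of fun r s => B (ee r) s)
      have h6 : (Matrix.of fun r s => B (ee (τ⁻¹ r)) s) =
        (Matrix.of fun r s => B (ee r) s).submatrix (⇑(τ⁻¹)) id := rfl
      rw [h6, h5]
      have h7 : ∏ r, A r (ee (τ⁻¹ r)) = ∏ i, (Matrix.of fun r s => A r (ee s)) (τ i) i := by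
        rw [← Equiv.prod_comp τ]
        simp
      rw [h7]
      simp
      ring
  · intro p hp
    simp only [Finset.mem_filter, Finset.mem_univ, true_and] at hp
    simp [Finset.mem_powersetCard, Finset.card_image_of_injective _ hp]

theorem cauchy_det (k : ℕ) (x y : Fin k → ℝ) (h : ∀ i j, x i + y j ≠ 0) :
    (Matrix.of fun i j => 1 / (x i + y j)).det =
      (∏ i, ∏ j ∈ Ioi i, (x j - x i)) * (∏ i, ∏ j ∈ Ioi i, (y j - y i)) /
        ∏ i, ∏ j, (x i + y j) := by
  induction k with
  | zero => simp
  | succ k ih =>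
    have h1 : (Matrix.of fun i j => 1 / (x i + y j)).det =
        (Matrix.of fun i j => if i = 0 then 1 / (x 0 + y j) else
          1 / (x i + y j) - (x 0 + y 0) / (x i + y 0) * (1 / (x 0 + y j))).det := by
      apply Matrix.det_eq_of_forall_row_eq_smul_add_const
        (fun i => if i = 0 then 0 else (x 0 + y 0) / (x i + y 0)) 0 (by simp)
      intro i j
      by_cases hi : i = 0
      · simp [hi]
      · simp [hi]
    rw [h1, Matrix.det_succ_column_zero, Fin.sum_univ_succ]
    have hz : ∀ i : Fin k, (Matrix.of fun (i j : Fin (k+1)) => if i = 0 then 1 / (x 0 + y j) else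
          1 / (x i + y j) - (x 0 + y 0) / (x i + y 0) * (1 / (x 0 + y j))) i.succ 0 = 0 := by
      intro i
      have a1 := h i.succ 0
      have a2 := h 0 0
      simp only [Matrix.of_apply, Fin.succ_ne_zero, if_false]
      field_simp
      simp
    simp only [hz, mul_zero, zero_mul, Finset.sum_const_zero, add_zero]
    have hsub : (Matrix.of fun (i j : Fin (k+1)) => if i = 0 then 1 / (x 0 + y j) else
          1 / (x i + y j) - (x 0 + y 0) / (x i + y 0) * (1 / (x 0 + y j))).submatrix
          (Fin.succAbove 0) Fin.succ = Matrix.of fun i j : Fin k =>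
          ((x i.succ - x 0) / (x i.succ + y 0)) * (Matrix.of fun i j : Fin k =>
          ((y j.succ - y 0) / (x 0 + y j.succ)) *
            (Matrix.of fun i j : Fin k => 1 / (x i.succ + y j.succ)) i j) i j := by
      ext i j
      have a1 := h i.succ 0
      have a2 := h 0 j.succ
      have a3 := h i.succ j.succ
      simp only [Matrix.submatrix_apply, Matrix.of_apply, Fin.succAbove_zero, Fin.succ_ne_zero,
        if_false]
      field_simp
      ring
    rw [hsub, Matrix.det_mul_column, Matrix.det_mul_row, ih _ _ (fun i j => h _ _)]
    simp only [Fin.prod_univ_succ, Fin.prod_Ioi_zero, Fin.prod_Ioi_succ, Finset.prod_div_distrib,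
      Finset.prod_mul_distrib]
    have n1 : ∏ i : Fin k, (x i.succ + y 0) ≠ 0 := Finset.prod_ne_zero_iff.mpr fun i _ => h _ _
    have n2 : ∏ i : Fin k, (x 0 + y i.succ) ≠ 0 := Finset.prod_ne_zero_iff.mpr fun i _ => h _ _
    have n3 : ∏ i : Fin k, ∏ j : Fin k, (x i.succ + y j.succ) ≠ 0 :=
      Finset.prod_ne_zero_iff.mpr fun i _ => Finset.prod_ne_zero_iff.mpr fun j _ => h _ _
    have n4 := h 0 0
    simp
    field_simp
end cb

section assemble

lemma pp_union {ι : Type} [LinearOrder ι] (s : ι → ι → ℝ) (hs : ∀ p q, s p q = s q p)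
    (A B : Finset ι) (h : Disjoint A B) :
    pp s (A ∪ B) = pp s A * pp s B * ∏ a ∈ A, ∏ b ∈ B, s a b := by
  induction A using Finset.induction_on with
  | empty => simp [pp]
  | insert i A hi ih =>
    rw [Finset.disjoint_insert_left] at h
    rw [Finset.insert_union, pp_insert s hs (by simp [hi, h.1]), pp_insert s hs hi, ih h.2,
      Finset.prod_insert hi, Finset.prod_union h.2]
    ring

lemma gamma_self {ι : Type} [LinearOrder ι] (x : ι → ℝ) (K : Finset ι) :
    ∏ p ∈ K, ∏ q ∈ K, (x p + x q) =
      2 ^ K.card * (∏ p ∈ K, x p) * pp (fun p q => x p + x q) K ^ 2 := by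
  induction K using Finset.induction_on with
  | empty => simp [pp]
  | insert i K hi ih =>
    rw [pp_insert _ (fun p q => add_comm _ _) hi, Finset.prod_insert hi, Finset.prod_insert hi,
      Finset.prod_insert hi, Finset.card_insert_of_notMem hi]
    have : ∏ p ∈ K, ∏ q ∈ insert i K, (x p + x q) =
        (∏ p ∈ K, (x i + x p)) * ∏ p ∈ K, ∏ q ∈ K, (x p + x q) := by
      rw [← Finset.prod_mul_distrib]
      refine Finset.prod_congr rfl fun p _ => ?_
      rw [Finset.prod_insert hi, add_comm (x p)]
    rw [this, ih]
    ring

/-- term of the determinant expansion -/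
noncomputable def f1 (n : ℕ) (ζ a : Fin n → ℝ) (e f : ℕ) (I J : Finset (Fin n)) : ℝ :=
  (∏ p ∈ I, (ζ p ^ e * a p)) * (∏ p ∈ J, (ζ p ^ f * a p)) *
    (DeltaI n ζ I ^ 2 * DeltaI n ζ J ^ 2) / ∏ p ∈ I, ∏ q ∈ J, (ζ p + ζ q)

/-- term of the sums -/
noncomputable def f2 (n : ℕ) (ζ a : Fin n → ℝ) (e f : ℕ) (I J : Finset (Fin n)) : ℝ :=
  (DeltaI n ζ I ^ 2 / GammaI n ζ I * ∏ p ∈ I, (ζ p ^ e * a p)) *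
  (DeltaI n ζ J ^ 2 / GammaI n ζ J * ∏ p ∈ J, (ζ p ^ f * a p))

lemma prod_emb {n k : ℕ} (I : Finset (Fin n)) (h : I.card = k) (F : Fin n → ℝ) :
    ∏ s, F (I.orderEmbOfFin h s) = ∏ p ∈ I, F p := by
  conv_rhs => rw [← Finset.map_orderEmbOfFin_univ I h]
  rw [Finset.prod_map]
  rfl

lemma delta_emb {n k : ℕ} (ζ : Fin n → ℝ) (I : Finset (Fin n)) (h : I.card = k) :
    ∏ i, ∏ j ∈ Ioi i, (ζ (I.orderEmbOfFin h j) - ζ (I.orderEmbOfFin h i)) = DeltaI n ζ I := by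
  unfold DeltaI
  rw [← prod_emb I h]
  refine Finset.prod_congr rfl fun i _ => ?_
  rw [← prod_emb I h]
  simp only [OrderEmbedding.lt_iff_lt]
  rw [← Finset.prod_filter]
  congr 1
  ext j; simp

lemma det_vdm {n k : ℕ} (ζ a : Fin n → ℝ) (e : ℕ) (I : Finset (Fin n)) (h : I.card = k) :
    (Matrix.of fun r s : Fin k => ζ (I.orderEmbOfFin h s) ^ (e + (r : ℕ)) *
      a (I.orderEmbOfFin h s)).det = (∏ p ∈ I, (ζ p ^ e * a p)) * DeltaI n ζ I := by
  rw [← delta_emb ζ I h, ← Matrix.det_vandermonde, ← Matrix.det_transpose (Matrix.vandermonde _),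
    ← prod_emb I h, ← Matrix.det_mul_row]
  congr 1
  ext r s
  simp [Matrix.vandermonde, Matrix.transpose_apply, pow_add]
  ring

lemma Fdet_nat (n : ℕ) (ζ a : Fin n → ℝ) (hζ0 : ∀ p, 0 < ζ p) (e f k : ℕ) :
    Fdet n ζ a e f k = ∑ I ∈ powersetCard k univ, ∑ J ∈ powersetCard k univ,
      f1 n ζ a e f I J := by
  have hd : Fdet n ζ a e f k = (Matrix.of fun r s : Fin k => ∑ p,
      (fun (r : Fin k) p => ζ p ^ (e + (r : ℕ)) * a p) r p *
      (fun p (s : Fin k) => ∑ q, (1 / (ζ p + ζ q)) * (ζ q ^ (f + (s : ℕ)) * a q)) p s).det := by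
    unfold Fdet
    rw [if_neg (by simp)]
    simp only [Int.toNat_natCast]
    congr 1
    ext r s
    simp only [Matrix.of_apply, Imom]
    refine Finset.sum_congr rfl fun p _ => ?_
    rw [Finset.mul_sum]
    refine Finset.sum_congr rfl fun q _ => ?_
    rw [← Nat.cast_add, ← Nat.cast_add, zpow_natCast, zpow_natCast]
    ring
  rw [hd]
  apply cauchy_binet
  intro I hI
  rw [det_vdm ζ a e I hI]
  have h2 := cauchy_binet (fun (r : Fin k) q => 1 / (ζ (I.orderEmbOfFin hI r) + ζ q))
    (fun q (s : Fin k) => ζ q ^ (f + (s : ℕ)) * a q)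
    (fun J => (DeltaI n ζ I * DeltaI n ζ J / ∏ p ∈ I, ∏ q ∈ J, (ζ p + ζ q)) *
      ((∏ p ∈ J, (ζ p ^ f * a p)) * DeltaI n ζ J)) (by
      intro J hJ
      congr 1
      · rw [cauchy_det k (fun r => ζ (I.orderEmbOfFin hI r)) (fun r => ζ (J.orderEmbOfFin hJ r))
          (fun i j => (add_pos (hζ0 _) (hζ0 _)).ne'), delta_emb, delta_emb, ← prod_emb I hI]
        congr 1
        refine Finset.prod_congr rfl fun i _ => ?_
        rw [← prod_emb J hJ]
      · rw [← det_vdm ζ a f J hJ, ← Matrix.det_transpose]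
        rfl)
  rw [h2, Finset.mul_sum]
  refine Finset.sum_congr rfl fun J _ => ?_
  unfold f1
  ring

lemma delta_pp (n : ℕ) (ζ : Fin n → ℝ) (I : Finset (Fin n)) :
    DeltaI n ζ I ^ 2 = pp (fun p q => (ζ p - ζ q) ^ 2) I := by
  unfold DeltaI pp
  rw [← Finset.prod_pow]
  refine Finset.prod_congr rfl fun p _ => ?_
  rw [← Finset.prod_pow]
  refine Finset.prod_congr rfl fun q _ => ?_
  split_ifs <;> ring

lemma gamma_pp (n : ℕ) (ζ : Fin n → ℝ) (I : Finset (Fin n)) :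
    GammaI n ζ I = pp (fun p q => ζ p + ζ q) I := by
  unfold GammaI pp
  refine Finset.prod_congr rfl fun p _ => Finset.prod_congr rfl fun q _ => ?_
  rw [add_comm]

lemma pp_pos {ι : Type} [LinearOrder ι] (s : ι → ι → ℝ) (A : Finset ι)
    (h : ∀ p q, p < q → 0 < s p q) : 0 < pp s A := by
  unfold pp
  refine Finset.prod_pos fun p _ => Finset.prod_pos fun q _ => ?_
  split_ifs with hpq
  · exact h _ _ hpq
  · exact one_pos

lemma spl10 {ι : Type} [LinearOrder ι] (e f : ℕ) (x : ι → ℝ) (A B : Finset ι) :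
    spl 1 0 e f x A B = (∏ a ∈ A, x a ^ e) * (∏ b ∈ B, x b ^ f) *
      (pp (fun p q => (x p - x q) ^ 2) A * pp (fun p q => x p + x q) A) *
      (pp (fun p q => (x p - x q) ^ 2) B * pp (fun p q => x p + x q) B) := by
  have h : ∀ A : Finset ι, pp (fun p q => sg 1 (x p) (x q)) A =
      pp (fun p q => (x p - x q) ^ 2) A * pp (fun p q => x p + x q) A := by
    intro A
    unfold pp sg
    simp only [← Finset.prod_mul_distrib]
    refine Finset.prod_congr rfl fun p _ => Finset.prod_congr rfl fun q _ => ?_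
    split_ifs <;> simp
  unfold spl
  rw [h, h]
  simp

lemma spl01 {ι : Type} [LinearOrder ι] (e f : ℕ) (x : ι → ℝ) (A B : Finset ι) :
    spl 0 1 e f x A B = (∏ a ∈ A, x a ^ e) * (∏ b ∈ B, x b ^ f) *
      pp (fun p q => (x p - x q) ^ 2) A *
      pp (fun p q => (x p - x q) ^ 2) B * ∏ a ∈ A, ∏ b ∈ B, (x a + x b) := by
  unfold spl sg
  simp

/-- the common constant -/
noncomputable def cc (n : ℕ) (ζ a : Fin n → ℝ) (K S : Finset (Fin n)) : ℝ :=
  (∏ p ∈ K, a p) ^ 2 * (∏ p ∈ S, a p) * pp (fun p q => (ζ p - ζ q) ^ 2) K ^ 2 *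
    (∏ p ∈ K, ∏ q ∈ S, (ζ p - ζ q) ^ 2) / (pp (fun p q => ζ p + ζ q) K ^ 2 *
    (∏ p ∈ K, ∏ q ∈ S, (ζ p + ζ q)) * pp (fun p q => ζ p + ζ q) S)

lemma alg1 {gK gA gB yKA yKB yAB zK dK dA dB aK aA aB tw xKA xKB Z Z1 Z2 A1 B1 : ℝ}
    (hK : zK ≠ 0) (g1 : gK ≠ 0) (g2 : gA ≠ 0) (g3 : gB ≠ 0) (c1 : yKA ≠ 0) (c2 : yKB ≠ 0)
    (c3 : yAB ≠ 0) (h2 : tw ≠ 0) (h : Z1 * Z2 = Z * zK) :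
    Z1 * aK * (A1 * aA) * (Z2 * aK * (B1 * aB)) * (dK * dA * xKA * (dK * dB * xKB)) /
      (tw * zK * gK ^ 2 * yKB * yKA * yAB) =
    aK ^ 2 * (aA * aB) * dK ^ 2 * (xKA * xKB) / (gK ^ 2 * (yKA * yKB) * (gA * gB * yAB)) * Z / tw *
      (A1 * B1 * (dA * gA) * (dB * gB)) := by
  have e : Z1 * aK * (A1 * aA) * (Z2 * aK * (B1 * aB)) * (dK * dA * xKA * (dK * dB * xKB)) =
      (Z * zK) * (aK * (A1 * aA) * (aK * (B1 * aB)) * (dK * dA * xKA * (dK * dB * xKB))) := by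
    rw [← h]; ring
  rw [e]
  simp only [div_mul_eq_mul_div, mul_div_assoc', div_div]
  rw [div_eq_div_iff (by positivity) (by positivity)]
  ring

lemma alg2 {gK gA gB yKA yKB yAB dK dA dB aK aA aB xKA xKB Z1 Z2 A1 B1 : ℝ}
    (g1 : gK ≠ 0) (g2 : gA ≠ 0) (g3 : gB ≠ 0) (c1 : yKA ≠ 0) (c2 : yKB ≠ 0)
    (c3 : yAB ≠ 0) :
    dK * dA * xKA / (gK * gA * yKA) * (Z1 * aK * (A1 * aA)) *
      (dK * dB * xKB / (gK * gB * yKB) * (Z2 * aK * (B1 * aB))) =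
    aK ^ 2 * (aA * aB) * dK ^ 2 * (xKA * xKB) / (gK ^ 2 * (yKA * yKB) * (gA * gB * yAB)) *
      (Z1 * Z2) * (A1 * B1 * dA * dB * yAB) := by
  simp only [div_mul_eq_mul_div, mul_div_assoc', div_div]
  rw [div_eq_div_iff (by positivity) (by positivity)]
  ring

lemma f_eq (n : ℕ) (ζ a : Fin n → ℝ) (hζ0 : ∀ p, 0 < ζ p) (e f e' f' : ℕ)
    (hef : e + f = e' + f' + 1) (K A B : Finset (Fin n))
    (hKA : Disjoint K A) (hKB : Disjoint K B) (hAB : Disjoint A B) :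
    f1 n ζ a e f (K ∪ A) (K ∪ B) = cc n ζ a K (A ∪ B) * (∏ p ∈ K, ζ p) ^ (e' + f') / 2 ^ K.card *
      spl 1 0 e f ζ A B ∧
    f2 n ζ a e' f' (K ∪ A) (K ∪ B) = cc n ζ a K (A ∪ B) * (∏ p ∈ K, ζ p) ^ (e' + f') *
      spl 0 1 e' f' ζ A B := by
  have hs1 : ∀ p q, (fun p q => (ζ p - ζ q) ^ 2) p q = (fun p q => (ζ p - ζ q) ^ 2) q p :=
    fun p q => by ring
  have hs2 : ∀ p q, (fun p q => ζ p + ζ q) p q = (fun p q => ζ p + ζ q) q p :=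
    fun p q => by ring
  have hg : ∀ A, pp (fun p q => ζ p + ζ q) A ≠ 0 := fun A =>
    (pp_pos _ A fun p q _ => add_pos (hζ0 p) (hζ0 q)).ne'
  have hc : ∀ A B : Finset (Fin n), (∏ p ∈ A, ∏ q ∈ B, (ζ p + ζ q)) ≠ 0 := fun A B =>
    (Finset.prod_pos fun p _ => Finset.prod_pos fun q _ => add_pos (hζ0 p) (hζ0 q)).ne'
  have hK : (∏ p ∈ K, ζ p) ≠ 0 := (Finset.prod_pos fun p _ => hζ0 p).ne'
  have hu : ∏ p ∈ K ∪ A, ∏ q ∈ K ∪ B, (ζ p + ζ q) =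
      (2 ^ K.card * (∏ p ∈ K, ζ p) * pp (fun p q => ζ p + ζ q) K ^ 2) *
      (∏ p ∈ K, ∏ q ∈ B, (ζ p + ζ q)) * (∏ p ∈ K, ∏ q ∈ A, (ζ p + ζ q)) *
      (∏ p ∈ A, ∏ q ∈ B, (ζ p + ζ q)) := by
    rw [Finset.prod_union hKA]
    simp only [Finset.prod_union hKB, Finset.prod_mul_distrib]
    rw [gamma_self, Finset.prod_comm (s := A) (t := K)]
    have : ∏ p ∈ K, ∏ q ∈ A, (ζ q + ζ p) = ∏ p ∈ K, ∏ q ∈ A, (ζ p + ζ q) :=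
      Finset.prod_congr rfl fun p _ => Finset.prod_congr rfl fun q _ => add_comm _ _
    rw [this]
    ring
  unfold f1 f2 cc
  rw [hu, spl10, spl01]
  simp only [delta_pp, gamma_pp]
  rw [pp_union _ hs1 K A hKA, pp_union _ hs1 K B hKB, pp_union _ hs2 K A hKA,
    pp_union _ hs2 K B hKB, pp_union _ hs2 A B hAB]
  simp only [Finset.prod_union hKA, Finset.prod_union hKB, Finset.prod_union hAB,
    Finset.prod_mul_distrib, Finset.prod_pow]
  have g1 := hg K
  have g2 := hg A
  have g3 := hg B
  have c1 := hc K A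
  have c2 := hc K B
  have c3 := hc A B
  generalize pp (fun p q => ζ p + ζ q) K = gK at *
  generalize pp (fun p q => ζ p + ζ q) A = gA at *
  generalize pp (fun p q => ζ p + ζ q) B = gB at *
  generalize (∏ p ∈ K, ∏ q ∈ A, (ζ p + ζ q)) = yKA at *
  generalize (∏ p ∈ K, ∏ q ∈ B, (ζ p + ζ q)) = yKB at *
  generalize (∏ p ∈ A, ∏ q ∈ B, (ζ p + ζ q)) = yAB at *
  generalize (∏ p ∈ K, ζ p) = zK at *
  generalize (∏ p ∈ A, ζ p) = zA at *
  generalize (∏ p ∈ B, ζ p) = zB at *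
  generalize pp (fun p q => (ζ p - ζ q) ^ 2) K = dK
  generalize pp (fun p q => (ζ p - ζ q) ^ 2) A = dA
  generalize pp (fun p q => (ζ p - ζ q) ^ 2) B = dB
  generalize (∏ p ∈ K, a p) = aK
  generalize (∏ p ∈ A, a p) = aA
  generalize (∏ p ∈ B, a p) = aB
  have h2 : (2 : ℝ) ^ K.card ≠ 0 := by positivity
  generalize (2 : ℝ) ^ K.card = tw at *
  have hxA : (∏ p ∈ K, ∏ q ∈ A, (ζ p - ζ q)) ^ 2 = (∏ p ∈ K, ∏ q ∈ A, (ζ p - ζ q)) ^ 2 := rfl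
  generalize (∏ p ∈ K, ∏ q ∈ A, (ζ p - ζ q)) ^ 2 = xKA at *
  generalize (∏ p ∈ K, ∏ q ∈ B, (ζ p - ζ q)) ^ 2 = xKB at *
  clear hu hg hc hs1 hs2 hxA
  constructor
  · have : zK ^ e * zK ^ f = zK ^ (e' + f') * zK := by rw [← pow_add, hef, pow_succ]
    generalize zK ^ (e' + f') = Z at *
    generalize zK ^ e = Z1 at *
    generalize zK ^ f = Z2 at *
    generalize zA ^ e = A1 at *
    generalize zB ^ f = B1 at *
    exact alg1 hK g1 g2 g3 c1 c2 c3 h2 this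
  · rw [pow_add]
    generalize zK ^ e' = Z1 at *
    generalize zK ^ f' = Z2 at *
    generalize zA ^ e' = A1 at *
    generalize zB ^ f' = B1 at *
    exact alg2 g1 g2 g3 c1 c2 c3

lemma reindex (n k1 k2 : ℕ) (F : Finset (Fin n) → Finset (Fin n) → ℝ) :
    ∑ I ∈ powersetCard k1 univ, ∑ J ∈ powersetCard k2 univ, F I J =
    ∑ K : Finset (Fin n), ∑ S ∈ Kᶜ.powerset, ∑ A ∈ S.powerset,
      if K.card + A.card = k1 ∧ K.card + (S \ A).card = k2 then F (K ∪ A) (K ∪ (S \ A)) else 0 := by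
  rw [← Finset.sum_product']
  simp only [Finset.sum_sigma']
  rw [← Finset.sum_filter]
  refine Finset.sum_bij'
    (fun (q : Finset (Fin n) × Finset (Fin n)) _ =>
      (⟨q.1 ∩ q.2, ⟨(q.1 \ q.2) ∪ (q.2 \ q.1), q.1 \ q.2⟩⟩ :
        (_ : Finset (Fin n)) × (_ : Finset (Fin n)) × Finset (Fin n)))
    (fun q _ => (q.1 ∪ q.2.2, q.1 ∪ (q.2.1 \ q.2.2))) ?_ ?_ ?_ ?_ ?_
  · rintro ⟨I, J⟩ h
    simp only [Finset.mem_product, Finset.mem_powersetCard_univ] at h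
    have e1 : ((I \ J) ∪ (J \ I)) \ (I \ J) = J \ I := by ext z; simp; tauto
    simp only [Finset.mem_filter, Finset.mem_sigma, Finset.mem_univ, true_and,
      Finset.mem_powerset, e1]
    refine ⟨⟨?_, Finset.subset_union_left⟩, ?_, ?_⟩
    · intro z; simp; tauto
    · rw [← h.1, add_comm]; exact Finset.card_sdiff_add_card_inter I J
    · rw [← h.2, add_comm, Finset.inter_comm]; exact Finset.card_sdiff_add_card_inter J I
  · rintro ⟨K, S, A⟩ h
    simp only [Finset.mem_filter, Finset.mem_sigma, Finset.mem_univ, true_and,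
      Finset.mem_powerset] at h
    obtain ⟨⟨hS, hA⟩, h1, h2⟩ := h
    have hd : Disjoint K S := by
      rw [Finset.disjoint_left]; intro z hz hz'; simpa [hz] using hS hz'
    simp only [Finset.mem_product, Finset.mem_powersetCard_univ]
    rw [Finset.card_union_of_disjoint (hd.mono_right hA),
      Finset.card_union_of_disjoint (hd.mono_right Finset.sdiff_subset)]
    exact ⟨h1, h2⟩
  · rintro ⟨I, J⟩ h
    ext z
    · simp; tauto
    · simp; tauto
  · rintro ⟨K, S, A⟩ h
    simp only [Finset.mem_filter, Finset.mem_sigma, Finset.mem_univ, true_and,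
      Finset.mem_powerset] at h
    obtain ⟨⟨hS, hA⟩, h1, h2⟩ := h
    have a1 : ∀ z, z ∈ S → z ∉ K := fun z hz => by simpa using hS hz
    have a2 : ∀ z, z ∈ A → z ∈ S := fun z hz => hA hz
    have e1 : (K ∪ A) ∩ (K ∪ S \ A) = K := by
      ext z; have := a1 z; have := a2 z; simp; tauto
    have e2 : (K ∪ A) \ (K ∪ S \ A) ∪ (K ∪ S \ A) \ (K ∪ A) = S := by
      ext z; have := a1 z; have := a2 z; simp; tauto
    have e3 : (K ∪ A) \ (K ∪ S \ A) = A := by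
      ext z; have := a1 z; have := a2 z; simp; tauto
    simp only [e1, e2]
    simp only [e3]
  · rintro ⟨I, J⟩ h
    have e1 : I ∩ J ∪ I \ J = I := by ext z; simp; tauto
    have e2 : I ∩ J ∪ ((I \ J ∪ J \ I) \ (I \ J)) = J := by ext z; simp; tauto
    simp only [e1]
    rw [e2]

end assemble

section final

lemma fiber_sum (n k j : ℕ) (K S : Finset (Fin n)) (hS : Disjoint K S)
    (F : Finset (Fin n) → Finset (Fin n) → ℝ) (cst : ℝ) (c d e f : ℕ) (ζ : Fin n → ℝ) (w : ℕ → ℤ)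
    (hKS : 2 * K.card + S.card = 2 * k)
    (hw : ∀ r, w r = if K.card + r + j = k then 1 else 0)
    (hF : ∀ A ⊆ S, F (K ∪ A) (K ∪ (S \ A)) = cst * spl c d e f ζ A (S \ A)) :
    (∑ A ∈ S.powerset, if K.card + A.card + j = k ∧ K.card + (S \ A).card = k + j
      then F (K ∪ A) (K ∪ (S \ A)) else 0) = cst * TT w c d e f ζ S := by
  unfold TT
  rw [Finset.mul_sum]
  refine Finset.sum_congr rfl fun A hA => ?_
  rw [Finset.mem_powerset] at hA
  rw [hF A hA, hw]
  have hc := Finset.card_sdiff_add_card_eq_card hA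
  by_cases h : K.card + A.card + j = k
  · rw [if_pos ⟨h, by omega⟩, if_pos h]; simp
  · rw [if_neg (fun h' => h h'.1), if_neg h]; simp

lemma fiber_zero (k j : ℕ) (n : ℕ) (K S : Finset (Fin n))
    (F : Finset (Fin n) → Finset (Fin n) → ℝ)
    (hKS : 2 * K.card + S.card ≠ 2 * k) :
    (∑ A ∈ S.powerset, if K.card + A.card + j = k ∧ K.card + (S \ A).card = k + j
      then F (K ∪ A) (K ∪ (S \ A)) else 0) = 0 := by
  refine Finset.sum_eq_zero fun A hA => ?_
  rw [Finset.mem_powerset] at hA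
  have hc := Finset.card_sdiff_add_card_eq_card hA
  rw [if_neg]
  omega

lemma main1 (n : ℕ) (ζ a : Fin n → ℝ) (hζ0 : ∀ p, 0 < ζ p) (hζ : Function.Injective ζ) (k : ℕ) :
    2 ^ k * ∑ I ∈ powersetCard k univ, ∑ J ∈ powersetCard k univ, f1 n ζ a 1 0 I J =
      ∑ I ∈ powersetCard k univ, ∑ J ∈ powersetCard k univ, f2 n ζ a 0 0 I J := by
  rw [reindex, reindex, Finset.mul_sum]
  refine Finset.sum_congr rfl fun K _ => ?_
  rw [Finset.mul_sum]
  refine Finset.sum_congr rfl fun S hS => ?_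
  have hd : Disjoint K S := by
    rw [Finset.disjoint_left]; intro z hz hz'
    simpa [hz] using (Finset.mem_powerset.mp hS) hz'
  by_cases hKS : 2 * K.card + S.card = 2 * k
  · obtain ⟨m, rfl⟩ : ∃ m, k = K.card + m := ⟨k - K.card, by omega⟩
    have hfe : ∀ A ⊆ S, _ := fun A hA => f_eq n ζ a hζ0 1 0 0 0 rfl K A (S \ A)
      (hd.mono_right hA) (hd.mono_right Finset.sdiff_subset) Finset.disjoint_sdiff
    have hw : ∀ r, wa m r = if K.card + r + 0 = K.card + m then 1 else 0 := by
      intro r; simp [wa]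
    have r1 := fiber_sum n (K.card + m) 0 K S hd (f1 n ζ a 1 0)
      (cc n ζ a K S * (∏ p ∈ K, ζ p) ^ 0 / 2 ^ K.card) 1 0 1 0 ζ (wa m) hKS hw
      (fun A hA => by simpa [Finset.union_sdiff_of_subset hA] using (hfe A hA).1)
    have r2 := fiber_sum n (K.card + m) 0 K S hd (f2 n ζ a 0 0)
      (cc n ζ a K S * (∏ p ∈ K, ζ p) ^ 0) 0 1 0 0 ζ (wa m) hKS hw
      (fun A hA => by simpa [Finset.union_sdiff_of_subset hA] using (hfe A hA).2)
    simp only [add_zero] at r1 r2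
    rw [r1, r2, ← ident1 m ζ S (by omega) hζ.injOn, pow_add]
    field_simp
  · have r1 := fiber_zero k 0 n K S (f1 n ζ a 1 0) hKS
    have r2 := fiber_zero k 0 n K S (f2 n ζ a 0 0) hKS
    simp only [add_zero] at r1 r2
    rw [r1, r2, mul_zero]

lemma TT_sub (w1 w2 : ℕ → ℤ) (n c d e f : ℕ) (x : Fin n → ℝ) (S : Finset (Fin n)) :
    TT (fun r => w1 r - w2 r) c d e f x S = TT w1 c d e f x S - TT w2 c d e f x S := by
  unfold TT
  rw [← Finset.sum_sub_distrib]
  refine Finset.sum_congr rfl fun A _ => ?_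
  push_cast
  ring

lemma main2 (n : ℕ) (ζ a : Fin n → ℝ) (hζ0 : ∀ p, 0 < ζ p) (hζ : Function.Injective ζ) (k : ℕ) :
    2 ^ (k + 1) * ∑ I ∈ powersetCard (k + 1) univ, ∑ J ∈ powersetCard (k + 1) univ,
      f1 n ζ a 1 1 I J =
      ∑ I ∈ powersetCard (k + 1) univ, ∑ J ∈ powersetCard (k + 1) univ, f2 n ζ a 1 0 I J -
      ∑ I ∈ powersetCard k univ, ∑ J ∈ powersetCard (k + 1 + 1) univ, f2 n ζ a 1 0 I J := by
  rw [reindex, reindex, reindex, Finset.mul_sum, ← Finset.sum_sub_distrib]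
  refine Finset.sum_congr rfl fun K _ => ?_
  rw [Finset.mul_sum, ← Finset.sum_sub_distrib]
  refine Finset.sum_congr rfl fun S hS => ?_
  have hd : Disjoint K S := by
    rw [Finset.disjoint_left]; intro z hz hz'
    simpa [hz] using (Finset.mem_powerset.mp hS) hz'
  have hcond : (∑ A ∈ S.powerset, if K.card + A.card = k ∧ K.card + (S \ A).card = k + 1 + 1
      then f2 n ζ a 1 0 (K ∪ A) (K ∪ (S \ A)) else 0) =
      (∑ A ∈ S.powerset, if K.card + A.card + 1 = k + 1 ∧ K.card + (S \ A).card = k + 1 + 1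
      then f2 n ζ a 1 0 (K ∪ A) (K ∪ (S \ A)) else 0) := by
    simp only [Nat.add_right_cancel_iff]
  rw [hcond]
  by_cases hKS : 2 * K.card + S.card = 2 * (k + 1)
  · obtain ⟨m, hm⟩ : ∃ m, k + 1 = K.card + m := ⟨k + 1 - K.card, by omega⟩
    have hfe : ∀ A ⊆ S, _ := fun A hA => f_eq n ζ a hζ0 1 1 1 0 rfl K A (S \ A)
      (hd.mono_right hA) (hd.mono_right Finset.sdiff_subset) Finset.disjoint_sdiff
    have hw : ∀ r, wa m r = if K.card + r + 0 = k + 1 then 1 else 0 := by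
      intro r; rw [hm]; simp [wa]
    have hw' : ∀ r, wb m r = if K.card + r + 1 = k + 1 then 1 else 0 := by
      intro r; rw [hm]; simp [wb, add_assoc]
    have r1 := fiber_sum n (k + 1) 0 K S hd (f1 n ζ a 1 1)
      (cc n ζ a K S * (∏ p ∈ K, ζ p) ^ 1 / 2 ^ K.card) 1 0 1 1 ζ (wa m) hKS hw
      (fun A hA => by simpa [Finset.union_sdiff_of_subset hA] using (hfe A hA).1)
    have r2 := fiber_sum n (k + 1) 0 K S hd (f2 n ζ a 1 0)
      (cc n ζ a K S * (∏ p ∈ K, ζ p) ^ 1) 0 1 1 0 ζ (wa m) hKS hw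
      (fun A hA => by simpa [Finset.union_sdiff_of_subset hA] using (hfe A hA).2)
    have r3 := fiber_sum n (k + 1) 1 K S hd (f2 n ζ a 1 0)
      (cc n ζ a K S * (∏ p ∈ K, ζ p) ^ 1) 0 1 1 0 ζ (wb m) hKS hw'
      (fun A hA => by simpa [Finset.union_sdiff_of_subset hA] using (hfe A hA).2)
    simp only [add_zero] at r1 r2
    rw [r1, r2, r3, ← mul_sub, ← TT_sub, ← ident2 m ζ S (by omega) hζ.injOn, hm, pow_add]
    field_simp
  · have r1 := fiber_zero (k + 1) 0 n K S (f1 n ζ a 1 1) hKS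
    have r2 := fiber_zero (k + 1) 0 n K S (f2 n ζ a 1 0) hKS
    have r3 := fiber_zero (k + 1) 1 n K S (f2 n ζ a 1 0) hKS
    simp only [add_zero] at r1 r2
    rw [r1, r2, r3, mul_zero, sub_zero]

lemma Usum_nat (n : ℕ) (ζ a : Fin n → ℝ) (k : ℕ) : Usum n ζ a k =
    ∑ I ∈ powersetCard k univ, DeltaI n ζ I ^ 2 / GammaI n ζ I * ∏ p ∈ I, (ζ p ^ 0 * a p) := by
  unfold Usum
  split_ifs with h
  · rw [Finset.powersetCard_eq_empty.mpr (by simp; omega)]; simp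
  · simp

lemma Vsum_nat (n : ℕ) (ζ a : Fin n → ℝ) (k : ℕ) : Vsum n ζ a k =
    ∑ I ∈ powersetCard k univ, DeltaI n ζ I ^ 2 / GammaI n ζ I * ∏ p ∈ I, (ζ p ^ 1 * a p) := by
  unfold Vsum
  split_ifs with h
  · rw [Finset.powersetCard_eq_empty.mpr (by simp; omega)]; simp
  · simp

lemma Vsum_eq (n : ℕ) (ζ a : Fin n → ℝ) (k : ℤ) :
    Vsum n ζ a k = Usum n ζ (fun p => ζ p * a p) k := rfl

lemma F10 (n : ℕ) (ζ a : Fin n → ℝ) (hζ0 : ∀ p, 0 < ζ p) (hζ : Function.Injective ζ) (k : ℕ) :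
    Fdet n ζ a 1 0 k = Usum n ζ a k ^ 2 / 2 ^ k := by
  have h := Fdet_nat n ζ a hζ0 1 0 k
  simp only [Nat.cast_one, Nat.cast_zero] at h
  rw [h, eq_div_iff (by positivity), mul_comm, main1 n ζ a hζ0 hζ, Usum_nat, sq, Finset.sum_mul_sum]
  rfl

lemma F11 (n : ℕ) (ζ a : Fin n → ℝ) (hζ0 : ∀ p, 0 < ζ p) (hζ : Function.Injective ζ) (k : ℕ) :
    Fdet n ζ a 1 1 ((k + 1 : ℕ) : ℤ) = Wsum n ζ a ((k + 1 : ℕ) : ℤ) / 2 ^ (k + 1) := by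
  have h := Fdet_nat n ζ a hζ0 1 1 (k + 1)
  simp only [Nat.cast_one] at h
  rw [h, eq_div_iff (by positivity), mul_comm, main2 n ζ a hζ0 hζ]
  unfold Wsum
  rw [show (((k + 1 : ℕ) : ℤ) - 1) = (k : ℕ) by push_cast; ring,
    show (((k + 1 : ℕ) : ℤ) + 1) = ((k + 1 + 1 : ℕ) : ℤ) by push_cast; ring,
    Usum_nat, Usum_nat, Vsum_nat, Vsum_nat, Finset.sum_mul_sum, Finset.sum_mul_sum]
  rfl

lemma F_swap (n : ℕ) (ζ a : Fin n → ℝ) (i j k : ℤ) : Fdet n ζ a i j k = Fdet n ζ a j i k := by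
  unfold Fdet
  split_ifs
  · rfl
  · rw [← Matrix.det_transpose]
    congr 1
    ext r s
    simp only [Matrix.transpose_apply, Matrix.of_apply, Imom]
    rw [Finset.sum_comm]
    refine Finset.sum_congr rfl fun p _ => Finset.sum_congr rfl fun q _ => ?_
    rw [add_comm (ζ q)]
    ring

lemma F_shift (n : ℕ) (ζ a : Fin n → ℝ) (hζ0 : ∀ p, 0 < ζ p) (k : ℤ) :
    Fdet n ζ a 2 1 k = Fdet n ζ (fun p => ζ p * a p) 1 0 k := by
  unfold Fdet
  split_ifs
  · rfl
  · congr 1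
    ext r s
    simp only [Matrix.of_apply, Imom]
    refine Finset.sum_congr rfl fun p _ => Finset.sum_congr rfl fun q _ => ?_
    rw [show (2 : ℤ) + ((r : ℕ) : ℤ) = (1 + ((r : ℕ) : ℤ)) + 1 by ring,
      show (1 : ℤ) + ((s : ℕ) : ℤ) = (0 + ((s : ℕ) : ℤ)) + 1 by ring,
      zpow_add_one₀ (hζ0 p).ne', zpow_add_one₀ (hζ0 q).ne']
    ring

lemma F_pos (n : ℕ) (ζ a : Fin n → ℝ) (hζ0 : ∀ p, 0 < ζ p) (hζ : StrictMono ζ)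
    (ha : ∀ p, 0 < a p) (e f k : ℕ) (hk : k ≤ n) : 0 < Fdet n ζ a e f k := by
  rw [Fdet_nat n ζ a hζ0]
  have hne : (powersetCard k (univ : Finset (Fin n))).Nonempty :=
    Finset.powersetCard_nonempty.mpr (by simpa using hk)
  refine Finset.sum_pos (fun I _ => Finset.sum_pos (fun J _ => ?_) hne) hne
  have hD : ∀ I, 0 < DeltaI n ζ I ^ 2 := by
    intro I
    rw [delta_pp]
    apply pp_pos
    intro p q hpq
    have := hζ hpq
    have : ζ p - ζ q ≠ 0 := sub_ne_zero.mpr (ne_of_lt this)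
    positivity
  have hP : ∀ (e : ℕ) I, 0 < ∏ p ∈ I, (ζ p ^ e * a p) := fun e I =>
    Finset.prod_pos fun p _ => mul_pos (pow_pos (hζ0 p) e) (ha p)
  have hG : 0 < ∏ p ∈ I, ∏ q ∈ J, (ζ p + ζ q) :=
    Finset.prod_pos fun p _ => Finset.prod_pos fun q _ => add_pos (hζ0 p) (hζ0 q)
  exact div_pos (mul_pos (mul_pos (hP _ _) (hP _ _)) (mul_pos (hD _) (hD _))) hG

end final


/-- Lemma 2.4 (first part): for `1 ≤ k ≤ n`,
`F_k^{(1,0)} = F_k^{(0,1)} = U_k²/2^k`, `F_k^{(1,1)} = W_k/2^k`,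
`F_k^{(2,1)} = F_k^{(1,2)} = V_k²/2^k`, and these quantities are positive. -/
theorem stmt_0 (n : ℕ) (hn : 1 ≤ n) (ζ a : Fin n → ℝ)
    (hζ0 : ∀ p, 0 < ζ p) (hζmono : StrictMono ζ) (ha : ∀ p, 0 < a p)
    (k : ℤ) (hk1 : 1 ≤ k) (hkn : k ≤ (n : ℤ)) :
    Fdet n ζ a 1 0 k = Usum n ζ a k ^ 2 / 2 ^ k ∧
    Fdet n ζ a 0 1 k = Usum n ζ a k ^ 2 / 2 ^ k ∧
    Fdet n ζ a 1 1 k = Wsum n ζ a k / 2 ^ k ∧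
    Fdet n ζ a 2 1 k = Vsum n ζ a k ^ 2 / 2 ^ k ∧
    Fdet n ζ a 1 2 k = Vsum n ζ a k ^ 2 / 2 ^ k ∧
    0 < Fdet n ζ a 1 0 k ∧ 0 < Fdet n ζ a 1 1 k ∧ 0 < Fdet n ζ a 2 1 k := by
  obtain ⟨k', rfl⟩ : ∃ k' : ℕ, k = ((k' + 1 : ℕ) : ℤ) := ⟨(k - 1).toNat, by push_cast; omega⟩
  have hk' : k' + 1 ≤ n := by exact_mod_cast hkn
  have hinj := hζmono.injective
  have e10 := F10 n ζ a hζ0 hinj (k' + 1)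
  have e11 := F11 n ζ a hζ0 hinj k'
  have e21 := F10 n ζ (fun p => ζ p * a p) hζ0 hinj (k' + 1)
  rw [← F_shift n ζ a hζ0, ← Vsum_eq] at e21
  have p10 := F_pos n ζ a hζ0 hζmono ha 1 0 (k' + 1) hk'
  have p11 := F_pos n ζ a hζ0 hζmono ha 1 1 (k' + 1) hk'
  have p21 := F_pos n ζ a hζ0 hζmono ha 2 1 (k' + 1) hk'
  rw [zpow_natCast]
  refine ⟨e10, ?_, e11, e21, ?_, by simpa using p10, by simpa using p11, by simpa using p21⟩
  · rw [F_swap]; exact e10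
  · rw [F_swap]; exact e21
end

section
/- For every integer k with 1 ≤ k ≤ n one has G_k^{(1,0)} = U_k U_{k−1}/2^{k−1} > 0, G_k^{(1,1)} = U_k V_{k−1}/2^{k−1} > 0, G_k^{(2,1)} = V_k V_{k−1}/2^{k−1} > 0, and G_k^{(2,0)} = (U_{k−1} V_k − U_{k+1} V_{k−2})/2^{k−1}. -/
open Finset

namespace NovAux

section PartA
variable {ι : Type} [LinearOrder ι]

/-- product of a symmetric kernel over unordered pairs -/
def pw {R : Type*} [CommRing R] (w : ι → ι → R) (C : Finset ι) : R :=
  ∏ p ∈ C, ∏ q ∈ C, if p < q then w p q else 1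

lemma pw_empty {R : Type*} [CommRing R] (w : ι → ι → R) : pw w ∅ = 1 := by simp [pw]

lemma pw_insert {R : Type*} [CommRing R] (w : ι → ι → R) (hw : ∀ p q, w p q = w q p)
    (p : ι) (C : Finset ι) (hp : p ∉ C) :
    pw w (insert p C) = pw w C * ∏ t ∈ C, w p t := by
  unfold pw
  rw [Finset.prod_insert hp, Finset.prod_insert hp]
  simp only [lt_irrefl, if_false, one_mul]
  have h : ∀ r ∈ C, (∏ q ∈ insert p C, if r < q then w r q else 1) =
      (if r < p then w r p else 1) * ∏ q ∈ C, if r < q then w r q else 1 := by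
    intro r _
    rw [Finset.prod_insert hp]
  rw [Finset.prod_congr rfl h, Finset.prod_mul_distrib, mul_left_comm, ← mul_assoc, mul_comm]
  rw [mul_comm (∏ x ∈ C, if x < p then w x p else 1), ← Finset.prod_mul_distrib]
  congr 1
  refine Finset.prod_congr rfl fun t ht => ?_
  have hne : t ≠ p := fun h => hp (h ▸ ht)
  rcases lt_or_gt_of_ne hne with h | h
  · simp [h, h.not_gt, hw t p]
  · simp [h, h.not_gt]

/-- the kernel `(x-y)^2 (x+y)^s` -/
def kap {R : Type*} [CommRing R] (s : ℕ) (x : ι → R) (p q : ι) : R :=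
  (x p - x q) ^ 2 * (x p + x q) ^ s

lemma kap_symm {R : Type*} [CommRing R] (s : ℕ) (x : ι → R) (p q : ι) :
    kap s x p q = kap s x q p := by
  unfold kap; rw [add_comm]; ring

/-- basic summand -/
def Phi {R : Type*} [CommRing R] (s b e1 e2 : ℕ) (x : ι → R) (A B : Finset ι) : R :=
  pw (kap s x) A * pw (kap s x) B * (∏ p ∈ A, ∏ q ∈ B, (x p + x q) ^ b) *
    (∏ p ∈ A, x p ^ e1) * ∏ q ∈ B, x q ^ e2

/-- factor contributed by a new point -/
def fac {R : Type*} [CommRing R] (s b e : ℕ) (x : ι → R) (y : R) (A B : Finset ι) : R :=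
  (∏ t ∈ A, (y - x t) ^ 2 * (y + x t) ^ s) * (∏ t ∈ B, (y + x t) ^ b) * y ^ e

lemma Phi_insert_left {R : Type*} [CommRing R] (s b e1 e2 : ℕ) (x : ι → R) (A B : Finset ι)
    (p : ι) (hp : p ∉ A) :
    Phi s b e1 e2 x (insert p A) B = Phi s b e1 e2 x A B * fac s b e1 x (x p) A B := by
  unfold Phi fac
  rw [pw_insert _ (kap_symm s x) p A hp, Finset.prod_insert hp, Finset.prod_insert hp]
  simp only [kap]
  ring

lemma Phi_insert_right {R : Type*} [CommRing R] (s b e1 e2 : ℕ) (x : ι → R) (A B : Finset ι)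
    (p : ι) (hp : p ∉ B) :
    Phi s b e1 e2 x A (insert p B) = Phi s b e1 e2 x A B * fac s b e2 x (x p) B A := by
  unfold Phi fac
  rw [pw_insert _ (kap_symm s x) p B hp, Finset.prod_insert hp]
  have : ∀ r ∈ A, (∏ q ∈ insert p B, (x r + x q) ^ b) =
      (x p + x r) ^ b * ∏ q ∈ B, (x r + x q) ^ b := by
    intro r _
    rw [Finset.prod_insert hp, add_comm (x r)]
  rw [Finset.prod_congr rfl this, Finset.prod_mul_distrib]
  simp only [kap]
  ring

/-- sum over splittings of `T` -/
def SS {R : Type*} [CommRing R] (s b e1 e2 N : ℕ) (T : Finset ι) (x : ι → R) : R :=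
  ∑ C ∈ T.powerset, if C.card = N then Phi s b e1 e2 x C (T \ C) else 0

lemma SS_insert {R : Type*} [CommRing R] (s b e1 e2 N : ℕ) (T : Finset ι) (x : ι → R)
    (p : ι) (hp : p ∉ T) :
    SS s b e1 e2 (N + 1) (insert p T) x =
      ∑ C ∈ T.powerset,
        ((if C.card = N + 1 then
            Phi s b e1 e2 x C (T \ C) * fac s b e2 x (x p) (T \ C) C else 0) +
          if C.card = N then
            Phi s b e1 e2 x C (T \ C) * fac s b e1 x (x p) C (T \ C) else 0) := by
  unfold SS
  rw [Finset.sum_powerset_insert hp, ← Finset.sum_add_distrib]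
  refine Finset.sum_congr rfl fun C hC => ?_
  have hC' := Finset.mem_powerset.1 hC
  have hpC : p ∉ C := fun h => hp (hC' h)
  have h1 : insert p T \ C = insert p (T \ C) := Finset.insert_sdiff_of_notMem _ hpC
  have h2 : insert p T \ insert p C = T \ C := by
    rw [Finset.insert_sdiff_insert, Finset.sdiff_insert, Finset.erase_eq_of_notMem]
    simp [hp]
  rw [h1, h2, Phi_insert_right, Phi_insert_left _ _ _ _ _ _ _ _ hpC, Finset.card_insert_of_notMem hpC]
  · simp
  · simp [hp]

lemma fac_insert_left {R : Type*} [CommRing R] (s b e : ℕ) (x : ι → R) (y : R) (A B : Finset ι)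
    (p : ι) (hp : p ∉ A) :
    fac s b e x y (insert p A) B = fac s b e x y A B * ((y - x p) ^ 2 * (y + x p) ^ s) := by
  unfold fac; rw [Finset.prod_insert hp]; ring

lemma fac_insert_right {R : Type*} [CommRing R] (s b e : ℕ) (x : ι → R) (y : R) (A B : Finset ι)
    (p : ι) (hp : p ∉ B) :
    fac s b e x y A (insert p B) = fac s b e x y A B * (y + x p) ^ b := by
  unfold fac; rw [Finset.prod_insert hp]; ring

/-- the four contributions when two points `y`, `z` are added -/
def quad {R : Type*} [CommRing R] (s b e1 e2 N : ℕ) (T : Finset ι) (x : ι → R) (y z : R)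
    (C : Finset ι) : R :=
  (if C.card = N + 2 then Phi s b e1 e2 x C (T \ C) * fac s b e2 x y (T \ C) C *
      fac s b e2 x z (T \ C) C * ((y - z) ^ 2 * (y + z) ^ s) else 0) +
  (if C.card = N + 1 then Phi s b e1 e2 x C (T \ C) *
      (fac s b e2 x y (T \ C) C * fac s b e1 x z C (T \ C) +
       fac s b e2 x z (T \ C) C * fac s b e1 x y C (T \ C)) * (y + z) ^ b else 0) +
  (if C.card = N then Phi s b e1 e2 x C (T \ C) * fac s b e1 x y C (T \ C) *
      fac s b e1 x z C (T \ C) * ((y - z) ^ 2 * (y + z) ^ s) else 0)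

lemma SS_insert2 {R : Type*} [CommRing R] (s b e1 e2 N : ℕ) (T : Finset ι) (x : ι → R)
    (p q : ι) (hp : p ∉ insert q T) (hq : q ∉ T) :
    SS s b e1 e2 (N + 2) (insert p (insert q T)) x =
      ∑ C ∈ T.powerset, quad s b e1 e2 N T x (x p) (x q) C := by
  rw [SS_insert _ _ _ _ _ _ _ _ hp, Finset.sum_powerset_insert hq, ← Finset.sum_add_distrib]
  refine Finset.sum_congr rfl fun C hC => ?_
  have hC' := Finset.mem_powerset.1 hC
  have hqC : q ∉ C := fun h => hq (hC' h)
  have h1 : insert q T \ C = insert q (T \ C) := Finset.insert_sdiff_of_notMem _ hqC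
  have h2 : insert q T \ insert q C = T \ C := by
    rw [Finset.insert_sdiff_insert, Finset.sdiff_insert, Finset.erase_eq_of_notMem]
    simp [hq]
  have h3 : q ∉ T \ C := by simp [hq]
  rw [h1, h2, Phi_insert_right _ _ _ _ _ _ _ _ h3, Phi_insert_left _ _ _ _ _ _ _ _ hqC,
    Finset.card_insert_of_notMem hqC, fac_insert_left _ _ _ _ _ _ _ _ h3,
    fac_insert_left _ _ _ _ _ _ _ _ hqC, fac_insert_right _ _ _ _ _ _ _ _ h3,
    fac_insert_right _ _ _ _ _ _ _ _ hqC]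
  unfold quad
  simp only [Nat.add_right_cancel_iff, show C.card + 1 = N + 2 ↔ C.card = N + 1 by omega]
  split_ifs <;> first | omega | ring

lemma SS_diag {R : Type*} [CommRing R] (s b e1 e2 N : ℕ) (hsb : s + b = 1)
    (T : Finset ι) (x : ι → R)
    (p q : ι) (hp : p ∉ insert q T) (hq : q ∉ T) (hx : x p = x q) :
    SS s b e1 e2 (N + 2) (insert p (insert q T)) x =
      2 * (2 * x p) ^ b * x p ^ (e1 + e2) * (∏ t ∈ T, (x p - x t) ^ 2 * (x p + x t)) *
        SS s b e1 e2 (N + 1) T x := by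
  rw [SS_insert2 _ _ _ _ _ _ _ _ _ hp hq]
  unfold SS
  rw [Finset.mul_sum]
  refine Finset.sum_congr rfl fun C hC => ?_
  have hC' := Finset.mem_powerset.1 hC
  unfold quad
  rw [← hx]
  simp only [sub_self, ne_eq, OfNat.ofNat_ne_zero, not_false_eq_true, zero_pow, zero_mul, mul_zero,
    ite_self, zero_add, add_zero, mul_ite]
  refine if_congr Iff.rfl ?_ rfl
  unfold fac
  rw [← Finset.prod_sdiff hC']
  simp only [Finset.prod_mul_distrib]
  have : s = 1 ∧ b = 0 ∨ s = 0 ∧ b = 1 := by omega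
  rcases this with ⟨rfl, rfl⟩ | ⟨rfl, rfl⟩ <;> simp only [pow_zero, pow_one, Finset.prod_const_one] <;> ring

lemma quad_symm {R : Type*} [CommRing R] (s b e1 e2 N : ℕ) (T : Finset ι) (x : ι → R) (y z : R)
    (C : Finset ι) : quad s b e1 e2 N T x y z C = quad s b e1 e2 N T x z y C := by
  unfold quad
  rw [add_comm y z]
  congr 1
  · congr 1
    · split_ifs <;> ring
    · split_ifs <;> ring
  · split_ifs <;> ring

lemma Phi_congr {R : Type*} [CommRing R] (s b e1 e2 : ℕ) (x x' : ι → R) (A B : Finset ι)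
    (hA : ∀ t ∈ A, x t = x' t) (hB : ∀ t ∈ B, x t = x' t) :
    Phi s b e1 e2 x A B = Phi s b e1 e2 x' A B := by
  unfold Phi pw kap
  congr 1; congr 1; congr 1; congr 1
  · exact Finset.prod_congr rfl fun p hp => Finset.prod_congr rfl fun q hq => by rw [hA p hp, hA q hq]
  · exact Finset.prod_congr rfl fun p hp => Finset.prod_congr rfl fun q hq => by rw [hB p hp, hB q hq]
  · exact Finset.prod_congr rfl fun p hp => Finset.prod_congr rfl fun q hq => by rw [hA p hp, hB q hq]
  · exact Finset.prod_congr rfl fun p hp => by rw [hA p hp]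
  · exact Finset.prod_congr rfl fun p hp => by rw [hB p hp]

lemma fac_congr {R : Type*} [CommRing R] (s b e : ℕ) (x x' : ι → R) (y : R) (A B : Finset ι)
    (hA : ∀ t ∈ A, x t = x' t) (hB : ∀ t ∈ B, x t = x' t) :
    fac s b e x y A B = fac s b e x' y A B := by
  unfold fac
  congr 1; congr 1
  · exact Finset.prod_congr rfl fun p hp => by rw [hA p hp]
  · exact Finset.prod_congr rfl fun p hp => by rw [hB p hp]

lemma SS_symm {R : Type*} [CommRing R] (s b e1 e2 N : ℕ) (T : Finset ι) (x x' : ι → R)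
    (p q : ι) (hp : p ∉ insert q T) (hq : q ∉ T) (h1 : x p = x' q) (h2 : x q = x' p)
    (h : ∀ t ∈ T, x t = x' t) :
    SS s b e1 e2 (N + 2) (insert p (insert q T)) x =
      SS s b e1 e2 (N + 2) (insert p (insert q T)) x' := by
  rw [SS_insert2 _ _ _ _ _ _ _ _ _ hp hq, SS_insert2 _ _ _ _ _ _ _ _ _ hp hq]
  refine Finset.sum_congr rfl fun C hC => ?_
  have hC' := Finset.mem_powerset.1 hC
  have hc : ∀ t ∈ C, x t = x' t := fun t ht => h t (hC' ht)
  have hd : ∀ t ∈ T \ C, x t = x' t := fun t ht => h t (Finset.sdiff_subset ht)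
  rw [h1, h2, quad_symm]
  unfold quad
  rw [Phi_congr _ _ _ _ x x' _ _ hc hd]
  simp only [fun e y => fac_congr s b e x x' y _ _ hc hd, fun e y => fac_congr s b e x x' y _ _ hd hc]

lemma SS_map {R R' : Type*} [CommRing R] [CommRing R'] (φ : R →+* R') (s b e1 e2 N : ℕ)
    (T : Finset ι) (x : ι → R) :
    φ (SS s b e1 e2 N T x) = SS s b e1 e2 N T (fun t => φ (x t)) := by
  unfold SS Phi pw kap
  simp only [map_sum, apply_ite φ, map_zero, map_mul, map_prod, map_pow, map_add, map_sub, map_one]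

/-- the difference of both sides of the identity -/
def DD {R : Type*} [CommRing R] (e1 e2 f1 f2 d m : ℕ) (T : Finset ι) (x : ι → R) : R :=
  2 ^ m * SS 1 0 e1 e2 (m + 1) T x - SS 0 1 f1 f2 (m + 1) T x + d * SS 0 1 f2 f1 (m + 2) T x

lemma DD_map {R R' : Type*} [CommRing R] [CommRing R'] (φ : R →+* R') (e1 e2 f1 f2 d m : ℕ)
    (T : Finset ι) (x : ι → R) :
    φ (DD e1 e2 f1 f2 d m T x) = DD e1 e2 f1 f2 d m T (fun t => φ (x t)) := by
  unfold DD
  simp only [map_add, map_sub, map_mul, map_pow, map_ofNat, map_natCast, SS_map]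

lemma DD_symm {R : Type*} [CommRing R] (e1 e2 f1 f2 d m : ℕ) (T : Finset ι) (x x' : ι → R)
    (p q : ι) (hp : p ∉ insert q T) (hq : q ∉ T) (h1 : x p = x' q) (h2 : x q = x' p)
    (h : ∀ t ∈ T, x t = x' t) :
    DD e1 e2 f1 f2 d (m + 1) (insert p (insert q T)) x =
      DD e1 e2 f1 f2 d (m + 1) (insert p (insert q T)) x' := by
  unfold DD
  rw [SS_symm _ _ _ _ _ T x x' p q hp hq h1 h2 h, SS_symm _ _ _ _ _ T x x' p q hp hq h1 h2 h,
    SS_symm _ _ _ _ _ T x x' p q hp hq h1 h2 h]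

lemma DD_diag {R : Type*} [CommRing R] (e1 e2 f1 f2 d m : ℕ) (he : e1 + e2 = f1 + f2 + 1)
    (T : Finset ι) (x : ι → R)
    (p q : ι) (hp : p ∉ insert q T) (hq : q ∉ T) (hx : x p = x q) :
    DD e1 e2 f1 f2 d (m + 1) (insert p (insert q T)) x =
      4 * x p ^ (e1 + e2) * (∏ t ∈ T, (x p - x t) ^ 2 * (x p + x t)) *
        DD e1 e2 f1 f2 d m T x := by
  unfold DD
  rw [SS_diag 1 0 e1 e2 m rfl T x p q hp hq hx, SS_diag 0 1 f1 f2 m rfl T x p q hp hq hx,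
    SS_diag 0 1 f2 f1 (m + 1) rfl T x p q hp hq hx, he]
  ring

end PartA

end NovAux

namespace NovAux

section PartA2
variable {ι : Type} [LinearOrder ι]
open Polynomial

lemma DD_dvd {R : Type} [CommRing R] [IsDomain R] [CharZero R] (half : R) (hh : 2 * half = 1)
    (e1 e2 f1 f2 d m : ℕ) (he : e1 + e2 = f1 + f2 + 1)
    (T : Finset ι)
    (IH : ∀ x : ι → R, DD e1 e2 f1 f2 d m T x = 0)
    (x : ι → R) (p q : ι) (hp : p ∉ insert q T) (hq : q ∉ T) :
    (x p - x q) ^ 2 ∣ DD e1 e2 f1 f2 d (m + 1) (insert p (insert q T)) x := by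
  have hpq : p ≠ q := fun h => hp (by simp [h])
  have hpT : p ∉ T := fun h => hp (by simp [h])
  set u : R := half * (x p + x q) with hu
  set v : R := half * (x p - x q) with hv
  have hs1 : u + v = x p := by linear_combination x p * hh
  have hs2 : u - v = x q := by linear_combination x q * hh
  let xt : ι → R[X] := fun t => if t = p then C u + X else if t = q then C u - X else C (x t)
  let xs : ι → R[X] := fun t => if t = p then C u - X else if t = q then C u + X else C (x t)
  set h : R[X] := DD e1 e2 f1 f2 d (m + 1) (insert p (insert q T)) xt with hdef
  have h0 : h.coeff 0 = 0 := by
    rw [coeff_zero_eq_eval_zero, ← coe_evalRingHom, hdef, DD_map,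
      DD_diag _ _ _ _ _ _ he T _ p q hp hq, IH, mul_zero]
    simp [xt, hpq.symm]
  have hc : h.comp (-X) = h := by
    rw [← coe_compRingHom_apply, hdef, DD_map]
    have : (fun t => (compRingHom (-X)) (xt t)) = xs := by
      funext t
      simp only [xt, xs]
      split_ifs <;> simp [sub_eq_add_neg]
    rw [this]
    apply DD_symm _ _ _ _ _ _ _ _ _ p q hp hq
    · simp [xt, xs, hpq.symm]
    · simp [xt, xs, hpq.symm]
    · intro t ht
      have h1 : t ≠ p := fun h => hpT (h ▸ ht)
      have h2 : t ≠ q := fun h => hq (h ▸ ht)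
      simp [xt, xs, h1, h2]
  have h1 : h.coeff 1 = 0 := by
    have h2 : (h.comp (-X)).derivative.eval 0 = h.derivative.eval 0 := by rw [hc]
    rw [derivative_comp] at h2
    simp only [derivative_neg, derivative_X, eval_mul, eval_neg, eval_one, eval_comp, eval_X,
      neg_zero] at h2
    have h3 : h.derivative.eval 0 = h.coeff 1 := by
      rw [← coeff_zero_eq_eval_zero, coeff_derivative]; simp
    rw [h3] at h2
    have h4 : (2 : R) * h.coeff 1 = 0 := by linear_combination -h2
    rcases mul_eq_zero.1 h4 with h5 | h5
    · exact absurd h5 two_ne_zero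
    · exact h5
  have hX : X ^ 2 ∣ h := by
    rw [X_pow_dvd_iff]
    intro k hk
    interval_cases k
    · exact h0
    · exact h1
  obtain ⟨w, hw⟩ := hX
  have hev : DD e1 e2 f1 f2 d (m + 1) (insert p (insert q T)) x = v ^ 2 * w.eval v := by
    have : h.eval v = v ^ 2 * w.eval v := by rw [hw]; simp
    rw [← this, ← coe_evalRingHom, hdef, DD_map]
    congr 1
    funext t
    simp only [xt]
    split_ifs with ha hb
    · subst ha; simp [hs1]
    · subst hb; simp [hs2]
    · simp
  rw [hev]
  exact ⟨half ^ 2 * w.eval v, by rw [hv]; ring⟩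

lemma fac_natDegree {K : Type} [Field K] (s b e : ℕ) (x : ι → K[X]) (A B : Finset ι)
    (hA : ∀ t ∈ A, (x t).natDegree = 0) (hB : ∀ t ∈ B, (x t).natDegree = 0) :
    (fac s b e x X A B).natDegree ≤ A.card * (2 + s) + B.card * b + e := by
  unfold fac
  refine natDegree_mul_le_of_le (natDegree_mul_le_of_le ?_ ?_) ?_
  · refine (natDegree_prod_le _ _).trans ((Finset.sum_le_card_nsmul _ _ (2 + s) ?_).trans (by simp))
    intro t ht
    refine natDegree_mul_le_of_le ?_ ?_
    · refine (natDegree_pow_le_of_le (m := 1) 2 ?_).trans (by simp)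
      refine (natDegree_sub_le _ _).trans ?_
      simp [hA t ht]
    · refine (natDegree_pow_le_of_le (m := 1) s ?_).trans (by simp)
      refine (natDegree_add_le _ _).trans ?_
      simp [hA t ht]
  · refine (natDegree_prod_le _ _).trans ((Finset.sum_le_card_nsmul _ _ b ?_).trans (by simp))
    intro t ht
    refine (natDegree_pow_le_of_le (m := 1) b ?_).trans (by simp)
    refine (natDegree_add_le _ _).trans ?_
    simp [hB t ht]
  · simp

lemma Phi_natDegree {K : Type} [Field K] (s b e1 e2 : ℕ) (x : ι → K[X]) (A B : Finset ι)
    (hA : ∀ t ∈ A, (x t).natDegree = 0) (hB : ∀ t ∈ B, (x t).natDegree = 0) :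
    (Phi s b e1 e2 x A B).natDegree = 0 := by
  have h : Phi s b e1 e2 x A B = C (Phi s b e1 e2 (fun t => (x t).coeff 0) A B) := by
    have := Phi_congr s b e1 e2 x (fun t => C ((x t).coeff 0)) A B
      (fun t ht => eq_C_of_natDegree_eq_zero (hA t ht))
      (fun t ht => eq_C_of_natDegree_eq_zero (hB t ht))
    rw [this]
    unfold Phi pw kap
    simp only [map_mul, map_prod, map_pow, map_add, map_sub, apply_ite C, map_one]
  rw [h, natDegree_C]

lemma SS_natDegree {K : Type} [Field K] (s b e1 e2 N D : ℕ) (T : Finset ι) (x : ι → K[X])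
    (p : ι) (hp : p ∉ T) (hxp : x p = X) (hT : ∀ t ∈ T, (x t).natDegree = 0)
    (h1 : N + 1 ≤ T.card → (T.card - (N + 1)) * (2 + s) + (N + 1) * b + e2 ≤ D)
    (h2 : N ≤ T.card → N * (2 + s) + (T.card - N) * b + e1 ≤ D) :
    (SS s b e1 e2 (N + 1) (insert p T) x).natDegree ≤ D := by
  rw [SS_insert _ _ _ _ _ _ _ _ hp]
  refine natDegree_sum_le_of_forall_le _ _ fun C hC => ?_
  have hC' := Finset.mem_powerset.1 hC
  have hc : ∀ t ∈ C, (x t).natDegree = 0 := fun t ht => hT t (hC' ht)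
  have hd : ∀ t ∈ T \ C, (x t).natDegree = 0 := fun t ht => hT t (Finset.sdiff_subset ht)
  have hcard := Finset.card_sdiff_of_subset hC'
  have hle := Finset.card_le_card hC'
  refine (natDegree_add_le _ _).trans (max_le ?_ ?_)
  · split_ifs with h
    · refine natDegree_mul_le.trans ?_
      rw [Phi_natDegree _ _ _ _ _ _ _ hc hd, hxp, zero_add]
      refine (fac_natDegree _ _ _ _ _ _ hd hc).trans ?_
      rw [hcard, h]
      exact h1 (h ▸ hle)
    · simp
  · split_ifs with h
    · refine natDegree_mul_le.trans ?_
      rw [Phi_natDegree _ _ _ _ _ _ _ hc hd, hxp, zero_add]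
      refine (fac_natDegree _ _ _ _ _ _ hc hd).trans ?_
      rw [hcard, h]
      exact h2 (h ▸ hle)
    · simp

lemma DD_natDegree {K : Type} [Field K] (e1 e2 f1 f2 d m : ℕ)
    (he1 : e1 ≤ 1) (he2 : e2 ≤ 4) (hf1 : f1 ≤ 1) (hf2 : f2 ≤ 2) (hd : d = 0 ∨ f2 = 0)
    (T : Finset ι) (x : ι → K[X]) (hcard : T.card = 2 * m)
    (p : ι) (hp : p ∉ T) (hxp : x p = X) (hT : ∀ t ∈ T, (x t).natDegree = 0) :
    (DD e1 e2 f1 f2 d m (insert p T) x).natDegree ≤ 3 * m + 1 := by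
  unfold DD
  refine (natDegree_add_le _ _).trans (max_le ((natDegree_sub_le _ _).trans (max_le ?_ ?_)) ?_)
  · refine natDegree_mul_le.trans ?_
    have : ((2 : K[X]) ^ m).natDegree = 0 := by
      rw [show (2 : K[X]) ^ m = C (2 ^ m) by rw [C_pow]; rfl, natDegree_C]
    rw [this, zero_add]
    apply SS_natDegree _ _ _ _ _ _ _ _ p hp hxp hT <;> rw [hcard] <;> omega
  · apply SS_natDegree _ _ _ _ _ _ _ _ p hp hxp hT <;> rw [hcard] <;> omega
  · rcases hd with rfl | rfl
    · simp
    · refine natDegree_mul_le.trans ?_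
      rw [natDegree_natCast, zero_add]
      apply SS_natDegree _ _ _ _ _ _ _ _ p hp hxp hT <;> rw [hcard] <;> omega

theorem DD_zero (e1 e2 f1 f2 d : ℕ) (he : e1 + e2 = f1 + f2 + 1)
    (he1 : e1 ≤ 1) (he2 : e2 ≤ 4) (hf1 : f1 ≤ 1) (hf2 : f2 ≤ 2) (hd : d = 0 ∨ f2 = 0)
    (base0 : ∀ (K : Type) [Field K] (x : ι → K) (p : ι), DD e1 e2 f1 f2 d 0 {p} x = 0)
    (base1 : ∀ (K : Type) [Field K] (x : ι → K) (p q r : ι), p ∉ ({q, r} : Finset ι) →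
      q ∉ ({r} : Finset ι) → DD e1 e2 f1 f2 d 1 {p, q, r} x = 0)
    (m : ℕ) : ∀ (K : Type) [Field K] [CharZero K] (T : Finset ι) (x : ι → K),
      T.card = 2 * m + 1 → DD e1 e2 f1 f2 d m T x = 0 := by
  induction m with
  | zero =>
    intro K _ _ T x hT
    obtain ⟨p, rfl⟩ := Finset.card_eq_one.1 hT
    exact base0 K x p
  | succ m IH =>
    intro K _ _ T x hT
    rcases Nat.eq_zero_or_pos m with rfl | hm
    · obtain ⟨p, q, r, hpq, hpr, hqr, rfl⟩ := Finset.card_eq_three.1 hT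
      exact base1 K x p q r (by simp [hpq, hpr]) (by simp [hqr])
    have IHd : ∀ (R : Type) [CommRing R] [IsDomain R] [CharZero R] (T : Finset ι) (x : ι → R),
        T.card = 2 * m + 1 → DD e1 e2 f1 f2 d m T x = 0 := by
      intro R _ _ _ T x hT
      have : CharZero (FractionRing R) :=
        charZero_of_injective_algebraMap (IsFractionRing.injective R (FractionRing R))
      apply IsFractionRing.injective R (FractionRing R)
      rw [DD_map, IH _ T _ hT, map_zero]
    by_cases hinj : ∃ p ∈ T, ∃ q ∈ T, p ≠ q ∧ x p = x q
    · obtain ⟨p, hp, q, hq, hpq, hx⟩ := hinj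
      have e : T = insert p (insert q ((T.erase p).erase q)) := by
        rw [Finset.insert_erase (Finset.mem_erase.2 ⟨hpq.symm, hq⟩), Finset.insert_erase hp]
      have hp' : p ∉ insert q ((T.erase p).erase q) := by simp [hpq]
      have hq' : q ∉ (T.erase p).erase q := by simp
      have hc : ((T.erase p).erase q).card = 2 * m + 1 := by
        rw [Finset.card_erase_of_mem (Finset.mem_erase.2 ⟨hpq.symm, hq⟩),
          Finset.card_erase_of_mem hp]; omega
      rw [e, DD_diag _ _ _ _ _ _ he _ x p q hp' hq' hx, IH K _ _ hc, mul_zero]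
    · push Not at hinj
      obtain ⟨p, hp⟩ : T.Nonempty := Finset.card_pos.1 (by omega)
      have e : T = insert p (T.erase p) := (Finset.insert_erase hp).symm
      have hcT : (T.erase p).card = 2 * (m + 1) := by
        rw [Finset.card_erase_of_mem hp]; omega
      let xt : ι → K[X] := fun t => if t = p then X else C (x t)
      set f : K[X] := DD e1 e2 f1 f2 d (m + 1) T xt with hf
      have hdeg : f.natDegree ≤ 3 * (m + 1) + 1 := by
        rw [hf, e]
        apply DD_natDegree _ _ _ _ _ _ he1 he2 hf1 hf2 hd _ _ hcT p (by simp) (by simp [xt])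
        intro t ht
        have : t ≠ p := (Finset.mem_erase.1 ht).1
        simp [xt, this]
      have hdv : ∀ q ∈ T.erase p, (X - C (x q)) ^ 2 ∣ f := by
        intro q hq
        obtain ⟨hqp, hqT⟩ := Finset.mem_erase.1 hq
        have e : T = insert p (insert q ((T.erase p).erase q)) := by
          rw [Finset.insert_erase hq, Finset.insert_erase hp]
        have hp' : p ∉ insert q ((T.erase p).erase q) := by simp [hqp.symm]
        have hq' : q ∉ (T.erase p).erase q := by simp
        have hc : ((T.erase p).erase q).card = 2 * m + 1 := by
          rw [Finset.card_erase_of_mem hq, hcT]; omega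
        have key := DD_dvd (R := K[X]) (C (1 / 2)) (by
          rw [show (2 : K[X]) = C 2 from rfl, ← C_mul]; simp) e1 e2 f1 f2 d m he
          ((T.erase p).erase q) (fun x => IHd _ _ x hc) xt p q hp' hq'
        rw [← e] at key
        simpa [xt, hqp] using key
      have hprod : (∏ q ∈ T.erase p, (X - C (x q)) ^ 2) ∣ f := by
        refine Finset.prod_dvd_of_coprime ?_ hdv
        intro q hq r hr hqr
        refine IsCoprime.pow ?_
        refine isCoprime_X_sub_C_of_isUnit_sub ?_
        rw [isUnit_iff_ne_zero, sub_ne_zero]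
        exact hinj q (Finset.mem_of_mem_erase hq) r (Finset.mem_of_mem_erase hr) hqr
      have hf0 : f = 0 := by
        refine eq_zero_of_dvd_of_natDegree_lt hprod ?_
        rw [natDegree_prod_of_monic _ _ (fun q _ => (monic_X_sub_C _).pow 2)]
        simp only [natDegree_pow, natDegree_X_sub_C, mul_one, Finset.sum_const, hcT, smul_eq_mul]
        omega
      have : f.eval (x p) = DD e1 e2 f1 f2 d (m + 1) T x := by
        rw [← coe_evalRingHom, hf, DD_map]
        congr 1
        funext t
        simp only [xt]
        split_ifs with h
        · subst h; simp
        · simp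
      rw [← this, hf0, eval_zero]

lemma base0 (e1 e2 f1 f2 d : ℕ) (he : e1 = f1) (K : Type) [Field K] (x : ι → K) (p : ι) :
    DD e1 e2 f1 f2 d 0 {p} x = 0 := by
  unfold DD
  rw [← insert_empty_eq p]
  rw [SS_insert _ _ _ _ _ _ _ _ (by simp), SS_insert _ _ _ _ _ _ _ _ (by simp),
    SS_insert _ _ _ _ _ _ _ _ (by simp)]
  simp [Phi, fac, pw_empty, he]

lemma SS_three {R : Type*} [CommRing R] (s b e1 e2 N : ℕ) (x : ι → R) (p q r : ι)
    (h1 : p ∉ ({q, r} : Finset ι)) (h2 : q ∉ ({r} : Finset ι)) :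
    SS s b e1 e2 (N + 2) {p, q, r} x = quad s b e1 e2 N {r} x (x p) (x q) ∅ +
      quad s b e1 e2 N {r} x (x p) (x q) {r} := by
  rw [SS_insert2 _ _ _ _ _ _ _ _ _ h1 h2, ← insert_empty_eq r,
    Finset.sum_powerset_insert (by simp)]
  simp

lemma base1 (e1 e2 f1 f2 d : ℕ)
    (h : (e1, e2, f1, f2, d) ∈ [(0, 1, 0, 0, 0), (0, 2, 0, 1, 0), (1, 2, 1, 1, 0), (1, 1, 1, 0, 1)])
    (K : Type) [Field K] (x : ι → K) (p q r : ι)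
    (h1 : p ∉ ({q, r} : Finset ι)) (h2 : q ∉ ({r} : Finset ι)) :
    DD e1 e2 f1 f2 d 1 {p, q, r} x = 0 := by
  unfold DD
  rw [SS_three _ _ _ _ _ _ _ _ _ h1 h2, SS_three _ _ _ _ _ _ _ _ _ h1 h2,
    SS_three _ _ _ _ _ _ _ _ _ h1 h2]
  simp only [List.mem_cons, Prod.mk.injEq, List.not_mem_nil, or_false] at h
  rcases h with ⟨rfl, rfl, rfl, rfl, rfl⟩ | ⟨rfl, rfl, rfl, rfl, rfl⟩ | ⟨rfl, rfl, rfl, rfl, rfl⟩ |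
    ⟨rfl, rfl, rfl, rfl, rfl⟩ <;> simp [quad, Phi, fac, pw] <;> ring

theorem DD_zero' (e1 e2 f1 f2 d : ℕ)
    (h : (e1, e2, f1, f2, d) ∈ [(0, 1, 0, 0, 0), (0, 2, 0, 1, 0), (1, 2, 1, 1, 0), (1, 1, 1, 0, 1)])
    (m : ℕ) (T : Finset ι) (x : ι → ℝ) (hT : T.card = 2 * m + 1) :
    DD e1 e2 f1 f2 d m T x = 0 := by
  have h' := h
  simp only [List.mem_cons, Prod.mk.injEq, List.not_mem_nil, or_false] at h'
  refine DD_zero e1 e2 f1 f2 d (by omega) (by omega) (by omega) (by omega) (by omega) (by omega)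
    ?_ ?_ m ℝ T x hT
  · intro K _ x p
    exact base0 _ _ _ _ _ (by omega) K x p
  · intro K _ x p q r
    exact base1 _ _ _ _ _ h K x p q r

end PartA2

end NovAux

namespace NovAux

section PartB
variable {ι : Type} [LinearOrder ι]

lemma pw_union {R : Type*} [CommRing R] (w : ι → ι → R) (hw : ∀ p q, w p q = w q p)
    (S C : Finset ι) (hd : Disjoint S C) :
    pw w (S ∪ C) = pw w S * pw w C * ∏ p ∈ S, ∏ q ∈ C, w p q := by
  induction C using Finset.induction_on with
  | empty => simp [pw_empty]
  | insert c C hc IH =>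
    rw [Finset.disjoint_insert_right] at hd
    have h1 : c ∉ S ∪ C := by simp [hd.1, hc]
    rw [Finset.union_insert, pw_insert w hw c _ h1, IH hd.2, pw_insert w hw c _ hc,
      Finset.prod_union hd.2]
    have : ∀ p ∈ S, ∏ q ∈ insert c C, w p q = w c p * ∏ q ∈ C, w p q := by
      intro p _
      rw [Finset.prod_insert hc, hw p c]
    rw [Finset.prod_congr rfl this, Finset.prod_mul_distrib]
    ring

lemma pw_mul {R : Type*} [CommRing R] (w v : ι → ι → R) (C : Finset ι) :
    pw (fun p q => w p q * v p q) C = pw w C * pw v C := by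
  unfold pw
  simp only [← Finset.prod_mul_distrib]
  refine Finset.prod_congr rfl fun p _ => Finset.prod_congr rfl fun q _ => ?_
  split_ifs <;> simp

/-- cross product -/
def XX (x : ι → ℝ) (A B : Finset ι) : ℝ := ∏ p ∈ A, ∏ q ∈ B, (x p + x q)

lemma XX_comm (x : ι → ℝ) (A B : Finset ι) : XX x A B = XX x B A := by
  unfold XX
  rw [Finset.prod_comm]
  simp only [add_comm]

lemma XX_self (x : ι → ℝ) (S : Finset ι) :
    XX x S S = (∏ p ∈ S, 2 * x p) * pw (fun p q => x p + x q) S ^ 2 := by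
  induction S using Finset.induction_on with
  | empty => simp [XX, pw_empty]
  | insert c C hc IH =>
    rw [pw_insert _ (fun p q => add_comm _ _) c _ hc, Finset.prod_insert hc]
    have h : XX x (insert c C) (insert c C) =
      (2 * x c) * (∏ t ∈ C, (x c + x t)) ^ 2 * XX x C C := by
      unfold XX
      rw [Finset.prod_insert hc, Finset.prod_insert hc]
      have : ∀ p ∈ C, ∏ q ∈ insert c C, (x p + x q) = (x c + x p) * ∏ q ∈ C, (x p + x q) := by
        intro p _
        rw [Finset.prod_insert hc, add_comm (x p)]
      rw [Finset.prod_congr rfl this, Finset.prod_mul_distrib]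
      ring
    rw [h, IH]
    ring

/-- summand on the determinant side -/
noncomputable def hL (x a : ι → ℝ) (e1 e2 : ℕ) (I J : Finset ι) : ℝ :=
  pw (kap 0 x) I * pw (kap 0 x) J / XX x I J * (∏ p ∈ I, x p ^ e1 * a p) * ∏ p ∈ J, x p ^ e2 * a p

/-- summand on the `U V` side -/
noncomputable def hU (x a : ι → ℝ) (f : ℕ) (I : Finset ι) : ℝ :=
  pw (kap 0 x) I / pw (fun p q => x p + x q) I * ∏ p ∈ I, x p ^ f * a p

/-- common factor -/
noncomputable def AA (x a : ι → ℝ) (f : ℕ) (S T : Finset ι) : ℝ :=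
  pw (kap 0 x) S ^ 2 * (∏ p ∈ S, ∏ q ∈ T, kap 0 x p q) /
    (pw (fun p q => x p + x q) S ^ 2 * XX x S T * pw (fun p q => x p + x q) T) *
    (∏ p ∈ S, x p ^ f) * (∏ p ∈ S, a p) ^ 2 * ∏ p ∈ T, a p

lemma pw_pos (w : ι → ι → ℝ) (hw : ∀ p q, 0 < w p q) (C : Finset ι) : 0 < pw w C := by
  unfold pw
  refine Finset.prod_pos fun p _ => Finset.prod_pos fun q _ => ?_
  split_ifs
  · exact hw p q
  · exact one_pos

lemma XX_pos (x : ι → ℝ) (hx : ∀ p, 0 < x p) (A B : Finset ι) : 0 < XX x A B :=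
  Finset.prod_pos fun p _ => Finset.prod_pos fun q _ => add_pos (hx p) (hx q)

lemma prod_union2 {R : Type*} [CommRing R] (w : ι → ι → R) (S C D : Finset ι)
    (h : Disjoint C D) : ∏ p ∈ S, ∏ q ∈ C ∪ D, w p q =
      (∏ p ∈ S, ∏ q ∈ C, w p q) * ∏ p ∈ S, ∏ q ∈ D, w p q := by
  rw [← Finset.prod_mul_distrib]
  exact Finset.prod_congr rfl fun p _ => Finset.prod_union h

lemma pwσ_union (x : ι → ℝ) (S C : Finset ι) (hd : Disjoint S C) :
    pw (fun p q => x p + x q) (S ∪ C) = pw (fun p q => x p + x q) S *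
      pw (fun p q => x p + x q) C * XX x S C :=
  pw_union _ (fun p q => add_comm _ _) S C hd

lemma alg1 (kS kC kD zC zD PS PC PD X1 X2 X3 aS aC aD uS uC vS vD : ℝ) (h3 : X3 ≠ 0) :
    kS * kC * zC / (PS * PC * X1) * (uS * aS * (uC * aC)) *
      (kS * kD * zD / (PS * PD * X2) * (vS * aS * (vD * aD))) =
    kS ^ 2 * (zC * zD) / (PS ^ 2 * (X1 * X2) * (PC * PD * X3)) * (uS * vS) * aS ^ 2 * (aC * aD) *
      (kC * kD * X3 * uC * vD) := by
  have h := inv_mul_cancel₀ h3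
  simp only [div_eq_mul_inv, mul_inv]
  calc _ = kS ^ 2 * (zC * zD) * ((PS⁻¹) ^ 2 * (X1⁻¹ * X2⁻¹) * (PC⁻¹ * PD⁻¹)) * (uS * vS) *
        aS ^ 2 * (aC * aD) * (kC * kD * uC * vD) := by ring
    _ = kS ^ 2 * (zC * zD) * ((PS⁻¹) ^ 2 * (X1⁻¹ * X2⁻¹) * (PC⁻¹ * PD⁻¹)) * (uS * vS) *
        aS ^ 2 * (aC * aD) * (kC * kD * uC * vD) * (X3⁻¹ * X3) := by rw [h, mul_one]
    _ = _ := by ring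

lemma alg2 (kS kC kD zC zD PS PC PD X1 X2 X3 aS aC aD uS uC vS vD f y t : ℝ)
    (h5 : PC ≠ 0) (h6 : PD ≠ 0)
    (hy : y ≠ 0) (ht : t ≠ 0) (hf : uS * vS = f * y) :
    t * (kS * kC * zC * (kS * kD * zD) / (y * t * PS ^ 2 * X2 * (X1 * X3)) *
      (uS * aS * (uC * aC)) * (vS * aS * (vD * aD))) =
    kS ^ 2 * (zC * zD) / (PS ^ 2 * (X1 * X2) * (PC * PD * X3)) * f * aS ^ 2 * (aC * aD) *
      (kC * PC * (kD * PD) * uC * vD) := by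
  have g5 := inv_mul_cancel₀ h5
  have g6 := inv_mul_cancel₀ h6
  have gy := inv_mul_cancel₀ hy
  have gt := inv_mul_cancel₀ ht
  simp only [div_eq_mul_inv, mul_inv]
  calc _ = kS ^ 2 * (zC * zD) * ((PS⁻¹) ^ 2 * (X1⁻¹ * X2⁻¹ * X3⁻¹)) * (uS * vS) * y⁻¹ *
        aS ^ 2 * (aC * aD) * (kC * kD * uC * vD) * (t⁻¹ * t) := by ring
    _ = kS ^ 2 * (zC * zD) * ((PS⁻¹) ^ 2 * (X1⁻¹ * X2⁻¹ * X3⁻¹)) * f * (y⁻¹ * y) *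
        aS ^ 2 * (aC * aD) * (kC * kD * uC * vD) := by rw [gt, hf]; ring
    _ = kS ^ 2 * (zC * zD) * ((PS⁻¹) ^ 2 * (X1⁻¹ * X2⁻¹ * X3⁻¹)) * f *
        aS ^ 2 * (aC * aD) * (kC * kD * uC * vD) * (PC⁻¹ * PC) * (PD⁻¹ * PD) := by
          rw [gy, g5, g6]; ring
    _ = _ := by ring

lemma hU_split (x a : ι → ℝ) (hx : ∀ p, 0 < x p) (f1 f2 f : ℕ) (hf : f1 + f2 = f)
    (S C D : Finset ι)
    (hSC : Disjoint S C) (hSD : Disjoint S D) (hCD : Disjoint C D) :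
    hU x a f1 (S ∪ C) * hU x a f2 (S ∪ D) = AA x a f S (C ∪ D) * Phi 0 1 f1 f2 x C D := by
  subst hf
  have n4 := fun C => (pw_pos (fun p q => x p + x q) (fun p q => add_pos (hx p) (hx q)) C).ne'
  have e1 : XX x S (C ∪ D) = XX x S C * XX x S D := prod_union2 _ _ _ _ hCD
  have e2 : ∏ p ∈ C, ∏ q ∈ D, (x p + x q) ^ 1 = XX x C D := by simp only [pow_one, XX]
  have e3 : ∏ p ∈ S, x p ^ (f1 + f2) = (∏ p ∈ S, x p ^ f1) * ∏ p ∈ S, x p ^ f2 := by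
    simp only [pow_add, Finset.prod_mul_distrib]
  unfold hU AA Phi
  rw [e1, e2, e3, pw_union _ (kap_symm 0 x) S C hSC, pw_union _ (kap_symm 0 x) S D hSD,
    pwσ_union x S C hSC, pwσ_union x S D hSD, pwσ_union x C D hCD,
    Finset.prod_union hSC, Finset.prod_union hSD, Finset.prod_union hCD, prod_union2 _ _ _ _ hCD]
  simp only [Finset.prod_mul_distrib]
  exact alg1 _ _ _ _ _ _ _ _ _ _ _ _ _ _ _ _ _ _ (XX_pos x hx C D).ne'

lemma hL_split (x a : ι → ℝ) (hx : ∀ p, 0 < x p) (e1 e2 f : ℕ) (hf : e1 + e2 = f + 1)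
    (S C D : Finset ι)
    (hSC : Disjoint S C) (hSD : Disjoint S D) (hCD : Disjoint C D) :
    2 ^ S.card * hL x a e1 e2 (S ∪ C) (S ∪ D) =
      AA x a f S (C ∪ D) * Phi 1 0 e1 e2 x C D := by
  have n4 := fun C => (pw_pos (fun p q => x p + x q) (fun p q => add_pos (hx p) (hx q)) C).ne'
  have hk : ∀ C, pw (kap 1 x) C = pw (kap 0 x) C * pw (fun p q => x p + x q) C := by
    intro C
    rw [← pw_mul]
    congr 1
    funext p q
    simp [kap]
  have e1' : XX x S (C ∪ D) = XX x S C * XX x S D := prod_union2 _ _ _ _ hCD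
  have e2' : XX x (S ∪ C) (S ∪ D) =
      (∏ p ∈ S, x p) * 2 ^ S.card * pw (fun p q => x p + x q) S ^ 2 * XX x S D *
        (XX x S C * XX x C D) := by
    have : XX x (S ∪ C) (S ∪ D) = XX x S (S ∪ D) * XX x C (S ∪ D) := Finset.prod_union hSC
    rw [this, show XX x S (S ∪ D) = XX x S S * XX x S D from prod_union2 _ _ _ _ hSD,
      show XX x C (S ∪ D) = XX x C S * XX x C D from prod_union2 _ _ _ _ hSD, XX_self,
      XX_comm x C S, Finset.prod_mul_distrib, Finset.prod_const]
    ring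
  have e3 : (∏ p ∈ S, x p ^ e1) * (∏ p ∈ S, x p ^ e2) = (∏ p ∈ S, x p ^ f) * ∏ p ∈ S, x p := by
    rw [← Finset.prod_mul_distrib, ← Finset.prod_mul_distrib]
    refine Finset.prod_congr rfl fun p _ => ?_
    rw [← pow_add, hf, pow_succ]
  have nx : ∏ p ∈ S, x p ≠ 0 := (Finset.prod_pos fun p _ => hx p).ne'
  unfold hL AA Phi
  rw [e1', e2', hk, hk]
  rw [pw_union _ (kap_symm 0 x) S C hSC, pw_union _ (kap_symm 0 x) S D hSD,
    pwσ_union x C D hCD,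
    Finset.prod_union hSC, Finset.prod_union hSD, Finset.prod_union hCD, prod_union2 _ _ _ _ hCD]
  simp only [Finset.prod_mul_distrib, pow_zero, Finset.prod_const_one, mul_one]
  exact alg2 _ _ _ _ _ _ _ _ _ _ _ _ _ _ _ _ _ _ _ _ _ (n4 C) (n4 D) nx (by positivity) e3

variable [Fintype ι]

lemma sum_pairs (f : Finset ι → Finset ι → ℝ) :
    ∑ I : Finset ι, ∑ J : Finset ι, f I J =
      ∑ S : Finset ι, ∑ T ∈ (Sᶜ).powerset, ∑ C ∈ T.powerset, f (S ∪ C) (S ∪ (T \ C)) := by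
  rw [← Finset.sum_product']
  simp only [Finset.sum_sigma']
  refine Finset.sum_nbij' (fun IJ => ⟨IJ.1 ∩ IJ.2, (IJ.1 \ IJ.2) ∪ (IJ.2 \ IJ.1), IJ.1 \ IJ.2⟩)
    (fun z => (z.1 ∪ z.2.2, z.1 ∪ (z.2.1 \ z.2.2))) ?_ ?_ ?_ ?_ ?_
  · rintro ⟨I, J⟩ -
    simp only [Finset.mem_sigma, Finset.mem_univ, Finset.mem_powerset, true_and]
    refine ⟨fun t => ?_, fun t => ?_⟩
    · simp; tauto
    · simp; tauto
  · simp
  · rintro ⟨I, J⟩ -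
    simp only [Prod.mk.injEq]
    refine ⟨?_, ?_⟩ <;> ext t <;> simp <;> tauto
  · rintro ⟨S, T, C⟩ h
    simp only [Finset.mem_sigma, Finset.mem_univ, Finset.mem_powerset, true_and] at h
    obtain ⟨h1, h2⟩ := h
    have h1' : ∀ t, t ∈ T → t ∉ S := fun t ht => by simpa using h1 ht
    have h2' : ∀ t, t ∈ C → t ∈ T := fun t ht => h2 ht
    simp only [Sigma.mk.injEq, heq_eq_eq]
    refine ⟨?_, ?_, ?_⟩ <;> ext t <;> have := h1' t <;> have := h2' t <;> simp <;> tauto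
  · rintro ⟨I, J⟩ -
    simp only
    congr 1 <;> ext t <;> simp <;> tauto

theorem main_sum (x a : ι → ℝ) (hx : ∀ p, 0 < x p) (e1 e2 f1 f2 d : ℕ)
    (h : (e1, e2, f1, f2, d) ∈ [(0, 1, 0, 0, 0), (0, 2, 0, 1, 0), (1, 2, 1, 1, 0), (1, 1, 1, 0, 1)])
    (K : ℕ) :
    ∑ I : Finset ι, ∑ J : Finset ι,
      ((if I.card = K + 1 ∧ J.card = K then 2 ^ K * hL x a e1 e2 I J else 0) -
       (if I.card = K + 1 ∧ J.card = K then hU x a f1 I * hU x a f2 J else 0) +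
       d * (if I.card = K + 2 ∧ J.card + 1 = K then hU x a f2 I * hU x a f1 J else 0)) = 0 := by
  rw [sum_pairs]
  refine Finset.sum_eq_zero fun S _ => Finset.sum_eq_zero fun T hT => ?_
  have hST : Disjoint S T := by
    rw [Finset.disjoint_right]
    intro t ht
    simpa using Finset.mem_powerset.1 hT ht
  have he : e1 + e2 = f1 + f2 + 1 := by
    simp only [List.mem_cons, Prod.mk.injEq, List.not_mem_nil, or_false] at h
    omega
  have hcc : ∀ C ∈ T.powerset, (S ∪ C).card = S.card + C.card ∧
      (S ∪ (T \ C)).card = S.card + (T.card - C.card) ∧ C.card ≤ T.card := by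
    intro C hC
    have hC' := Finset.mem_powerset.1 hC
    refine ⟨Finset.card_union_of_disjoint (hST.mono_right hC'), ?_, Finset.card_le_card hC'⟩
    rw [Finset.card_union_of_disjoint (hST.mono_right Finset.sdiff_subset),
      Finset.card_sdiff_of_subset hC']
  by_cases hm : S.card ≤ K ∧ T.card = 2 * (K - S.card) + 1
  · obtain ⟨hm1, hm2⟩ := hm
    obtain ⟨m, rfl⟩ := Nat.exists_eq_add_of_le hm1
    rw [Nat.add_sub_cancel_left] at hm2
    have hD := DD_zero' e1 e2 f1 f2 d h m T x hm2
    have : ∀ C ∈ T.powerset,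
      ((if (S ∪ C).card = S.card + m + 1 ∧ (S ∪ (T \ C)).card = S.card + m then
          2 ^ (S.card + m) * hL x a e1 e2 (S ∪ C) (S ∪ (T \ C)) else 0) -
       (if (S ∪ C).card = S.card + m + 1 ∧ (S ∪ (T \ C)).card = S.card + m then
          hU x a f1 (S ∪ C) * hU x a f2 (S ∪ (T \ C)) else 0) +
       d * (if (S ∪ C).card = S.card + m + 2 ∧ (S ∪ (T \ C)).card + 1 = S.card + m then
          hU x a f2 (S ∪ C) * hU x a f1 (S ∪ (T \ C)) else 0)) =
      AA x a (f1 + f2) S T * (2 ^ m * (if C.card = m + 1 then Phi 1 0 e1 e2 x C (T \ C) else 0) -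
        (if C.card = m + 1 then Phi 0 1 f1 f2 x C (T \ C) else 0) +
        d * (if C.card = m + 2 then Phi 0 1 f2 f1 x C (T \ C) else 0)) := by
      intro C hC
      obtain ⟨h1, h2, h3⟩ := hcc C hC
      have hC' := Finset.mem_powerset.1 hC
      have c1 : (S ∪ C).card = S.card + m + 1 ∧ (S ∪ (T \ C)).card = S.card + m ↔
        C.card = m + 1 := by omega
      have c2 : (S ∪ C).card = S.card + m + 2 ∧ (S ∪ (T \ C)).card + 1 = S.card + m ↔
        C.card = m + 2 := by omega
      simp only [c1, c2]
      have hU1 : C ∪ T \ C = T := Finset.union_sdiff_of_subset hC'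
      have d1 := hST.mono_right hC'
      have d2 : Disjoint S (T \ C) := hST.mono_right Finset.sdiff_subset
      have d3 : Disjoint C (T \ C) := Finset.disjoint_sdiff
      have l1 := hL_split x a hx e1 e2 (f1 + f2) he S C (T \ C) d1 d2 d3
      have l2 := hU_split x a hx f1 f2 (f1 + f2) rfl S C (T \ C) d1 d2 d3
      have l3 := hU_split x a hx f2 f1 (f1 + f2) (add_comm _ _) S C (T \ C) d1 d2 d3
      rw [hU1] at l1 l2 l3
      rw [l2, l3, pow_add, mul_right_comm, l1]
      split_ifs <;> ring
    rw [Finset.sum_congr rfl this, ← Finset.mul_sum]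
    unfold DD SS at hD
    rw [Finset.sum_add_distrib, Finset.sum_sub_distrib, ← Finset.mul_sum, ← Finset.mul_sum, hD,
      mul_zero]
  · refine Finset.sum_eq_zero fun C hC => ?_
    obtain ⟨h1, h2, h3⟩ := hcc C hC
    rw [if_neg (by omega), if_neg (by omega), if_neg (by omega)]
    simp

end PartB

end NovAux

namespace NovAux

section PartC
open Matrix

lemma det_mul_expand {k : ℕ} {ι : Type} [Fintype ι] [DecidableEq ι]
    (A : Matrix (Fin k) ι ℝ) (B : Matrix ι (Fin k) ℝ) :
    (A * B).det = ∑ f : Fin k → ι, (∏ r, A r (f r)) * (B.submatrix f id).det := by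
  have h1 : (A * B).det = detRowAlternating (fun r => ∑ p, A r p • B p) := by
    change (A * B).det = Matrix.det (fun r => ∑ p, A r p • B p)
    congr 1
    ext r s
    simp [Matrix.mul_apply]
  rw [h1]
  have h2 := MultilinearMap.map_sum
    (detRowAlternating (R := ℝ) (n := Fin k)).toMultilinearMap (fun r p => A r p • B p)
  simp only [AlternatingMap.coe_multilinearMap] at h2
  rw [h2]
  refine Finset.sum_congr rfl fun f _ => ?_
  have h3 := MultilinearMap.map_smul_univ
    (detRowAlternating (R := ℝ) (n := Fin k)).toMultilinearMap (fun r => A r (f r)) (fun r => B (f r))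
  simp only [AlternatingMap.coe_multilinearMap, smul_eq_mul] at h3
  rw [h3]
  rfl

lemma cauchyBinet {k : ℕ} {ι : Type} [Fintype ι] [DecidableEq ι]
    (A : Matrix (Fin k) ι ℝ) (B : Matrix ι (Fin k) ℝ) :
    (k.factorial : ℝ) * (A * B).det =
      ∑ f : Fin k → ι, (A.submatrix id f).det * (B.submatrix f id).det := by
  simp only [Matrix.det_apply' (A.submatrix id _), Finset.sum_mul]
  rw [Finset.sum_comm]
  have : ∀ σ : Equiv.Perm (Fin k), ∑ f : Fin k → ι,
      ((Equiv.Perm.sign σ : ℤ) : ℝ) * (∏ i, A.submatrix id f (σ i) i) * (B.submatrix f id).det =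
      (A * B).det := by
    intro σ
    rw [det_mul_expand]
    rw [← Equiv.sum_comp (Equiv.arrowCongr σ.symm (Equiv.refl ι))]
    refine Finset.sum_congr rfl fun f _ => ?_
    have e1 : (Equiv.arrowCongr σ.symm (Equiv.refl ι)) f = f ∘ σ := by
      funext r; simp [Equiv.arrowCongr]
    rw [e1]
    have e2 : (B.submatrix (f ∘ σ) id).det =
        ((Equiv.Perm.sign σ : ℤ) : ℝ) * (B.submatrix f id).det := by
      rw [← Matrix.det_permute]
      rfl
    rw [e2]
    have e3 : ∏ i, A.submatrix id (f ∘ σ) (σ i) i = ∏ r, A r (f r) := by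
      simp only [submatrix_apply, id, Function.comp]
      exact Equiv.prod_comp σ (fun r => A r (f r))
    rw [e3]
    have e4 : ((Equiv.Perm.sign σ : ℤ) : ℝ) * ((Equiv.Perm.sign σ : ℤ) : ℝ) = 1 := by
      rw [← Int.cast_mul, ← Units.val_mul, Int.units_mul_self]; simp
    linear_combination (∏ r, A r (f r)) * (B.submatrix f id).det * e4
  rw [Finset.sum_congr rfl fun σ _ => this σ, Finset.sum_const, Finset.card_univ,
    Fintype.card_perm, Fintype.card_fin, nsmul_eq_mul]

/-- matrix with an extra first column -/
def bord {k : ℕ} (v : Fin (k + 1) → ℝ) (M : Matrix (Fin (k + 1)) (Fin k) ℝ) :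
    Matrix (Fin (k + 1)) (Fin (k + 1)) ℝ :=
  Matrix.of fun r s => Fin.cases (v r) (fun s => M r s) s

lemma bord_det {k : ℕ} (v : Fin (k + 1) → ℝ) (M : Matrix (Fin (k + 1)) (Fin k) ℝ) :
    (bord v M).det = ∑ i : Fin (k + 1), (-1) ^ (i : ℕ) * v i * (M.submatrix i.succAbove id).det := by
  rw [Matrix.det_succ_column_zero]
  rfl

lemma bord_cauchyBinet {k : ℕ} {ι : Type} [Fintype ι] [DecidableEq ι]
    (v : Fin (k + 1) → ℝ) (A : Matrix (Fin (k + 1)) ι ℝ) (B : Matrix ι (Fin k) ℝ) :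
    (k.factorial : ℝ) * (bord v (A * B)).det =
      ∑ g : Fin k → ι, (bord v (A.submatrix id g)).det * (B.submatrix g id).det := by
  simp only [bord_det, Finset.mul_sum, Finset.sum_mul]
  rw [Finset.sum_comm]
  refine Finset.sum_congr rfl fun i _ => ?_
  have := cauchyBinet (A.submatrix i.succAbove id) B
  have e : (A * B).submatrix i.succAbove id = A.submatrix i.succAbove id * B := by
    ext r s; simp [Matrix.mul_apply]
  rw [e, mul_left_comm, this, Finset.mul_sum]
  refine Finset.sum_congr rfl fun g _ => ?_
  rw [Matrix.submatrix_submatrix, Matrix.submatrix_submatrix]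
  simp only [Function.comp_id, Function.id_comp]
  ring

lemma van_succ {k : ℕ} (x : Fin (k + 1) → ℝ) :
    (vandermonde x).det = (∏ i : Fin k, (x i.succ - x 0)) *
      (vandermonde (fun i : Fin k => x i.succ)).det := by
  rw [det_vandermonde, det_vandermonde, Fin.prod_univ_succ, Fin.prod_Ioi_zero]
  simp only [Fin.prod_Ioi_succ]

lemma cauchy_det (k : ℕ) : ∀ (x y : Fin k → ℝ), (∀ i j, x i + y j ≠ 0) →
    (Matrix.of fun i j => 1 / (x i + y j)).det * ∏ i, ∏ j, (x i + y j) =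
      (vandermonde x).det * (vandermonde y).det := by
  induction k with
  | zero => intro x y _; simp
  | succ k IH =>
    intro x y h
    have IH' := IH (fun i => x i.succ) (fun i => y i.succ) (fun i j => h _ _)
    -- factor columns and rows
    let N : Matrix (Fin (k + 1)) (Fin (k + 1)) ℝ :=
      Matrix.of fun i j => Fin.cases (1 / (x 0 + y j)) (fun i => (x 0 - x i.succ) / ((x i.succ + y j) * (x 0 + y j))) i
    have s1 : (Matrix.of fun i j => 1 / (x i + y j)).det = N.det := by
      refine Matrix.det_eq_of_forall_row_eq_smul_add_const (fun i => if i = 0 then 0 else 1) 0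
        (by simp) ?_
      intro i j
      refine Fin.cases ?_ (fun i => ?_) i
      · simp [N]
      · have h1 := h i.succ j
        have h2 := h 0 j
        simp only [of_apply, N, Fin.cases_succ, Fin.cases_zero, Fin.succ_ne_zero, if_false]
        field_simp
        ring
    let P : Matrix (Fin (k + 1)) (Fin (k + 1)) ℝ :=
      Matrix.of fun i j => Fin.cases 1 (fun i => 1 / (x i.succ + y j)) i
    have s2 : N.det = (∏ i : Fin k, (x 0 - x i.succ)) * ((∏ j, 1 / (x 0 + y j)) * P.det) := by
      rw [← Matrix.det_mul_row]
      have : (∏ i : Fin k, (x 0 - x i.succ)) =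
        ∏ i : Fin (k + 1), (Fin.cases 1 (fun i => x 0 - x i.succ) i : ℝ) := by
        rw [Fin.prod_univ_succ]; simp
      rw [this, ← Matrix.det_mul_column]
      congr 1
      ext i j
      refine Fin.cases ?_ (fun i => ?_) i
      · simp [N, P]
      · have h1 := h i.succ j
        have h2 := h 0 j
        simp only [of_apply, N, P, Fin.cases_succ]
        field_simp
    let Q : Matrix (Fin (k + 1)) (Fin (k + 1)) ℝ :=
      Matrix.of fun i j => Fin.cases (P i 0) (fun j => P i j.succ - P i 0) j
    have s3 : P.det = Q.det := by
      rw [← Matrix.det_transpose P, ← Matrix.det_transpose Q]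
      refine Matrix.det_eq_of_forall_row_eq_smul_add_const (fun i => if i = 0 then 0 else 1) 0
        (by simp) ?_
      intro j i
      refine Fin.cases ?_ (fun j => ?_) j
      · simp [Q]
      · simp [Q]
    have s4 : Q.det = (∏ j : Fin k, (y 0 - y j.succ)) * ((∏ i : Fin k, 1 / (x i.succ + y 0)) *
        (Matrix.of fun i j : Fin k => 1 / (x i.succ + y j.succ)).det) := by
      rw [Matrix.det_succ_row_zero, Fin.sum_univ_succ]
      have z : ∀ j : Fin k, Q 0 j.succ = 0 := by
        intro j; simp [Q, P]
      simp only [z, mul_zero, zero_mul, Finset.sum_const_zero, add_zero]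
      have z0 : Q 0 0 = 1 := by simp [Q, P]
      rw [z0, ← Matrix.det_mul_column, ← Matrix.det_mul_row]
      simp only [Fin.val_zero, pow_zero, one_mul]
      congr 1
      ext i j
      have h1 := h i.succ j.succ
      have h2 := h i.succ 0
      simp only [submatrix_apply, Fin.succAbove_zero, of_apply, Q, P, Fin.cases_succ]
      field_simp
      ring
    rw [s1, s2, s3, s4, van_succ x, van_succ y]
    have p1 : ∏ i, ∏ j, (x i + y j) = (∏ j, (x 0 + y j)) * ((∏ i : Fin k, (x i.succ + y 0)) *
        ∏ i : Fin k, ∏ j : Fin k, (x i.succ + y j.succ)) := by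
      rw [Fin.prod_univ_succ, ← Finset.prod_mul_distrib]
      congr 1
      exact Finset.prod_congr rfl fun i _ => Fin.prod_univ_succ _
    rw [p1]
    have q1 : (∏ j, 1 / (x 0 + y j)) * ∏ j, (x 0 + y j) = 1 := by
      rw [← Finset.prod_mul_distrib]
      exact Finset.prod_eq_one fun j _ => one_div_mul_cancel (h _ _)
    have q2 : (∏ i : Fin k, 1 / (x i.succ + y 0)) * ∏ i : Fin k, (x i.succ + y 0) = 1 := by
      rw [← Finset.prod_mul_distrib]
      exact Finset.prod_eq_one fun j _ => one_div_mul_cancel (h _ _)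
    have q3 : (∏ i : Fin k, (x 0 - x i.succ)) * (∏ i : Fin k, (y 0 - y i.succ)) =
        (∏ i : Fin k, (x i.succ - x 0)) * (∏ i : Fin k, (y i.succ - y 0)) := by
      rw [← Finset.prod_mul_distrib, ← Finset.prod_mul_distrib]
      exact Finset.prod_congr rfl fun j _ => by ring
    calc _ = ((∏ i : Fin k, (x 0 - x i.succ)) * (∏ i : Fin k, (y 0 - y i.succ))) *
          ((∏ j, 1 / (x 0 + y j)) * ∏ j, (x 0 + y j)) *
          ((∏ i : Fin k, 1 / (x i.succ + y 0)) * ∏ i : Fin k, (x i.succ + y 0)) *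
          ((Matrix.of fun i j : Fin k => 1 / (x i.succ + y j.succ)).det *
            ∏ i : Fin k, ∏ j : Fin k, (x i.succ + y j.succ)) := by ring
      _ = _ := by rw [q1, q2, q3, IH']; ring

lemma van_sq {k : ℕ} (x : Fin k → ℝ) :
    (vandermonde x).det ^ 2 = pw (kap 0 x) Finset.univ := by
  rw [det_vandermonde, ← Finset.prod_pow]
  unfold pw
  refine Finset.prod_congr rfl fun i _ => ?_
  rw [← Finset.prod_pow, ← Finset.prod_filter]
  have : Finset.univ.filter (fun j => i < j) = Finset.Ioi i := by ext; simp
  rw [this]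
  refine Finset.prod_congr rfl fun j _ => ?_
  simp only [kap]
  ring

lemma pw_image {ι κ : Type} [LinearOrder ι] [LinearOrder κ] {R : Type*} [CommRing R]
    (w : ι → ι → R) (hw : ∀ p q, w p q = w q p)
    (f : κ → ι) (hf : Function.Injective f) (C : Finset κ) :
    pw w (C.image f) = pw (fun p q => w (f p) (f q)) C := by
  induction C using Finset.induction_on with
  | empty => simp [pw_empty]
  | insert c C hc IH =>
    rw [Finset.image_insert, pw_insert w hw _ _ (by simpa [hf.eq_iff] using hc),
      pw_insert _ (fun p q => hw _ _) _ _ hc, IH, Finset.prod_image (fun _ _ _ _ h => hf h)]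

lemma sum_tuples {ι : Type} [Fintype ι] [DecidableEq ι] (k : ℕ) (H : Finset ι → ℝ)
    (F : (Fin k → ι) → ℝ) (h1 : ∀ f, Function.Injective f → F f = H (Finset.univ.image f))
    (h2 : ∀ f, ¬ Function.Injective f → F f = 0) :
    ∑ f, F f = k.factorial * ∑ I : Finset ι, if I.card = k then H I else 0 := by
  rw [← Finset.sum_fiberwise (s := Finset.univ) (g := fun f : Fin k → ι => Finset.univ.image f),
    Finset.mul_sum]
  refine Finset.sum_congr rfl fun I _ => ?_
  have e : ∀ f ∈ Finset.univ.filter (fun f : Fin k → ι => Finset.univ.image f = I),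
      F f = if Function.Injective f then H I else 0 := by
    intro f hf
    have hf' := (Finset.mem_filter.1 hf).2
    split_ifs with hi
    · rw [h1 f hi, hf']
    · exact h2 f hi
  rw [Finset.sum_congr rfl e, ← Finset.sum_filter, Finset.sum_const, nsmul_eq_mul]
  split_ifs with hI
  · congr 2
    have : Fintype.card (Fin k ≃ I) = k.factorial := by
      rw [Fintype.card_equiv (Fintype.equivOfCardEq (by simp [hI]))]; simp
    rw [← this, ← Finset.card_univ]
    symm
    refine Finset.card_bij (fun e _ r => (e r : ι)) ?_ ?_ ?_
    · intro e _
      simp only [Finset.mem_filter, Finset.mem_univ, true_and]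
      refine ⟨?_, fun r s h => e.injective (Subtype.ext h)⟩
      ext t
      simp only [Finset.mem_image, Finset.mem_univ, true_and]
      constructor
      · rintro ⟨r, rfl⟩; exact (e r).2
      · intro ht; exact ⟨e.symm ⟨t, ht⟩, by simp⟩
    · intro e _ e' _ h
      ext r
      exact congrFun h r
    · intro f hf
      simp only [Finset.mem_filter, Finset.mem_univ, true_and] at hf
      obtain ⟨hf1, hf2⟩ := hf
      have hm : ∀ r, f r ∈ I := fun r => hf1 ▸ Finset.mem_image_of_mem f (Finset.mem_univ r)
      refine ⟨Equiv.ofBijective (fun r => (⟨f r, hm r⟩ : I)) ⟨?_, ?_⟩, Finset.mem_univ _, ?_⟩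
      · intro r s h
        exact hf2 (congrArg Subtype.val h)
      · rintro ⟨t, ht⟩
        rw [← hf1] at ht
        obtain ⟨r, -, hr⟩ := Finset.mem_image.1 ht
        exact ⟨r, Subtype.ext hr⟩
      · rfl
  · rw [mul_zero]
    have : (Finset.univ.filter (fun f : Fin k → ι => Finset.univ.image f = I)).filter
        (fun f => Function.Injective f) = ∅ := by
      rw [Finset.eq_empty_iff_forall_notMem]
      intro f hf
      simp only [Finset.mem_filter, Finset.mem_univ, true_and] at hf
      apply hI
      rw [← hf.1, Finset.card_image_of_injective _ hf.2]
      simp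
    rw [this]
    simp

lemma van_noninj {ι : Type} {k : ℕ} (x : ι → ℝ) (f : Fin k → ι) (hf : ¬ Function.Injective f) :
    (vandermonde (fun r => x (f r))).det = 0 := by
  rw [Function.not_injective_iff] at hf
  obtain ⟨a, b, hab, hne⟩ := hf
  rw [det_vandermonde_eq_zero_iff]
  exact ⟨a, b, by simp [hab], hne⟩

/-- tuple version of `hL` -/
noncomputable def tL {ι : Type} (x a : ι → ℝ) (e1 e2 : ℕ) {k l : ℕ} (f : Fin k → ι)
    (g : Fin l → ι) : ℝ :=
  (vandermonde (fun r => x (f r))).det ^ 2 * (vandermonde (fun r => x (g r))).det ^ 2 /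
    (∏ r, ∏ s, (x (f r) + x (g s))) * (∏ r, x (f r) ^ e1 * a (f r)) * ∏ s, x (g s) ^ e2 * a (g s)

lemma tL_sum {ι : Type} [Fintype ι] [LinearOrder ι] (x a : ι → ℝ) (e1 e2 k l : ℕ) :
    ∑ f : Fin k → ι, ∑ g : Fin l → ι, tL x a e1 e2 f g =
      k.factorial * l.factorial * ∑ I : Finset ι, ∑ J : Finset ι,
        if I.card = k ∧ J.card = l then hL x a e1 e2 I J else 0 := by
  have inner : ∀ f : Fin k → ι, Function.Injective f →
      ∑ g : Fin l → ι, tL x a e1 e2 f g =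
      l.factorial * ∑ J : Finset ι, if J.card = l then hL x a e1 e2 (Finset.univ.image f) J else 0 := by
    intro f hf
    refine sum_tuples l _ _ ?_ ?_
    · intro g hg
      unfold tL hL XX
      rw [van_sq, van_sq, pw_image _ (kap_symm 0 x) f hf, pw_image _ (kap_symm 0 x) g hg,
        Finset.prod_image (fun _ _ _ _ h => hf h), Finset.prod_image (fun _ _ _ _ h => hf h),
        Finset.prod_image (fun _ _ _ _ h => hg h)]
      have : ∀ r : Fin k, ∏ q ∈ Finset.univ.image g, (x (f r) + x q) =
          ∏ s, (x (f r) + x (g s)) := fun r => Finset.prod_image (fun _ _ _ _ h => hg h)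
      simp only [this]
      rfl
    · intro g hg
      unfold tL
      rw [van_noninj x g hg]
      simp
  rw [sum_tuples k (fun I => l.factorial * ∑ J : Finset ι, if J.card = l then hL x a e1 e2 I J else 0)
    _ inner, mul_assoc]
  · congr 1
    rw [Finset.mul_sum]
    refine Finset.sum_congr rfl fun I _ => ?_
    split_ifs with h
    · simp [h]
    · simp [h]
  · intro f hf
    refine Finset.sum_eq_zero fun g _ => ?_
    unfold tL
    rw [van_noninj x f hf]
    simp

end PartC

end NovAux

namespace NovAux

section PartD
open Matrix

lemma bord_cauchy {ι : Type} (ζ : ι → ℝ) (hζ0 : ∀ p, 0 < ζ p) (K : ℕ)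
    (f : Fin (K + 1) → ι) (g : Fin K → ι) :
    (bord (fun r => 1 / ζ (f r)) (Matrix.of fun r s => 1 / (ζ (f r) + ζ (g s)))).det *
      ((∏ r, ζ (f r)) * ∏ r, ∏ s, (ζ (f r) + ζ (g s))) =
      (vandermonde (fun r => ζ (f r))).det * ((∏ s, ζ (g s)) *
        (vandermonde (fun r => ζ (g r))).det) := by
  have h := cauchy_det (K + 1) (fun r => ζ (f r)) (Fin.cons 0 (fun s => ζ (g s))) (by
    intro i j
    refine Fin.cases ?_ (fun j => ?_) j
    · simpa using (hζ0 (f i)).ne'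
    · simpa using (add_pos (hζ0 (f i)) (hζ0 (g j))).ne')
  rw [van_succ (Fin.cons 0 (fun s => ζ (g s)) : Fin (K + 1) → ℝ)] at h
  simp only [Fin.cons_succ, Fin.cons_zero, sub_zero, Fin.prod_univ_succ (n := K) (fun j : Fin (K + 1) =>
    (ζ (f _) + (Fin.cons 0 (fun s => ζ (g s)) : Fin (K + 1) → ℝ) j)), add_zero,
    Finset.prod_mul_distrib] at h
  rw [← h]
  congr 2
  ext r s
  refine Fin.cases ?_ (fun s => ?_) s
  · simp [bord]
  · simp [bord]

lemma Gdet_eq (n : ℕ) (ζ a : Fin n → ℝ) (i j k : ℤ) (N : ℕ) (h : k.toNat = N) (hk : ¬ k < 1) :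
    Gdet n ζ a i j k = Matrix.det (Matrix.of fun r s : Fin N =>
    if (s : ℕ) = 0 then alphaM n ζ a (i - 1 + ((r : ℕ) : ℤ))
    else Imom n ζ a (i + ((r : ℕ) : ℤ)) (j + (((s : ℕ) - 1 : ℕ) : ℤ))) := by
  subst h
  rw [Gdet, if_neg hk]

lemma Gdet_tuples (n : ℕ) (ζ a : Fin n → ℝ) (hζ0 : ∀ p, 0 < ζ p) (e1 j K : ℕ) :
    ((K + 1).factorial : ℝ) * K.factorial * Gdet n ζ a ((e1 : ℤ) + 1) j ((K : ℤ) + 1) =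
      ∑ f : Fin (K + 1) → Fin n, ∑ g : Fin K → Fin n, tL ζ a e1 (j + 1) f g := by
  rw [Gdet_eq n ζ a _ _ _ (K + 1) (by omega) (by omega)]
  let A : Matrix (Fin (K + 1)) (Fin n) ℝ := Matrix.of fun r p => (ζ p ^ (e1 + 1) * a p) * ζ p ^ (r : ℕ)
  let Kc : Matrix (Fin n) (Fin n) ℝ := Matrix.of fun p q => 1 / (ζ p + ζ q)
  let D : Matrix (Fin n) (Fin K) ℝ := Matrix.of fun q s => (ζ q ^ j * a q) * ζ q ^ (s : ℕ)
  let B : Matrix (Fin n) (Fin (K + 1)) ℝ := Matrix.of fun p s =>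
    Fin.cases (1 / ζ p) (fun s => (Kc * D) p s) s
  have hM : (Matrix.of fun r s : Fin (K + 1) =>
      if (s : ℕ) = 0 then alphaM n ζ a ((e1 : ℤ) + 1 - 1 + ((r : ℕ) : ℤ))
      else Imom n ζ a ((e1 : ℤ) + 1 + ((r : ℕ) : ℤ)) ((j : ℤ) + (((s : ℕ) - 1 : ℕ) : ℤ))) = A * B := by
    ext r s
    rw [Matrix.mul_apply]
    refine Fin.cases ?_ (fun s => ?_) s
    · simp only [of_apply, Fin.val_zero, if_true, alphaM, A, B, Fin.cases_zero]
      refine Finset.sum_congr rfl fun p _ => ?_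
      have := (hζ0 p).ne'
      rw [add_sub_cancel_right, ← Nat.cast_add, zpow_natCast, pow_add, pow_add]
      field_simp
    · simp only [of_apply, Fin.val_succ, Nat.add_eq_zero_iff, one_ne_zero, and_false, if_false,
        Nat.add_sub_cancel, Imom, A, B, Fin.cases_succ, Matrix.mul_apply, Kc, D, Finset.mul_sum]
      refine Finset.sum_congr rfl fun p _ => Finset.sum_congr rfl fun q _ => ?_
      rw [← Nat.cast_add, zpow_natCast, ← Nat.cast_succ, ← Nat.cast_add, zpow_natCast,
        pow_add, pow_add, Nat.succ_eq_add_one]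
      ring
  rw [hM, mul_comm ((K + 1).factorial : ℝ), mul_assoc, cauchyBinet, Finset.mul_sum]
  refine Finset.sum_congr rfl fun f _ => ?_
  have hB : B.submatrix f id = bord (fun r => 1 / ζ (f r)) (Kc.submatrix f id * D) := by
    ext r s
    refine Fin.cases ?_ (fun s => ?_) s
    · simp [B, bord]
    · simp [B, bord, Matrix.mul_apply]
  have hA : (A.submatrix id f).det = (∏ r, ζ (f r) ^ (e1 + 1) * a (f r)) *
      (vandermonde (fun r => ζ (f r))).det := by
    rw [← Matrix.det_transpose (vandermonde _), ← Matrix.det_mul_row]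
    rfl
  rw [hA, hB, mul_left_comm, bord_cauchyBinet, Finset.mul_sum]
  refine Finset.sum_congr rfl fun g _ => ?_
  have hD : (D.submatrix g id).det = (∏ r, ζ (g r) ^ j * a (g r)) *
      (vandermonde (fun r => ζ (g r))).det := by
    rw [← Matrix.det_mul_column]
    rfl
  rw [hD, Matrix.submatrix_submatrix]
  have hc := bord_cauchy ζ hζ0 K f g
  have hb : (Kc.submatrix (f ∘ id) (id ∘ g)) = Matrix.of fun r s => 1 / (ζ (f r) + ζ (g s)) := rfl
  rw [hb]
  have n1 : ∏ r, ζ (f r) ≠ 0 := (Finset.prod_pos fun r _ => hζ0 _).ne'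
  have n2 : ∏ r, ∏ s, (ζ (f r) + ζ (g s)) ≠ 0 :=
    (Finset.prod_pos fun r _ => Finset.prod_pos fun s _ => add_pos (hζ0 _) (hζ0 _)).ne'
  rw [← eq_div_iff (mul_ne_zero n1 n2)] at hc
  rw [hc]
  unfold tL
  simp only [pow_succ (ζ _) e1, pow_succ (ζ _) j, Finset.prod_mul_distrib]
  generalize ∏ r, ∏ s, (ζ (f r) + ζ (g s)) = X at *
  generalize ∏ r, ζ (f r) = Y at *
  field_simp

/-- `U`/`V` sums -/
noncomputable def UU {ι : Type} [LinearOrder ι] [Fintype ι] (x a : ι → ℝ) (f N : ℕ) : ℝ :=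
  ∑ I : Finset ι, if I.card = N then hU x a f I else 0

lemma UU_eq (n : ℕ) (ζ a : Fin n → ℝ) (f N : ℕ) :
    (∑ I ∈ Finset.powersetCard N (Finset.univ : Finset (Fin n)),
      DeltaI n ζ I ^ 2 / GammaI n ζ I * ∏ j ∈ I, ζ j ^ f * a j) = UU ζ a f N := by
  unfold UU
  rw [← Finset.sum_filter]
  have : Finset.powersetCard N (Finset.univ : Finset (Fin n)) =
      Finset.univ.filter (fun I => I.card = N) := by
    ext I; simp [Finset.mem_powersetCard]
  rw [this]
  refine Finset.sum_congr rfl fun I _ => ?_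
  unfold hU
  congr 2
  · unfold DeltaI pw
    rw [← Finset.prod_pow]
    refine Finset.prod_congr rfl fun p _ => ?_
    rw [← Finset.prod_pow]
    refine Finset.prod_congr rfl fun q _ => ?_
    simp only [kap]
    split_ifs <;> ring
  · unfold GammaI pw
    simp only [add_comm]

lemma UU_zero {ι : Type} [LinearOrder ι] [Fintype ι] (x a : ι → ℝ) (f N : ℕ)
    (h : Fintype.card ι < N) : UU x a f N = 0 := by
  unfold UU
  refine Finset.sum_eq_zero fun I _ => ?_
  rw [if_neg]
  have := Finset.card_le_univ I
  omega

lemma Usum_eq (n : ℕ) (ζ a : Fin n → ℝ) (N : ℕ) (k : ℤ) (hk : k = N) :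
    Usum n ζ a k = UU ζ a 0 N := by
  subst hk
  unfold Usum
  split_ifs with h
  · rw [UU_zero]; simp; omega
  · rw [← UU_eq]; simp

lemma Vsum_eq (n : ℕ) (ζ a : Fin n → ℝ) (N : ℕ) (k : ℤ) (hk : k = N) :
    Vsum n ζ a k = UU ζ a 1 N := by
  subst hk
  unfold Vsum
  split_ifs with h
  · rw [UU_zero]; simp; omega
  · rw [← UU_eq]; simp

lemma Vsum_eq' (n : ℕ) (ζ a : Fin n → ℝ) (K : ℕ) :
    Vsum n ζ a ((K : ℤ) - 1) = ∑ J : Finset (Fin n), if J.card + 1 = K then hU ζ a 1 J else 0 := by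
  rcases K with _ | K
  · simp [Vsum]
  · rw [Vsum_eq n ζ a K _ (by push_cast; ring)]
    simp [UU]

lemma UU_pos (n : ℕ) (ζ a : Fin n → ℝ) (hζ0 : ∀ p, 0 < ζ p) (hζmono : StrictMono ζ)
    (ha : ∀ p, 0 < a p) (f N : ℕ) (hN : N ≤ n) : 0 < UU ζ a f N := by
  rw [← UU_eq]
  refine Finset.sum_pos (fun I _ => ?_) ?_
  · refine mul_pos (div_pos (pow_pos ?_ 2) ?_)
      (Finset.prod_pos fun p _ => mul_pos (pow_pos (hζ0 p) _) (ha p))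
    · refine Finset.prod_pos fun p _ => Finset.prod_pos fun q _ => ?_
      split_ifs with h
      · exact sub_pos.2 (hζmono h)
      · exact one_pos
    · refine Finset.prod_pos fun p _ => Finset.prod_pos fun q _ => ?_
      split_ifs with h
      · exact add_pos (hζ0 _) (hζ0 _)
      · exact one_pos
  · rw [Finset.powersetCard_nonempty]; simpa using hN

lemma sum_ite_mul {α : Type} [Fintype α] (P Q : α → Prop) [DecidablePred P] [DecidablePred Q]
    (u v : α → ℝ) :
    ∑ I : α, ∑ J : α, (if P I ∧ Q J then u I * v J else 0) =
      (∑ I, if P I then u I else 0) * ∑ J, if Q J then v J else 0 := by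
  rw [Finset.sum_mul_sum]
  refine Finset.sum_congr rfl fun I _ => Finset.sum_congr rfl fun J _ => ?_
  by_cases h1 : P I <;> by_cases h2 : Q J <;> simp [h1, h2]

lemma Gdet_main (n : ℕ) (ζ a : Fin n → ℝ) (hζ0 : ∀ p, 0 < ζ p) (e1 j f1 f2 d : ℕ)
    (h : (e1, j + 1, f1, f2, d) ∈
      [(0, 1, 0, 0, 0), (0, 2, 0, 1, 0), (1, 2, 1, 1, 0), (1, 1, 1, 0, 1)])
    (K : ℕ) :
    Gdet n ζ a ((e1 : ℤ) + 1) j ((K : ℤ) + 1) = (UU ζ a f1 (K + 1) * UU ζ a f2 K -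
      d * (UU ζ a f2 (K + 2) *
        ∑ J : Finset (Fin n), if J.card + 1 = K then hU ζ a f1 J else 0)) / 2 ^ K := by
  have h1 := Gdet_tuples n ζ a hζ0 e1 j K
  rw [tL_sum] at h1
  have hfac : ((K + 1).factorial : ℝ) * K.factorial ≠ 0 := by positivity
  have h2 := mul_left_cancel₀ hfac h1
  have h3 := main_sum ζ a hζ0 e1 (j + 1) f1 f2 d h K
  simp only [Finset.sum_add_distrib, Finset.sum_sub_distrib, ← Finset.mul_sum] at h3
  rw [sum_ite_mul (fun I : Finset (Fin n) => I.card = K + 1) (fun J => J.card = K),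
    sum_ite_mul (fun I : Finset (Fin n) => I.card = K + 2) (fun J => J.card + 1 = K)] at h3
  have h4 : ∑ I : Finset (Fin n), ∑ J : Finset (Fin n),
      (if I.card = K + 1 ∧ J.card = K then 2 ^ K * hL ζ a e1 (j + 1) I J else 0) =
      2 ^ K * Gdet n ζ a ((e1 : ℤ) + 1) j ((K : ℤ) + 1) := by
    rw [h2, Finset.mul_sum]
    refine Finset.sum_congr rfl fun I _ => ?_
    rw [Finset.mul_sum]
    refine Finset.sum_congr rfl fun J _ => ?_
    rw [mul_ite, mul_zero]
  rw [h4] at h3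
  rw [eq_div_iff (by positivity)]
  unfold UU
  linear_combination h3

theorem final (n : ℕ) (ζ a : Fin n → ℝ)
    (hζ0 : ∀ p, 0 < ζ p) (hζmono : StrictMono ζ) (ha : ∀ p, 0 < a p)
    (k : ℤ) (hk1 : 1 ≤ k) (hkn : k ≤ (n : ℤ)) :
    Gdet n ζ a 1 0 k = Usum n ζ a k * Usum n ζ a (k - 1) / 2 ^ (k - 1) ∧
    0 < Gdet n ζ a 1 0 k ∧
    Gdet n ζ a 1 1 k = Usum n ζ a k * Vsum n ζ a (k - 1) / 2 ^ (k - 1) ∧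
    0 < Gdet n ζ a 1 1 k ∧
    Gdet n ζ a 2 1 k = Vsum n ζ a k * Vsum n ζ a (k - 1) / 2 ^ (k - 1) ∧
    0 < Gdet n ζ a 2 1 k ∧
    Gdet n ζ a 2 0 k =
      (Usum n ζ a (k - 1) * Vsum n ζ a k - Usum n ζ a (k + 1) * Vsum n ζ a (k - 2)) /
        2 ^ (k - 1) := by
  obtain ⟨K, rfl⟩ : ∃ K : ℕ, k = (K : ℤ) + 1 := ⟨(k - 1).toNat, by omega⟩
  have hK : K + 1 ≤ n := by omega
  have g1 := Gdet_main n ζ a hζ0 0 0 0 0 0 (by simp) K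
  have g2 := Gdet_main n ζ a hζ0 0 1 0 1 0 (by simp) K
  have g3 := Gdet_main n ζ a hζ0 1 1 1 1 0 (by simp) K
  have g4 := Gdet_main n ζ a hζ0 1 0 1 0 1 (by simp) K
  norm_num at g1 g2 g3 g4
  have hz : (2 : ℝ) ^ ((K : ℤ) + 1 - 1) = 2 ^ K := by rw [add_sub_cancel_right, zpow_natCast]
  have pos := UU_pos n ζ a hζ0 hζmono ha
  rw [hz, Usum_eq n ζ a (K + 1) ((K : ℤ) + 1) (by push_cast; ring),
    Usum_eq n ζ a K ((K : ℤ) + 1 - 1) (by ring),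
    Usum_eq n ζ a (K + 2) ((K : ℤ) + 1 + 1) (by push_cast; ring),
    Vsum_eq n ζ a (K + 1) ((K : ℤ) + 1) (by push_cast; ring),
    Vsum_eq n ζ a K ((K : ℤ) + 1 - 1) (by ring),
    show (K : ℤ) + 1 - 2 = (K : ℤ) - 1 by ring, Vsum_eq', g1, g2, g3, g4]
  have p1 := pos 0 (K + 1) hK
  have p2 := pos 1 (K + 1) hK
  have p3 := pos 0 K (by omega)
  have p4 := pos 1 K (by omega)
  refine ⟨rfl, by positivity, rfl, by positivity, rfl, by positivity, ?_⟩
  rw [mul_comm (UU ζ a 0 K)]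

end PartD

end NovAux

/-- Lemma 2.4 (second part): for `1 ≤ k ≤ n`,
`G_k^{(1,0)} = U_k U_{k-1}/2^{k-1} > 0`, `G_k^{(1,1)} = U_k V_{k-1}/2^{k-1} > 0`,
`G_k^{(2,1)} = V_k V_{k-1}/2^{k-1} > 0`, and
`G_k^{(2,0)} = (U_{k-1} V_k - U_{k+1} V_{k-2})/2^{k-1}`. -/
theorem stmt_1 (n : ℕ) (hn : 1 ≤ n) (ζ a : Fin n → ℝ)
    (hζ0 : ∀ p, 0 < ζ p) (hζmono : StrictMono ζ) (ha : ∀ p, 0 < a p)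
    (k : ℤ) (hk1 : 1 ≤ k) (hkn : k ≤ (n : ℤ)) :
    Gdet n ζ a 1 0 k = Usum n ζ a k * Usum n ζ a (k - 1) / 2 ^ (k - 1) ∧
    0 < Gdet n ζ a 1 0 k ∧
    Gdet n ζ a 1 1 k = Usum n ζ a k * Vsum n ζ a (k - 1) / 2 ^ (k - 1) ∧
    0 < Gdet n ζ a 1 1 k ∧
    Gdet n ζ a 2 1 k = Vsum n ζ a k * Vsum n ζ a (k - 1) / 2 ^ (k - 1) ∧
    0 < Gdet n ζ a 2 1 k ∧
    Gdet n ζ a 2 0 k =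
      (Usum n ζ a (k - 1) * Vsum n ζ a k - Usum n ζ a (k + 1) * Vsum n ζ a (k - 2)) /
        2 ^ (k - 1) := by
  exact NovAux.final n ζ a hζ0 hζmono ha k hk1 hkn
end

section
/- For every integer k one has (G_k^{(1,0)})² = 2 F_k^{(1,0)} F_{k−1}^{(1,0)} and (G_k^{(1,1)})² = 2 F_k^{(1,0)} F_{k−1}^{(2,1)}. -/
open Finset

lemma Imom_comm' (n : ℕ) (ζ a : Fin n → ℝ) (i j : ℤ) : Imom n ζ a i j = Imom n ζ a j i := by
  unfold Imom
  rw [Finset.sum_comm]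
  refine Finset.sum_congr rfl fun p _ => Finset.sum_congr rfl fun q _ => ?_
  rw [add_comm (ζ q), mul_comm (ζ q ^ i), mul_comm (a q)]

lemma Imom_add' (n : ℕ) (ζ a : Fin n → ℝ) (h0 : ∀ p, 0 < ζ p) (i j : ℤ) :
    Imom n ζ a (1 + i) j + Imom n ζ a (1 + j) i = alphaM n ζ a i * alphaM n ζ a j := by
  rw [Imom_comm' n ζ a (1 + j) i]
  unfold Imom alphaM
  rw [Finset.sum_mul_sum, ← Finset.sum_add_distrib]
  refine Finset.sum_congr rfl fun p _ => ?_
  rw [← Finset.sum_add_distrib]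
  refine Finset.sum_congr rfl fun q _ => ?_
  have hp := h0 p
  have hq := h0 q
  have : ζ p + ζ q ≠ 0 := by positivity
  rw [zpow_add₀ hp.ne', zpow_add₀ hq.ne', zpow_one, zpow_one]
  field_simp

lemma det_key {m : ℕ} (M : Matrix (Fin (m + 1)) (Fin (m + 1)) ℝ) (v : Fin (m + 1) → ℝ)
    (h : M + M.transpose = Matrix.vecMulVec v v) (i : Fin (m + 1)) :
    (M.updateCol i v).det ^ 2 = 2 * M.det * (M.submatrix i.succAbove i.succAbove).det := by
  have h1 : (M.updateCol i v).det = (M.adjugate.mulVec v) i := by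
    rw [← Matrix.cramer_apply, Matrix.cramer_eq_adjugate_mulVec]
  have h2 : M.adjugate i i = (M.submatrix i.succAbove i.succAbove).det := by
    rw [Matrix.adjugate_fin_succ_eq_det_submatrix, ← two_mul, pow_mul]
    simp
  have h3 : M.adjugate * (M + M.transpose) * M.adjugate.transpose
      = M.det • M.adjugate.transpose + M.det • M.adjugate := by
    rw [mul_add, add_mul, Matrix.adjugate_mul, mul_assoc, ← Matrix.transpose_mul,
      Matrix.adjugate_mul]
    simp
  rw [h, Matrix.mul_vecMulVec, Matrix.vecMulVec_mul, Matrix.vecMul_transpose] at h3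
  have h4 := congrFun (congrFun h3 i) i
  simp only [Matrix.vecMulVec_apply, Matrix.add_apply, Matrix.smul_apply, Matrix.transpose_apply,
    smul_eq_mul] at h4
  rw [h1, ← h2, sq, h4]
  ring

/-- Corollary 2.5: for every integer `k`,
`(G_k^{(1,0)})² = 2 F_k^{(1,0)} F_{k-1}^{(1,0)}` and
`(G_k^{(1,1)})² = 2 F_k^{(1,0)} F_{k-1}^{(2,1)}`. -/
theorem stmt_2 (n : ℕ) (hn : 1 ≤ n) (ζ a : Fin n → ℝ)
    (hζ0 : ∀ p, 0 < ζ p) (hζmono : StrictMono ζ) (ha : ∀ p, 0 < a p)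
    (k : ℤ) :
    Gdet n ζ a 1 0 k ^ 2 = 2 * Fdet n ζ a 1 0 k * Fdet n ζ a 1 0 (k - 1) ∧
    Gdet n ζ a 1 1 k ^ 2 = 2 * Fdet n ζ a 1 0 k * Fdet n ζ a 2 1 (k - 1) := by
  rcases lt_or_ge k 1 with hk | hk
  · have h1 : k - 1 < 0 := by omega
    simp [Gdet, Fdet, hk, h1]
  obtain ⟨m, rfl⟩ : ∃ m : ℕ, k = ((m + 1 : ℕ) : ℤ) := ⟨(k - 1).toNat, by omega⟩
  have e1 : ((m + 1 : ℕ) : ℤ) - 1 = (m : ℤ) := by push_cast; ring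
  have n1 : ¬ ((m + 1 : ℕ) : ℤ) < 1 := by omega
  have n2 : ¬ ((m + 1 : ℕ) : ℤ) < 0 := by omega
  have n3 : ¬ (m : ℤ) < 0 := by omega
  rw [e1]
  unfold Gdet Fdet
  rw [if_neg n1, if_neg n1, if_neg n2, if_neg n3, if_neg n3]
  simp only [Int.toNat_natCast]
  set M : Matrix (Fin (m + 1)) (Fin (m + 1)) ℝ := Matrix.of fun r s =>
    Imom n ζ a (1 + ((r : ℕ) : ℤ)) (0 + ((s : ℕ) : ℤ)) with hM
  let v : Fin (m + 1) → ℝ := fun r => alphaM n ζ a (r : ℕ)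
  have hMv : M + M.transpose = Matrix.vecMulVec v v := by
    ext r s
    simpa [hM, v, Matrix.vecMulVec_apply] using Imom_add' n ζ a hζ0 (r : ℕ) (s : ℕ)
  constructor
  · have key := det_key M v hMv (Fin.last m)
    have hF : M.submatrix (Fin.last m).succAbove (Fin.last m).succAbove =
        Matrix.of fun r s : Fin m =>
          Imom n ζ a (1 + ((r : ℕ) : ℤ)) (0 + ((s : ℕ) : ℤ)) := by
      ext r s
      simp [hM]
    rw [hF] at key
    rw [← key]
    set G : Matrix (Fin (m + 1)) (Fin (m + 1)) ℝ := Matrix.of fun r s =>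
      if (s : ℕ) = 0 then alphaM n ζ a (1 - 1 + ((r : ℕ) : ℤ))
      else Imom n ζ a (1 + ((r : ℕ) : ℤ)) (0 + (((s : ℕ) - 1 : ℕ) : ℤ)) with hG
    have hp : M.updateCol (Fin.last m) v = G.submatrix id (finRotate (m + 1)) := by
      ext r s
      induction s using Fin.lastCases with
      | last => simp [hG, v]
      | cast s =>
        rw [Matrix.updateCol_ne (Fin.castSucc_lt_last s).ne]
        simp [hG, hM, finRotate_succ_apply]
    rw [hp, Matrix.det_permute', mul_pow]
    have : ((Equiv.Perm.sign (finRotate (m + 1)) : ℤ) : ℝ) ^ 2 = 1 := by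
      rcases Int.units_eq_one_or (Equiv.Perm.sign (finRotate (m + 1))) with h | h <;> simp [h]
    rw [this, one_mul]
  · have key := det_key M v hMv 0
    have hF : M.submatrix (Fin.succAbove 0) (Fin.succAbove 0) =
        Matrix.of fun r s : Fin m =>
          Imom n ζ a (2 + ((r : ℕ) : ℤ)) (1 + ((s : ℕ) : ℤ)) := by
      ext r s
      simp only [hM, Matrix.submatrix_apply, Matrix.of_apply, Fin.zero_succAbove, Fin.val_succ]
      push_cast
      congr 1 <;> ring
    rw [hF] at key
    rw [← key]
    congr 2
    ext r s
    induction s using Fin.cases with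
    | zero => simp [v]
    | succ s =>
      rw [Matrix.updateCol_ne (Fin.succ_ne_zero s)]
      simp [hM, add_comm]
end

section
/- For all integers i, j and every integer k ≥ 1, the bimoment determinants satisfy the bilinear identity G_{k+1}^{(i,j)} F_{k−1}^{(i+1,j)} = G_k^{(i,j)} F_k^{(i+1,j)} − G_k^{(i+1,j)} F_k^{(i,j)}. -/
open Finset

open Matrix in
/-- Jacobi's complementary minor identity, multiplied by the determinant. -/
theorem jacobi_aux {R : Type*} [CommRing R] {m : ℕ}
    (M : Matrix (Fin 2 ⊕ Fin m) (Fin 2 ⊕ Fin m) R) :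
    M.det * (M.adjugate.toBlocks₁₁).det = M.det ^ 2 * (M.toBlocks₂₂).det := by
  have h1 : M * fromBlocks M.adjugate.toBlocks₁₁ 0 M.adjugate.toBlocks₂₁ 1 =
      fromBlocks (M.det • 1) M.toBlocks₁₂ 0 M.toBlocks₂₂ := by
    have h := Matrix.mul_adjugate M
    rw [← fromBlocks_toBlocks M.adjugate] at h
    nth_rewrite 1 [← fromBlocks_toBlocks M] at h
    rw [fromBlocks_multiply, ← fromBlocks_one, fromBlocks_smul, fromBlocks_inj] at h
    nth_rewrite 1 [← fromBlocks_toBlocks M]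
    rw [fromBlocks_multiply, h.1, h.2.2.1]
    simp
  have h2 := congrArg Matrix.det h1
  rw [det_mul, det_fromBlocks_zero₁₂, det_fromBlocks_zero₂₁] at h2
  simpa [det_smul] using h2

open Matrix in
theorem jacobi_minor {R : Type*} [CommRing R] {m : ℕ}
    (M : Matrix (Fin 2 ⊕ Fin m) (Fin 2 ⊕ Fin m) R) :
    (M.adjugate.toBlocks₁₁).det = M.det * (M.toBlocks₂₂).det := by
  have hX : ((mvPolynomialX (Fin 2 ⊕ Fin m) (Fin 2 ⊕ Fin m) ℤ).adjugate.toBlocks₁₁).det =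
      (mvPolynomialX (Fin 2 ⊕ Fin m) (Fin 2 ⊕ Fin m) ℤ).det *
        ((mvPolynomialX (Fin 2 ⊕ Fin m) (Fin 2 ⊕ Fin m) ℤ).toBlocks₂₂).det := by
    apply mul_left_cancel₀ (det_mvPolynomialX_ne_zero (Fin 2 ⊕ Fin m) ℤ)
    rw [jacobi_aux]; ring
  let f := MvPolynomial.eval₂Hom (Int.castRingHom R) (fun p : (Fin 2 ⊕ Fin m) × (Fin 2 ⊕ Fin m) => M p.1 p.2)
  have hf : f.mapMatrix (mvPolynomialX (Fin 2 ⊕ Fin m) (Fin 2 ⊕ Fin m) ℤ) = M := by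
    ext a b; simp [f]
  have h := congrArg f hX
  rw [map_mul, RingHom.map_det, RingHom.map_det, RingHom.map_det, hf] at h
  have e1 : f.mapMatrix (mvPolynomialX (Fin 2 ⊕ Fin m) (Fin 2 ⊕ Fin m) ℤ).adjugate.toBlocks₁₁
      = M.adjugate.toBlocks₁₁ := by
    conv_rhs => rw [← hf, ← RingHom.map_adjugate]
    rfl
  have e2 : f.mapMatrix (mvPolynomialX (Fin 2 ⊕ Fin m) (Fin 2 ⊕ Fin m) ℤ).toBlocks₂₂
      = M.toBlocks₂₂ := by
    conv_rhs => rw [← hf]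
    rfl
  rwa [e1, e2] at h

/-- The map sending the first block to the outer indices. -/
def outerMap (m : ℕ) : Fin 2 ⊕ Fin m → Fin (m + 2) :=
  Sum.elim ![0, Fin.last (m + 1)] (fun r => r.castSucc.succ)

theorem outerMap_bij (m : ℕ) : Function.Bijective (outerMap m) := by
  rw [Fintype.bijective_iff_injective_and_card]
  refine ⟨?_, by simp [add_comm]⟩
  rintro (x | x) (y | y) h
  · fin_cases x <;> fin_cases y <;> simp_all [outerMap, Fin.ext_iff]
  · have := y.2
    fin_cases x <;> simp_all [outerMap, Fin.ext_iff] <;> omega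
  · have := x.2
    fin_cases y <;> simp_all [outerMap, Fin.ext_iff] <;> omega
  · simp_all [outerMap, Fin.ext_iff]

/-- The Desnanot–Jacobi identity. -/
theorem desnanot {R : Type*} [CommRing R] {m : ℕ} (M : Matrix (Fin (m + 2)) (Fin (m + 2)) R) :
    M.det * (M.submatrix (fun r : Fin m => r.castSucc.succ) (fun r : Fin m => r.castSucc.succ)).det =
      (M.submatrix Fin.castSucc Fin.castSucc).det * (M.submatrix Fin.succ Fin.succ).det -
      (M.submatrix Fin.succ Fin.castSucc).det * (M.submatrix Fin.castSucc Fin.succ).det := by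
  have h := jacobi_minor (M.submatrix (Equiv.ofBijective _ (outerMap_bij m))
    (Equiv.ofBijective _ (outerMap_bij m)))
  rw [Matrix.det_submatrix_equiv_self, Matrix.adjugate_submatrix_equiv_self,
    Matrix.det_fin_two] at h
  simp only [Matrix.toBlocks₁₁, Matrix.toBlocks₂₂, Matrix.of_apply, Matrix.submatrix_apply,
    Equiv.ofBijective_apply, outerMap, Sum.elim_inl, Sum.elim_inr, Matrix.cons_val_zero,
    Matrix.cons_val_one, Matrix.adjugate_fin_succ_eq_det_submatrix, Fin.succAbove_zero,
    Fin.succAbove_last] at h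
  have hs : ((-1 : R) ^ (m + 1)) * (-1) ^ (m + 1) = 1 := by
    rw [← mul_pow]; simp
  simp only [Fin.val_zero, Fin.val_last, add_zero, zero_add, pow_zero, one_mul, pow_add _ (m+1) (m+1), hs] at h
  refine Eq.trans h.symm ?_
  linear_combination (-(M.submatrix Fin.succ Fin.castSucc).det * (M.submatrix Fin.castSucc Fin.succ).det) * hs

/-- Lemma 2.8, identity (2.14): for all `i, j ∈ ℤ` and `k ≥ 1`,
`G_{k+1}^{(i,j)} F_{k-1}^{(i+1,j)} = G_k^{(i,j)} F_k^{(i+1,j)} - G_k^{(i+1,j)} F_k^{(i,j)}`. -/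
theorem stmt_5 (n : ℕ) (hn : 1 ≤ n) (ζ a : Fin n → ℝ)
    (hζ0 : ∀ p, 0 < ζ p) (hζmono : StrictMono ζ) (ha : ∀ p, 0 < a p)
    (i j k : ℤ) (hk : 1 ≤ k) :
    Gdet n ζ a i j (k + 1) * Fdet n ζ a (i + 1) j (k - 1) =
      Gdet n ζ a i j k * Fdet n ζ a (i + 1) j k -
        Gdet n ζ a (i + 1) j k * Fdet n ζ a i j k := by
  obtain ⟨m, rfl⟩ : ∃ m : ℕ, k = (m : ℤ) + 1 := ⟨(k - 1).toNat, by omega⟩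
  have t1 : ((m : ℤ) + 1 + 1).toNat = m + 2 := by omega
  have t2 : ((m : ℤ) + 1).toNat = m + 1 := by omega
  have t3 : ((m : ℤ) + 1 - 1).toNat = m := by omega
  unfold Gdet Fdet
  rw [if_neg (by omega), if_neg (by omega), if_neg (by omega), if_neg (by omega),
    if_neg (by omega), if_neg (by omega), t1, t2, t3]
  have h := desnanot (Matrix.of fun r s : Fin (m + 2) =>
    if (s : ℕ) = 0 then alphaM n ζ a (i - 1 + ((r : ℕ) : ℤ))
    else Imom n ζ a (i + ((r : ℕ) : ℤ)) (j + (((s : ℕ) - 1 : ℕ) : ℤ)))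
  have c1 : ∀ x : ℤ, i + 1 + x = i + (x + 1) := fun x => by ring
  have c2 : ∀ x : ℤ, i + 1 - 1 + x = i - 1 + (x + 1) := fun x => by ring
  simp only [c1, c2]
  simpa [Matrix.submatrix, Matrix.of_apply] using h
end

section
/- For all integers i, j and every integer k ≥ 1, the bimoment determinants satisfy the bilinear identity G_k^{(i,j)} F_{k−1}^{(i,j+1)} = G_k^{(i,j+1)} F_{k−1}^{(i,j)} − G_{k−1}^{(i,j+1)} F_k^{(i,j)}. -/
open Finset

theorem plucker_aux (m : ℕ) (α : ℕ → ℝ) (J : ℕ → ℕ → ℝ) :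
    Matrix.det (Matrix.of fun r s : Fin (m + 2) =>
        if (s : ℕ) = 0 then α r else J r ((s : ℕ) - 1)) *
      Matrix.det (Matrix.of fun r s : Fin (m + 1) => J r ((s : ℕ) + 1)) =
    Matrix.det (Matrix.of fun r s : Fin (m + 2) => if (s : ℕ) = 0 then α r else J r s) *
      Matrix.det (Matrix.of fun r s : Fin (m + 1) => J r s) -
    Matrix.det (Matrix.of fun r s : Fin (m + 1) => if (s : ℕ) = 0 then α r else J r s) *
      Matrix.det (Matrix.of fun r s : Fin (m + 2) => J r s) := by
  set A : Matrix (Fin (m + 2)) (Fin (m + 2)) ℝ := Matrix.of fun r s => J r s with hA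
  set B : Matrix (Fin (m + 2)) (Fin (m + 2)) ℝ :=
    Matrix.of fun r s => if (s : ℕ) = 0 then α r else J r s with hB
  set e : Fin (m + 2) → ℝ := Pi.single (Fin.last (m + 1)) 1 with he
  have hne : (0 : Fin (m + 2)) ≠ Fin.last (m + 1) := by
    simp [Fin.ext_iff]
  have key : Matrix.cramer B (A.mulVec (Matrix.cramer A e)) (Fin.last (m + 1)) =
      A.det * Matrix.cramer B e (Fin.last (m + 1)) := by
    rw [Matrix.mulVec_cramer, map_smul]; rfl
  -- expansion along the last column
  have lastexp : ∀ C : Matrix (Fin (m + 2)) (Fin (m + 2)) ℝ,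
      Matrix.cramer C e (Fin.last (m + 1)) =
        (C.submatrix Fin.castSucc Fin.castSucc).det := by
    intro C
    rw [Matrix.cramer_apply, Matrix.det_succ_column _ (Fin.last (m + 1)),
      Finset.sum_eq_single (Fin.last (m + 1))]
    · rw [Matrix.updateCol_self]
      simp only [he, Pi.single_eq_same, Fin.val_last, mul_one]
      rw [Even.neg_one_pow ⟨m + 1, rfl⟩, one_mul]
      congr 1
      ext r s
      simp [Matrix.updateCol_apply, Fin.succAbove_last, (Fin.castSucc_lt_last s).ne]
    · intro b _ hb
      simp [he, hb]
    · simp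
  have firstexp : Matrix.cramer A e 0 = (-1) ^ (m + 1) *
      Matrix.det (Matrix.of fun r s : Fin (m + 1) => J r ((s : ℕ) + 1)) := by
    rw [Matrix.cramer_apply, Matrix.det_succ_column _ 0,
      Finset.sum_eq_single (Fin.last (m + 1))]
    · rw [Matrix.updateCol_self]
      simp only [he, Pi.single_eq_same, Fin.val_last, mul_one, Fin.val_zero, add_zero]
      congr 2
      ext r s
      simp [Matrix.updateCol_apply, Fin.succAbove_last, hA]
    · intro b _ hb
      simp [he, hb]
    · simp
  have h1 : Matrix.cramer B e (Fin.last (m + 1)) =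
      Matrix.det (Matrix.of fun r s : Fin (m + 1) => if (s : ℕ) = 0 then α r else J r s) := by
    rw [lastexp]; rfl
  have h2 : Matrix.cramer A e (Fin.last (m + 1)) =
      Matrix.det (Matrix.of fun r s : Fin (m + 1) => J r s) := by
    rw [lastexp]; rfl
  have h3 : Matrix.cramer B (fun r => A r (Fin.last (m + 1))) (Fin.last (m + 1)) = B.det := by
    rw [Matrix.cramer_apply]
    congr 1
    ext r s
    by_cases hs : s = Fin.last (m + 1)
    · subst hs; simp [hA, hB]
    · simp [Matrix.updateCol_apply, hs]
  have h4 : ∀ c, c ≠ 0 → c ≠ Fin.last (m + 1) →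
      Matrix.cramer B (fun r => A r c) (Fin.last (m + 1)) = 0 := by
    intro c hc0 hc
    rw [Matrix.cramer_apply]
    apply Matrix.det_zero_of_column_eq hc
    intro r
    have : (c : ℕ) ≠ 0 := fun h => hc0 (Fin.ext h)
    simp [Matrix.updateCol_apply, hc, hA, hB, hc0]
  have h5 : Matrix.cramer B (fun r => A r 0) (Fin.last (m + 1)) = (-1) ^ m *
      Matrix.det (Matrix.of fun r s : Fin (m + 2) =>
        if (s : ℕ) = 0 then α r else J r ((s : ℕ) - 1)) := by
    rw [Matrix.cramer_apply]
    set D : Matrix (Fin (m + 2)) (Fin (m + 2)) ℝ := Matrix.of fun r s =>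
        if (s : ℕ) = 0 then α r else J r ((s : ℕ) - 1) with hD
    have hp := Matrix.det_permute' (Equiv.swap (0 : Fin (m + 2)) 1 * finRotate (m + 2)) D
    have hm : B.updateCol (Fin.last (m + 1)) (fun r => A r 0) =
        (D.submatrix id (Equiv.swap (0 : Fin (m + 2)) 1 * finRotate (m + 2))) := by
      ext r s
      rw [Matrix.submatrix_apply, Equiv.Perm.mul_apply]
      by_cases hs : s = Fin.last (m + 1)
      · subst hs
        rw [finRotate_last]
        simp [hA, hD]
      · rw [Matrix.updateCol_ne hs]
        have hlt : (s : ℕ) < m + 1 := by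
          have := s.2
          have : (s : ℕ) ≠ m + 1 := fun h => hs (Fin.ext h)
          omega
        have hr : finRotate (m + 2) s = ⟨s + 1, by omega⟩ := finRotate_of_lt hlt
        rw [hr]
        by_cases h0 : (s : ℕ) = 0
        · have : (⟨s + 1, by omega⟩ : Fin (m + 2)) = 1 := by
            ext; simp [h0]
          rw [this, Equiv.swap_apply_right]
          simp only [hB, hD, Matrix.of_apply, if_pos h0, Fin.val_zero, if_true, id]
        · rw [Equiv.swap_apply_of_ne_of_ne]
          · simp only [hB, hD, Matrix.of_apply, if_neg h0, Nat.add_sub_cancel, id]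
            rw [if_neg (Nat.succ_ne_zero _)]
          · intro h; have := congrArg Fin.val h; simp at this
          · intro h; have := congrArg Fin.val h; simp at this; exact h0 (by simp [this])
    rw [hm, hp, Equiv.Perm.sign_mul, sign_finRotate, Equiv.Perm.sign_swap (by simp)]
    push_cast
    ring
  have hsum : Matrix.cramer B (A.mulVec (Matrix.cramer A e)) (Fin.last (m + 1)) =
      ∑ c, Matrix.cramer A e c * Matrix.cramer B (fun r => A r c) (Fin.last (m + 1)) := by
    have : A.mulVec (Matrix.cramer A e) = ∑ c, Matrix.cramer A e c • (fun r => A r c) := by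
      ext r
      simp [Matrix.mulVec, dotProduct, mul_comm]
    rw [this, map_sum, Finset.sum_apply]
    simp only [map_smul, Pi.smul_apply, smul_eq_mul]
  rw [hsum, Finset.sum_eq_add (0 : Fin (m + 2)) (Fin.last (m + 1)) hne
    (fun c _ hc => by rw [h4 c hc.1 hc.2, mul_zero]) (by simp) (by simp),
    firstexp, h5, h2, h3, h1] at key
  have hsgn : ((-1 : ℝ) ^ m) * (-1) ^ m = 1 := by
    rw [← mul_pow]; simp
  rw [pow_succ] at key
  linear_combination (-1) * key -
    (Matrix.det (Matrix.of fun r s : Fin (m + 1) => J r ((s : ℕ) + 1))) *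
    Matrix.det (Matrix.of fun r s : Fin (m + 2) =>
        if (s : ℕ) = 0 then α r else J r ((s : ℕ) - 1)) * hsgn

/-- Lemma 2.8, identity (2.15): for all `i, j ∈ ℤ` and `k ≥ 1`,
`G_k^{(i,j)} F_{k-1}^{(i,j+1)} = G_k^{(i,j+1)} F_{k-1}^{(i,j)} - G_{k-1}^{(i,j+1)} F_k^{(i,j)}`. -/
theorem stmt_6 (n : ℕ) (hn : 1 ≤ n) (ζ a : Fin n → ℝ)
    (hζ0 : ∀ p, 0 < ζ p) (hζmono : StrictMono ζ) (ha : ∀ p, 0 < a p)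
    (i j k : ℤ) (hk : 1 ≤ k) :
    Gdet n ζ a i j k * Fdet n ζ a i (j + 1) (k - 1) =
      Gdet n ζ a i (j + 1) k * Fdet n ζ a i j (k - 1) -
        Gdet n ζ a i (j + 1) (k - 1) * Fdet n ζ a i j k := by
  obtain ⟨m, rfl⟩ : ∃ m : ℕ, k = (m : ℤ) + 1 := ⟨(k - 1).toNat, by omega⟩
  rcases m with _ | m
  · simp [Gdet, Fdet]
  · have e1 : (((m + 1 : ℕ) : ℤ) + 1) = ((m + 2 : ℕ) : ℤ) := by push_cast; ring
    have e2 : ((m + 2 : ℕ) : ℤ) - 1 = ((m + 1 : ℕ) : ℤ) := by push_cast; ring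
    have n1 : ¬ (((m + 2 : ℕ) : ℤ) < 1) := by omega
    have n2 : ¬ (((m + 2 : ℕ) : ℤ) < 0) := by omega
    have n3 : ¬ (((m + 1 : ℕ) : ℤ) < 1) := by omega
    have n4 : ¬ (((m + 1 : ℕ) : ℤ) < 0) := by omega
    rw [e1, e2]
    simp only [Gdet, Fdet, if_neg n1, if_neg n2, if_neg n3, if_neg n4, Int.toNat_natCast]
    have h := plucker_aux m (fun r => alphaM n ζ a (i - 1 + (r : ℤ)))
      (fun r s => Imom n ζ a (i + (r : ℤ)) (j + (s : ℤ)))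
    have g : ∀ N : ℕ, (Matrix.of fun r s : Fin N =>
        if (s : ℕ) = 0 then alphaM n ζ a (i - 1 + ((r : ℕ) : ℤ))
        else Imom n ζ a (i + ((r : ℕ) : ℤ)) (j + 1 + (((s : ℕ) - 1 : ℕ) : ℤ))) =
        Matrix.of fun r s : Fin N =>
        if (s : ℕ) = 0 then alphaM n ζ a (i - 1 + ((r : ℕ) : ℤ))
        else Imom n ζ a (i + ((r : ℕ) : ℤ)) (j + ((s : ℕ) : ℤ)) := by
      intro N
      ext r s
      simp only [Matrix.of_apply]
      split_ifs with hs
      · rfl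
      · congr 1
        omega
    have f : (Matrix.of fun r s : Fin (m + 1) =>
        Imom n ζ a (i + ((r : ℕ) : ℤ)) (j + 1 + ((s : ℕ) : ℤ))) =
        Matrix.of fun r s : Fin (m + 1) =>
        Imom n ζ a (i + ((r : ℕ) : ℤ)) (j + (((s : ℕ) + 1 : ℕ) : ℤ)) := by
      ext r s
      simp only [Matrix.of_apply]
      congr 1
      push_cast
      ring
    rw [g, g, f]
    exact h
end
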